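/- (Rigidity Theorem I) Let m be a Radon measure on ℝ^n such that (ℝ^n, d_Euclid, m) is a Lipschitz differentiability space, where d_Euclid is the Euclidean metric. Then m is absolutely continuous with respect to the Lebesgue measure on ℝ^n. -/

import Mathlib

open MeasureTheory
open scoped ENNReal NNReal

/-- The local Lipschitz constant (slope) `lip f (x) = limsup_{y → x} |f y - f x| / d(y,x)`,
equal to `0` at isolated points. -/
noncomputable def lip {M : Type*} [PseudoMetricSpace M] (f : M → ℝ) (x : M) : ℝ :=
  Filter.limsup (fun y => |f y - f x| / dist y x) (nhdsWithin x {x}ᶜ)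

/-- `q` is a norm on `ℝ^k`. -/
def IsNormOn {k : ℕ} (q : (Fin k → ℝ) → ℝ) : Prop :=
  (∀ a, 0 ≤ q a) ∧ (∀ a, q a = 0 ↔ a = 0) ∧
  (∀ (c : ℝ) (a : Fin k → ℝ), q (c • a) = |c| * q a) ∧
  (∀ a b : Fin k → ℝ, q (a + b) ≤ q a + q b)

/-- Lipschitz functions `f 0, …, f (k-1)` are independent on `A`: for `μ`-a.e. `x ∈ A` the map
`a ↦ lip (Σ i, a i * f i) (x)` is a norm on `ℝ^k`. -/
def IndependentOn {M : Type*} [PseudoMetricSpace M] [MeasurableSpace M] (μ : Measure M)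
    {k : ℕ} (f : Fin k → M → ℝ) (A : Set M) : Prop :=
  ∀ᵐ x ∂(μ.restrict A),
    IsNormOn (fun a : Fin k → ℝ => lip (fun y => ∑ i, a i * f i y) x)

/-- `(M,d,μ)` is a (Lipschitz) differentiability space: there is `N` such that no family of
more than `N` Lipschitz functions is independent on a Borel set of positive measure. -/
def IsDiffSpace {M : Type*} [PseudoMetricSpace M] [MeasurableSpace M] (μ : Measure M) : Prop :=
  ∃ N : ℕ, ∀ (k : ℕ) (f : Fin k → M → ℝ) (A : Set M), MeasurableSet A → 0 < μ A →
    (∀ i, ∃ K : ℝ≥0, LipschitzWith K (f i)) → IndependentOn μ f A → k ≤ N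

open MeasureTheory Filter Topology
open scoped ENNReal NNReal

section LipFacts
variable {M : Type*} [PseudoMetricSpace M]

lemma lip_quot_nonneg (f : M → ℝ) (x y : M) : 0 ≤ |f y - f x| / dist y x := by positivity

lemma lip_quot_le {f : M → ℝ} {C : ℝ≥0} (hf : LipschitzWith C f) (x y : M) :
    |f y - f x| / dist y x ≤ C := by
  apply div_le_of_le_mul₀ dist_nonneg C.2
  have := hf.dist_le_mul y x
  rwa [Real.dist_eq] at this

lemma lip_bdd {f : M → ℝ} {C : ℝ≥0} (hf : LipschitzWith C f) (x : M) (l : Filter M) :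
    IsBoundedUnder (· ≤ ·) l (fun y => |f y - f x| / dist y x) :=
  isBoundedUnder_of ⟨C, fun y => lip_quot_le hf x y⟩

lemma lip_cobdd (f : M → ℝ) (x : M) (l : Filter M) [NeBot l] :
    IsCoboundedUnder (· ≤ ·) l (fun y => |f y - f x| / dist y x) :=
  IsBoundedUnder.isCoboundedUnder_le (isBoundedUnder_of ⟨0, fun y => lip_quot_nonneg f x y⟩)

lemma le_lip {f : M → ℝ} {C : ℝ≥0} (hf : LipschitzWith C f) {x : M} {b : ℝ}
    (h : ∃ᶠ y in nhdsWithin x {x}ᶜ, b ≤ |f y - f x| / dist y x) : b ≤ lip f x :=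
  le_limsup_of_frequently_le h (lip_bdd hf x _)

lemma lip_le {f : M → ℝ} {x : M} [NeBot (nhdsWithin x {x}ᶜ)] {b : ℝ}
    (h : ∀ b' > b, ∀ᶠ y in nhdsWithin x {x}ᶜ, |f y - f x| / dist y x ≤ b') : lip f x ≤ b := by
  apply le_of_forall_gt_imp_ge_of_dense
  intro b' hb'
  exact limsup_le_of_le (lip_cobdd f x _) (h b' hb')

lemma lip_lt_eventually {f : M → ℝ} {C : ℝ≥0} (hf : LipschitzWith C f) {x : M} {b : ℝ}
    (h : lip f x < b) : ∀ᶠ y in nhdsWithin x {x}ᶜ, |f y - f x| / dist y x < b :=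
  eventually_lt_of_limsup_lt h (lip_bdd hf x _)

lemma lip_nonneg {f : M → ℝ} {C : ℝ≥0} (hf : LipschitzWith C f) (x : M)
    [NeBot (nhdsWithin x {x}ᶜ)] : 0 ≤ lip f x :=
  le_lip hf (Eventually.frequently (Eventually.of_forall fun y => lip_quot_nonneg f x y))

lemma lip_add_le {f g : M → ℝ} {C D : ℝ≥0} (hf : LipschitzWith C f) (hg : LipschitzWith D g)
    (x : M) [NeBot (nhdsWithin x {x}ᶜ)] : lip (fun y => f y + g y) x ≤ lip f x + lip g x := by
  apply lip_le
  intro b' hb'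
  have h1 := lip_lt_eventually hf (x := x) (b := lip f x + (b' - (lip f x + lip g x)) / 2) (by linarith)
  have h2 := lip_lt_eventually hg (x := x) (b := lip g x + (b' - (lip f x + lip g x)) / 2) (by linarith)
  filter_upwards [h1, h2] with y h1 h2
  have : |f y + g y - (f x + g x)| / dist y x ≤ |f y - f x| / dist y x + |g y - g x| / dist y x := by
    rw [← add_div]
    apply div_le_div_of_nonneg_right _ dist_nonneg
    have : f y + g y - (f x + g x) = (f y - f x) + (g y - g x) := by ring
    rw [this]; exact abs_add_le _ _
  linarith

lemma lip_smul_le {f : M → ℝ} {C : ℝ≥0} (hf : LipschitzWith C f) (c : ℝ)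
    (x : M) [NeBot (nhdsWithin x {x}ᶜ)] : lip (fun y => c * f y) x ≤ |c| * lip f x := by
  apply lip_le
  intro b' hb'
  have key : ∀ y, |c * f y - c * f x| / dist y x = |c| * (|f y - f x| / dist y x) := by
    intro y; rw [← mul_sub, abs_mul, mul_div_assoc]
  simp only [key]
  rcases eq_or_ne c 0 with rfl | hc
  · simp only [abs_zero, zero_mul] at hb' ⊢
    exact Eventually.of_forall fun y => hb'.le
  have hc' : 0 < |c| := abs_pos.2 hc
  have h1 := lip_lt_eventually hf (x := x) (b := b' / |c|) (by rw [lt_div_iff₀ hc']; linarith)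
  filter_upwards [h1] with y h1
  rw [lt_div_iff₀ hc'] at h1
  linarith

lemma lip_smul {f : M → ℝ} {C : ℝ≥0} (hf : LipschitzWith C f) (c : ℝ)
    (x : M) [NeBot (nhdsWithin x {x}ᶜ)] : lip (fun y => c * f y) x = |c| * lip f x := by
  apply le_antisymm (lip_smul_le hf c x)
  rcases eq_or_ne c 0 with rfl | hc
  · simp [lip]
  have h2 : LipschitzWith (‖c‖₊ * C) (fun y => c * f y) := by
    have := (lipschitzWith_smul c).comp hf
    simpa [Function.comp_def] using this
  have := lip_smul_le h2 c⁻¹ x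
  simp only [← mul_assoc, inv_mul_cancel₀ hc, one_mul] at this
  rw [abs_inv, inv_mul_eq_div, le_div_iff₀ (abs_pos.2 hc)] at this
  linarith

lemma lipschitz_comb {k : ℕ} {f : Fin k → M → ℝ} (hf : ∀ i, ∃ K : ℝ≥0, LipschitzWith K (f i))
    (a : Fin k → ℝ) : ∃ C : ℝ≥0, LipschitzWith C (fun y => ∑ i, a i * f i y) := by
  choose K hK using hf
  refine ⟨∑ i, ‖a i‖₊ * K i, ?_⟩
  apply LipschitzWith.of_dist_le_mul
  intro y x
  rw [Real.dist_eq, ← Finset.sum_sub_distrib]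
  refine (Finset.abs_sum_le_sum_abs _ _).trans ?_
  push_cast
  rw [Finset.sum_mul]
  apply Finset.sum_le_sum
  intro i _
  rw [← mul_sub, abs_mul, mul_assoc]
  have := (hK i).dist_le_mul y x
  rw [Real.dist_eq] at this
  simp only [Real.norm_eq_abs]
  gcongr

lemma isNormOn_lip {k : ℕ} {f : Fin k → M → ℝ} (hf : ∀ i, ∃ K : ℝ≥0, LipschitzWith K (f i))
    (x : M) [NeBot (nhdsWithin x {x}ᶜ)]
    (hpos : ∀ a : Fin k → ℝ, a ≠ 0 → 0 < lip (fun y => ∑ i, a i * f i y) x) :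
    IsNormOn (fun a : Fin k → ℝ => lip (fun y => ∑ i, a i * f i y) x) := by
  have hsm : ∀ (c : ℝ) (a : Fin k → ℝ), lip (fun y => ∑ i, (c • a) i * f i y) x
      = |c| * lip (fun y => ∑ i, a i * f i y) x := by
    intro c a
    obtain ⟨C, hC⟩ := lipschitz_comb hf a
    rw [← lip_smul hC]
    simp [Finset.mul_sum, mul_assoc]
  refine ⟨fun a => ?_, fun a => ⟨fun h => ?_, fun h => ?_⟩, hsm, fun a b => ?_⟩
  · obtain ⟨C, hC⟩ := lipschitz_comb hf a
    exact lip_nonneg hC x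
  · by_contra h'
    exact (hpos a h').ne' h
  · subst h
    have := hsm 0 0
    simpa using this
  · obtain ⟨C, hC⟩ := lipschitz_comb hf a
    obtain ⟨D, hD⟩ := lipschitz_comb hf b
    have := lip_add_le hC hD x
    simpa [Finset.sum_add_distrib, add_mul] using this

end LipFacts

open MeasureTheory Filter Topology
open scoped ENNReal NNReal

section Packet
variable {E : Type*} [NormedAddCommGroup E] [NormedSpace ℝ E] [FiniteDimensional ℝ E]

lemma exists_cutoff (K : Set E) (hK : IsCompact K) (d : ℝ) (hd : 0 < d) :
    ∃ χ : E → ℝ, ContDiff ℝ 1 χ ∧ (∀ x, 0 ≤ χ x ∧ χ x ≤ 1) ∧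
      (∀ x, x ∉ Metric.thickening (d / 2) K → χ x = 0) ∧
      (∀ x ∈ Metric.cthickening (d / 4) K, χ x = 1) ∧ ∃ B : ℝ, 0 < B ∧ ∀ x, ‖fderiv ℝ χ x‖ ≤ B := by
  obtain ⟨f, hf, hr, h0, h1⟩ := exists_contMDiff_zero_iff_one_iff_of_isClosed
    (modelWithCornersSelf ℝ E) (n := 1)
    (s := (Metric.thickening (d / 2) K)ᶜ) (t := Metric.cthickening (d / 4) K)
    Metric.isOpen_thickening.isClosed_compl Metric.isClosed_cthickening
    (by
      rw [Set.disjoint_compl_left_iff_subset]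
      exact Metric.cthickening_subset_thickening' (by linarith) (by linarith) K)
  have hf1 : ContDiff ℝ 1 f := contMDiff_iff_contDiff.1 hf
  have hcs : HasCompactSupport f := by
    apply HasCompactSupport.intro (K := Metric.cthickening (d / 2) K) hK.cthickening
    intro x hx
    exact (h0 x).1 (fun h => hx (Metric.thickening_subset_cthickening _ _ h))
  obtain ⟨B, hB⟩ := (hcs.fderiv (𝕜 := ℝ)).exists_bound_of_continuous (hf1.continuous_fderiv one_ne_zero)
  refine ⟨f, hf1, fun x => hr ⟨x, rfl⟩, fun x hx => (h0 x).1 hx, fun x hx => (h1 x).1 hx,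
    max B 1, by positivity, fun x => (hB x).trans (le_max_left _ _)⟩

lemma packet (K : Set E) (hK : IsCompact K) (e : E) (he : ‖e‖ = 1) (c : ℝ) (hc : 0 < c)
    (g : ℕ → E → ℝ) (hg1 : ∀ l, ContDiff ℝ 1 (g l)) (hgc : ∀ l, HasCompactSupport (g l))
    (b : ℕ → ℝ) (hb : Tendsto b atTop (𝓝 0)) (hgb : ∀ l x, |g l x| ≤ b l)
    (hgd : ∀ l x, ‖fderiv ℝ (g l) x‖ ≤ 1)
    (η : ℕ → ℝ) (hη : Tendsto η atTop (𝓝 0))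
    (hgK : ∀ l l', l ≤ l' → ∀ x ∈ K, ‖fderiv ℝ (g l) x - fderiv ℝ (g l') x‖ ≤ η l)
    (hge : ∀ l, ∀ x ∈ K, c ≤ fderiv ℝ (g l) x e) (d κ : ℝ) (hd : 0 < d) (hκ : 0 < κ) :
    ∃ (w : E → ℝ) (τ d' : ℝ), ContDiff ℝ 1 w ∧ (∀ x, |w x| ≤ κ) ∧ (∀ x, ‖fderiv ℝ w x‖ ≤ 3) ∧
      (∀ x, x ∉ Metric.thickening d K → fderiv ℝ w x = 0) ∧ 0 < τ ∧ τ < d ∧ 0 < d' ∧ d' ≤ d ∧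
      (∀ x ∈ Metric.thickening d' K, ‖fderiv ℝ w x‖ ≤ κ) ∧
      ∀ x ∈ K, c / 4 * τ ≤ |w (x + τ • e) - w x| := by
  obtain ⟨χ, hχ1, hχ01, hχ0, hχe, B, hB0, hB⟩ := exists_cutoff K hK d hd
  -- choose l
  have hsmall : ∀ ε > 0, ∀ᶠ l in atTop, b l ≤ ε := fun ε hε => (hb.eventually_le_const hε)
  have hsmallη : ∀ ε > 0, ∀ᶠ l in atTop, η l ≤ ε := fun ε hε => (hη.eventually_le_const hε)
  obtain ⟨l, hl1, hl2, hl3⟩ := ((hsmall (κ / 2) (by positivity)).and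
    ((hsmall (1 / (2 * B)) (by positivity)).and (hsmallη (κ / 2) (by positivity)))).exists
  -- choose τ
  have huc : UniformContinuous (fderiv ℝ (g l)) :=
    ((hgc l).fderiv (𝕜 := ℝ)).uniformContinuous_of_continuous ((hg1 l).continuous_fderiv one_ne_zero)
  obtain ⟨τ₀, hτ₀, hτ₀'⟩ := Metric.uniformContinuous_iff.1 huc (c / 4) (by positivity)
  set τ := min (τ₀ / 2) (d / 4) with hτdef
  have hτ : 0 < τ := by positivity
  have hτd : τ ≤ d / 4 := min_le_right _ _
  have hττ : τ < τ₀ := (min_le_left _ _).trans_lt (by linarith)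
  obtain ⟨l', hl'1, hl'2, hl'3, hl'4⟩ := ((hsmall (κ / 2) (by positivity)).and
    ((hsmall (1 / (2 * B)) (by positivity)).and ((hsmall (c * τ / 8) (by positivity)).and
      (eventually_ge_atTop l)))).exists
  set G : E → ℝ := fun x => g l x - g l' x with hG
  have hG1 : ContDiff ℝ 1 G := (hg1 l).sub (hg1 l')
  set w : E → ℝ := fun x => χ x * G x with hw
  have hw1 : ContDiff ℝ 1 w := hχ1.mul hG1
  have dg : ∀ l x, DifferentiableAt ℝ (g l) x := fun l x => ((hg1 l).differentiable one_ne_zero) x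
  have dχ : ∀ x, DifferentiableAt ℝ χ x := fun x => (hχ1.differentiable one_ne_zero) x
  have dG : ∀ x, DifferentiableAt ℝ G x := fun x => (hG1.differentiable one_ne_zero) x
  have hGd : ∀ x, fderiv ℝ G x = fderiv ℝ (g l) x - fderiv ℝ (g l') x := fun x =>
    fderiv_fun_sub (dg l x) (dg l' x)
  have hGb : ∀ x, |G x| ≤ b l + b l' := fun x =>
    (abs_sub _ _).trans (add_le_add (hgb l x) (hgb l' x))
  have hwd : ∀ x, fderiv ℝ w x = χ x • fderiv ℝ G x + G x • fderiv ℝ χ x := fun x =>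
    fderiv_fun_mul (dχ x) (dG x)
  have hBl : B * (b l + b l') ≤ 1 := by
    have : b l + b l' ≤ 1 / B := by
      have : 1 / (2 * B) + 1 / (2 * B) = 1 / B := by field_simp; norm_num
      linarith
    calc B * (b l + b l') ≤ B * (1 / B) := by gcongr
      _ = 1 := by field_simp
  have hχK : ∀ x ∈ K, χ =ᶠ[𝓝 x] fun _ => 1 := by
    intro x hx
    have : Metric.thickening (d / 4) K ∈ 𝓝 x :=
      Metric.isOpen_thickening.mem_nhds (Metric.self_subset_thickening (by positivity) K hx)
    filter_upwards [this] with y hy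
    exact hχe y (Metric.thickening_subset_cthickening _ _ hy)
  have hwK : ∀ x ∈ K, ‖fderiv ℝ w x‖ ≤ κ / 2 := by
    intro x hx
    have h1 : fderiv ℝ χ x = 0 := by
      rw [(hχK x hx).fderiv_eq]; simp
    rw [hwd, h1, (hχK x hx).eq_of_nhds, hGd]
    simpa using (hgK l l' hl'4 x hx).trans hl3
  obtain ⟨d', hd', hd'2⟩ := hK.exists_thickening_subset_open
    (t := {x | ‖fderiv ℝ w x‖ < κ})
    (isOpen_lt ((hw1.continuous_fderiv one_ne_zero).norm) continuous_const)
    (fun x hx => (hwK x hx).trans_lt (by linarith))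
  refine ⟨w, τ, min d' d, hw1, ?_, ?_, ?_, hτ, by linarith, by positivity, min_le_right _ _, ?_, ?_⟩
  · intro x
    rw [hw]; simp only [abs_mul, abs_of_nonneg (hχ01 x).1]
    calc χ x * |G x| ≤ 1 * |G x| := by gcongr; exact (hχ01 x).2
      _ ≤ κ := by linarith [hGb x]
  · intro x
    rw [hwd]
    have e1 : ‖fderiv ℝ G x‖ ≤ 2 := by
      rw [hGd]; exact (norm_sub_le _ _).trans (by linarith [hgd l x, hgd l' x])
    calc ‖χ x • fderiv ℝ G x + G x • fderiv ℝ χ x‖ ≤ ‖χ x • fderiv ℝ G x‖ + ‖G x • fderiv ℝ χ x‖ :=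
          norm_add_le _ _
      _ = χ x * ‖fderiv ℝ G x‖ + |G x| * ‖fderiv ℝ χ x‖ := by
          rw [norm_smul, norm_smul, Real.norm_eq_abs, Real.norm_eq_abs, abs_of_nonneg (hχ01 x).1]
      _ ≤ 1 * 2 + (b l + b l') * B := by
          gcongr
          · exact (hχ01 x).2
          · exact (abs_nonneg _).trans (hGb x)
          · exact hGb x
          · exact hB x
      _ ≤ 3 := by linarith
  · intro x hx
    have : w =ᶠ[𝓝 x] fun _ => 0 := by
      have hx' : x ∈ (Metric.cthickening (d / 2) K)ᶜ := fun h =>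
        hx (Metric.cthickening_subset_thickening' hd (by linarith) K h)
      filter_upwards [Metric.isClosed_cthickening.isOpen_compl.mem_nhds hx'] with y hy
      simp [hw, hχ0 y (fun h => hy (Metric.thickening_subset_cthickening _ _ h))]
    rw [this.fderiv_eq]; simp
  · intro x hx
    exact (hd'2 (Metric.thickening_mono (min_le_left _ _) K hx)).le
  · intro x hx
    have hτe : ‖τ • e‖ = τ := by rw [norm_smul, he, mul_one, Real.norm_of_nonneg hτ.le]
    have c1 : χ x = 1 := (hχK x hx).eq_of_nhds
    have c2 : χ (x + τ • e) = 1 := by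
      apply hχe
      apply Metric.mem_cthickening_of_dist_le _ x _ _ hx
      simpa [dist_eq_norm, hτe] using hτd
    have hmv := (convex_closedBall x τ).norm_image_sub_le_of_norm_fderivWithin_le'
      (f := g l) (𝕜 := ℝ) (C := c / 4) (φ := fderiv ℝ (g l) x) (x := x) (y := x + τ • e)
      (fun y hy => (dg l y).differentiableWithinAt) ?_ (by simp [hτ.le]) (by simp [hτe])
    · simp only [add_sub_cancel_left, hτe, map_smul, smul_eq_mul] at hmv
      have h1 := hge l x hx
      have h2 : 3 * c / 4 * τ ≤ g l (x + τ • e) - g l x := by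
        have := (abs_le.1 ((Real.norm_eq_abs _).symm.le.trans hmv)).1
        nlinarith
      have h3 := abs_le.1 (hgb l' x)
      have h4 := abs_le.1 (hgb l' (x + τ • e))
      simp only [hw, c1, c2, one_mul, hG]
      refine le_trans ?_ (le_abs_self _)
      linarith [h3.1, h3.2, h4.1, h4.2, mul_pos hc hτ]
    · intro y hy
      rw [(dg l y).fderivWithin (uniqueDiffOn_convex (convex_closedBall x τ) ?_ y hy)]
      · rw [← dist_eq_norm]
        exact (hτ₀' ((Metric.mem_closedBall.1 hy).trans_lt hττ)).le
      · rw [interior_closedBall _ hτ.ne']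
        exact ⟨x, Metric.mem_ball_self hτ⟩

end Packet

open MeasureTheory Filter Topology
open scoped ENNReal NNReal

section Series
variable {E : Type*} [NormedAddCommGroup E] [NormedSpace ℝ E]

lemma series_summable (w : ℕ → E → ℝ) (κ : ℕ → ℝ) (hwκ : ∀ r x, |w r x| ≤ κ r)
    (hκs : Summable κ) (α : ℕ → ℝ) (M : ℝ) (hα : ∀ r, |α r| ≤ M) (x : E) :
    Summable (fun r => α r * w r x) := by
  apply Summable.of_norm_bounded (hκs.mul_left M)
  intro r
  rw [Real.norm_eq_abs, abs_mul]
  exact mul_le_mul (hα r) (hwκ r x) (abs_nonneg _) ((abs_nonneg _).trans (hα r))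

lemma series_lip (w : ℕ → E → ℝ) (κ d : ℕ → ℝ) (K : Set E) (hw1 : ∀ r, ContDiff ℝ 1 (w r))
    (hwκ : ∀ r x, |w r x| ≤ κ r) (hκs : Summable κ) (h3 : ∀ r x, ‖fderiv ℝ (w r) x‖ ≤ 3)
    (hoff : ∀ r x, x ∉ Metric.thickening (d r) K → fderiv ℝ (w r) x = 0)
    (hon : ∀ q r, q < r → ∀ x ∈ Metric.thickening (d r) K, ‖fderiv ℝ (w q) x‖ ≤ κ q)
    (α : ℕ → ℝ) (M : ℝ) (hα : ∀ r, |α r| ≤ M) :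
    ∃ C : ℝ≥0, LipschitzWith C (fun x => ∑' r, α r * w r x) := by
  have hκ0 : ∀ r, 0 ≤ κ r := fun r => (abs_nonneg _).trans (hwκ r 0)
  have hM : 0 ≤ M := (abs_nonneg _).trans (hα 0)
  have key : ∀ x N, ∑ r ∈ Finset.range N, ‖fderiv ℝ (w r) x‖ ≤ 3 + ∑ r ∈ Finset.range N, κ r := by
    intro x N
    induction N with
    | zero => simp
    | succ N ih =>
      rw [Finset.sum_range_succ, Finset.sum_range_succ]
      by_cases hx : x ∈ Metric.thickening (d N) K
      · have : ∑ r ∈ Finset.range N, ‖fderiv ℝ (w r) x‖ ≤ ∑ r ∈ Finset.range N, κ r :=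
          Finset.sum_le_sum fun q hq => hon q N (Finset.mem_range.1 hq) x hx
        linarith [h3 N x, hκ0 N]
      · rw [hoff N x hx, norm_zero]; linarith [hκ0 N]
  set C : ℝ := M * (3 + ∑' r, κ r) with hC
  have hC0 : 0 ≤ C := mul_nonneg hM (add_nonneg (by norm_num) (tsum_nonneg hκ0))
  have hN : ∀ N x y, |∑ r ∈ Finset.range N, α r * w r y - ∑ r ∈ Finset.range N, α r * w r x| ≤ C * ‖y - x‖ := by
    intro N x y
    have hd : ∀ r z, DifferentiableAt ℝ (w r) z := fun r z => ((hw1 r).differentiable one_ne_zero) z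
    have := (convex_univ (𝕜 := ℝ) (E := E)).norm_image_sub_le_of_norm_fderiv_le (𝕜 := ℝ)
      (f := fun z => ∑ r ∈ Finset.range N, α r * w r z) (C := C) (x := x) (y := y)
      (fun z _ => by
        apply DifferentiableAt.fun_sum
        intro r _
        exact (hd r z).const_mul _) ?_ trivial trivial
    · simpa using this
    · intro z _
      rw [fderiv_fun_sum (fun r _ => (hd r z).const_mul _)]
      refine (norm_sum_le _ _).trans ?_
      calc ∑ r ∈ Finset.range N, ‖fderiv ℝ (fun z => α r * w r z) z‖
          ≤ ∑ r ∈ Finset.range N, M * ‖fderiv ℝ (w r) z‖ := by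
            apply Finset.sum_le_sum
            intro r _
            rw [fderiv_const_mul (hd r z), norm_smul]
            gcongr
            exact hα r
        _ ≤ C := by
            rw [← Finset.mul_sum]
            apply mul_le_mul_of_nonneg_left _ hM
            exact (key z N).trans (by linarith [hκs.sum_le_tsum (Finset.range N) (fun r _ => hκ0 r)])
  refine ⟨⟨C, hC0⟩, LipschitzWith.of_dist_le_mul fun x y => ?_⟩
  rw [Real.dist_eq, dist_eq_norm]
  have t1 := (series_summable w κ hwκ hκs α M hα x).hasSum.tendsto_sum_nat
  have t2 := (series_summable w κ hwκ hκs α M hα y).hasSum.tendsto_sum_nat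
  exact le_of_tendsto (t1.sub t2).abs (Eventually.of_forall fun N => hN N y x)

lemma series_lower (w : ℕ → E → ℝ) (κ d τ : ℕ → ℝ) (K : Set E) (hw1 : ∀ r, ContDiff ℝ 1 (w r))
    (hwκ : ∀ r x, |w r x| ≤ κ r) (hκs : Summable κ) 
    (hon : ∀ q r, q < r → ∀ x ∈ Metric.thickening (d r) K, ‖fderiv ℝ (w q) x‖ ≤ κ q)
    (e : E) (he : ‖e‖ = 1) (c : ℝ) (hτ : ∀ r, 0 < τ r) (hτd : ∀ r, τ r < d r)
    (hc : ∀ r, ∀ x ∈ K, c / 4 * τ r ≤ |w r (x + τ r • e) - w r x|)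
    (hκ1 : ∀ r, ∑ q ∈ Finset.range r, κ q ≤ c / 16)
    (hκ2 : ∀ r, ∑' q, κ (q + (r + 1)) ≤ c / 32 * τ r)
    (α : ℕ → ℝ) (M : ℝ) (hα : ∀ r, |α r| ≤ M) (r : ℕ) (hr : |α r| = M) (x : E) (hx : x ∈ K) :
    M * (c / 8 * τ r) ≤ |∑' q, α q * w q (x + τ r • e) - ∑' q, α q * w q x| := by
  have hM : 0 ≤ M := (abs_nonneg _).trans (hα 0)
  have s1 := series_summable w κ hwκ hκs α M hα x
  have s2 := series_summable w κ hwκ hκs α M hα (x + τ r • e)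
  have hsub := s2.sub s1
  rw [← s2.tsum_sub s1, ← hsub.sum_add_tsum_nat_add (r + 1), Finset.sum_range_succ]
  set y := x + τ r • e with hy
  have hyx : ‖y - x‖ = τ r := by
    rw [hy, add_sub_cancel_left, norm_smul, he, mul_one, Real.norm_of_nonneg (hτ r).le]
  have b1 : |∑ q ∈ Finset.range r, (α q * w q y - α q * w q x)| ≤ M * (c / 16 * τ r) := by
    refine (Finset.abs_sum_le_sum_abs _ _).trans ?_
    calc ∑ q ∈ Finset.range r, |α q * w q y - α q * w q x|
        ≤ ∑ q ∈ Finset.range r, M * (κ q * τ r) := by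
          apply Finset.sum_le_sum
          intro q hq
          rw [← mul_sub, abs_mul]
          apply mul_le_mul (hα q) _ (abs_nonneg _) hM
          have hyb : y ∈ Metric.ball x (d r) := by
            rw [Metric.mem_ball, dist_eq_norm, hyx]; exact hτd r
          have := (convex_ball x (d r)).norm_image_sub_le_of_norm_fderiv_le (𝕜 := ℝ)
            (f := w q) (C := κ q) (x := x) (y := y)
            (fun z _ => ((hw1 q).differentiable one_ne_zero) z)
            (fun z hz => hon q r (Finset.mem_range.1 hq) z
              (Metric.mem_thickening_iff.2 ⟨x, hx, hz⟩))
            (Metric.mem_ball_self ((hτ r).trans (hτd r)))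
            hyb
          rwa [hyx] at this
      _ = M * ((∑ q ∈ Finset.range r, κ q) * τ r) := by
          rw [Finset.sum_mul, Finset.mul_sum]
      _ ≤ _ := by
          apply mul_le_mul_of_nonneg_left _ hM
          exact mul_le_mul_of_nonneg_right (hκ1 r) (hτ r).le
  have b2 : |∑' q, (α (q + (r + 1)) * w (q + (r + 1)) y - α (q + (r + 1)) * w (q + (r + 1)) x)|
      ≤ M * (c / 16 * τ r) := by
    have hs : Summable fun q => M * (2 * κ (q + (r + 1))) :=
      (((summable_nat_add_iff (r + 1)).2 hκs).mul_left 2).mul_left M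
    have := tsum_of_norm_bounded hs.hasSum (f := fun q => α (q + (r + 1)) * w (q + (r + 1)) y - α (q + (r + 1)) * w (q + (r + 1)) x) ?_
    · rw [tsum_mul_left, tsum_mul_left, Real.norm_eq_abs] at this
      refine this.trans (mul_le_mul_of_nonneg_left ?_ hM)
      linarith [hκ2 r]
    · intro q
      rw [Real.norm_eq_abs, ← mul_sub, abs_mul]
      apply mul_le_mul (hα _) _ (abs_nonneg _) hM
      exact (abs_sub _ _).trans (by linarith [hwκ (q + (r + 1)) y, hwκ (q + (r + 1)) x])
  have b3 : M * (c / 4 * τ r) ≤ |α r * w r y - α r * w r x| := by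
    rw [← mul_sub, abs_mul, hr]
    exact mul_le_mul_of_nonneg_left (hc r x hx) hM
  set S1 := ∑ q ∈ Finset.range r, (α q * w q y - α q * w q x)
  set S2 := ∑' q, (α (q + (r + 1)) * w (q + (r + 1)) y - α (q + (r + 1)) * w (q + (r + 1)) x)
  set S3 := α r * w r y - α r * w r x
  have h1 : |S3| ≤ |S1 + S3 + S2| + |S1| + |S2| := by
    have : S3 = (S1 + S3 + S2) - S1 - S2 := by ring
    calc |S3| = |(S1 + S3 + S2) - S1 - S2| := by rw [← this]
      _ ≤ |(S1 + S3 + S2) - S1| + |S2| := abs_sub _ _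
      _ ≤ _ := by gcongr; exact abs_sub _ _
  nlinarith

/-- iteration of packets -/
lemma packet_seq (K : Set E) (e : E) (c : ℝ) (hc : 0 < c)
    (hp : ∀ d κ : ℝ, 0 < d → 0 < κ →
    ∃ (w : E → ℝ) (τ d' : ℝ), ContDiff ℝ 1 w ∧ (∀ x, |w x| ≤ κ) ∧ (∀ x, ‖fderiv ℝ w x‖ ≤ 3) ∧
      (∀ x, x ∉ Metric.thickening d K → fderiv ℝ w x = 0) ∧ 0 < τ ∧ τ < d ∧ 0 < d' ∧ d' ≤ d ∧
      (∀ x ∈ Metric.thickening d' K, ‖fderiv ℝ w x‖ ≤ κ) ∧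
      ∀ x ∈ K, c / 4 * τ ≤ |w (x + τ • e) - w x|) :
    ∃ (w : ℕ → E → ℝ) (κ d τ : ℕ → ℝ), (∀ r, ContDiff ℝ 1 (w r)) ∧
      (∀ r x, |w r x| ≤ κ r) ∧ Summable κ ∧ (∀ r x, ‖fderiv ℝ (w r) x‖ ≤ 3) ∧
      (∀ r x, x ∉ Metric.thickening (d r) K → fderiv ℝ (w r) x = 0) ∧
      (∀ q r, q < r → ∀ x ∈ Metric.thickening (d r) K, ‖fderiv ℝ (w q) x‖ ≤ κ q) ∧
      (∀ r, 0 < τ r) ∧ (∀ r, τ r < d r) ∧ Tendsto τ atTop (𝓝 0) ∧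
      (∀ r, ∀ x ∈ K, c / 4 * τ r ≤ |w r (x + τ r • e) - w r x|) ∧
      (∀ r, ∑ q ∈ Finset.range r, κ q ≤ c / 16) ∧
      (∀ r, ∑' q, κ (q + (r + 1)) ≤ c / 32 * τ r) := by
  have hp' : ∀ d κ : ℝ, ∃ (w : E → ℝ) (τ d' : ℝ), 0 < d → 0 < κ → 
    (ContDiff ℝ 1 w ∧ (∀ x, |w x| ≤ κ) ∧ (∀ x, ‖fderiv ℝ w x‖ ≤ 3) ∧
      (∀ x, x ∉ Metric.thickening d K → fderiv ℝ w x = 0) ∧ 0 < τ ∧ τ < d ∧ 0 < d' ∧ d' ≤ d ∧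
      (∀ x ∈ Metric.thickening d' K, ‖fderiv ℝ w x‖ ≤ κ) ∧
      ∀ x ∈ K, c / 4 * τ ≤ |w (x + τ • e) - w x|) := by
    intro d κ
    by_cases h : 0 < d ∧ 0 < κ
    · obtain ⟨w, τ, d', H⟩ := hp d κ h.1 h.2
      exact ⟨w, τ, d', fun _ _ => H⟩
    · exact ⟨0, 0, 0, fun h1 h2 => absurd ⟨h1, h2⟩ h⟩
  choose W T D H using hp'
  let s : ℕ → ℝ × ℝ := fun r => Nat.rec ((1 : ℝ), c / 32)
    (fun _ p => (min (D p.1 p.2) (p.1 / 2), min (p.2 / 2) (c / 64 * T p.1 p.2))) r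
  have hs0 : s 0 = (1, c / 32) := rfl
  have hs : ∀ r, s (r + 1) = (min (D (s r).1 (s r).2) ((s r).1 / 2),
    min ((s r).2 / 2) (c / 64 * T (s r).1 (s r).2)) := fun r => rfl
  have hpos : ∀ r, 0 < (s r).1 ∧ 0 < (s r).2 := by
    intro r
    induction r with
    | zero => rw [hs0]; constructor <;> simp <;> positivity
    | succ r ih =>
      obtain ⟨_, _, _, _, h5, _, h7, _⟩ := H _ _ ih.1 ih.2
      rw [hs]
      have := ih.1
      have := ih.2
      constructor <;> simp only [lt_min_iff] <;> constructor <;> positivity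
  have H' := fun r => H _ _ (hpos r).1 (hpos r).2
  have hd : ∀ r, (s (r + 1)).1 ≤ D (s r).1 (s r).2 := fun r => by rw [hs]; exact min_le_left _ _
  have hd2 : ∀ r, (s (r + 1)).1 ≤ (s r).1 / 2 := fun r => by rw [hs]; exact min_le_right _ _
  have hk : ∀ r, (s (r + 1)).2 ≤ (s r).2 / 2 := fun r => by rw [hs]; exact min_le_left _ _
  have hk2 : ∀ r, (s (r + 1)).2 ≤ c / 64 * T (s r).1 (s r).2 := fun r => by
    rw [hs]; exact min_le_right _ _
  have hgeo : ∀ r q, (s (q + r)).2 ≤ (s r).2 * (1 / 2) ^ q := by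
    intro r q
    induction q with
    | zero => simp
    | succ q ih =>
      have := hk (q + r)
      rw [show q + 1 + r = q + r + 1 by ring, pow_succ]
      linarith
  have hgeod : ∀ q, (s q).1 ≤ (1 / 2) ^ q := by
    intro q
    induction q with
    | zero => simp [hs0]
    | succ q ih =>
      have := hd2 q
      rw [pow_succ]
      linarith
  have hdanti : Antitone fun r => (s r).1 :=
    antitone_nat_of_succ_le fun r => (hd2 r).trans (by linarith [(hpos r).1])
  have hsum : Summable fun r => (s r).2 := by
    refine Summable.of_nonneg_of_le (fun r => (hpos r).2.le) (fun r => hgeo 0 r)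
      (summable_geometric_two.mul_left _)
  refine ⟨fun r => W (s r).1 (s r).2, fun r => (s r).2, fun r => (s r).1, fun r => T (s r).1 (s r).2,
    fun r => (H' r).1, fun r => (H' r).2.1, hsum, fun r => (H' r).2.2.1, fun r => (H' r).2.2.2.1,
    ?_, fun r => (H' r).2.2.2.2.1, fun r => (H' r).2.2.2.2.2.1, ?_, fun r => (H' r).2.2.2.2.2.2.2.2.2,
    ?_, ?_⟩
  · intro q r hqr x hx
    exact (H' q).2.2.2.2.2.2.2.2.1 x (Metric.thickening_mono ((hdanti hqr).trans (hd q)) K hx)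
  · refine squeeze_zero (fun r => (H' r).2.2.2.2.1.le)
      (fun r => (H' r).2.2.2.2.2.1.le.trans (hgeod r))
      (tendsto_pow_atTop_nhds_zero_of_lt_one (by norm_num) (by norm_num))
  · intro r
    refine (hsum.sum_le_tsum _ (fun r _ => (hpos r).2.le)).trans ?_
    refine (hsum.tsum_le_tsum (fun r => hgeo 0 r) (summable_geometric_two.mul_left _)).trans ?_
    rw [tsum_mul_left, tsum_geometric_two, hs0]
    simp only; linarith
  · intro r
    have hsum' : Summable fun q => (s (q + (r + 1))).2 := (summable_nat_add_iff (r + 1)).2 hsum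
    refine (hsum'.tsum_le_tsum (fun q => hgeo (r + 1) q) (summable_geometric_two.mul_left _)).trans ?_
    rw [tsum_mul_left, tsum_geometric_two]
    linarith [hk2 r]

theorem packets_independent (K : Set E) (e : E) (he : ‖e‖ = 1) (c : ℝ) (hc : 0 < c)
    (hp : ∀ d κ : ℝ, 0 < d → 0 < κ →
    ∃ (w : E → ℝ) (τ d' : ℝ), ContDiff ℝ 1 w ∧ (∀ x, |w x| ≤ κ) ∧ (∀ x, ‖fderiv ℝ w x‖ ≤ 3) ∧
      (∀ x, x ∉ Metric.thickening d K → fderiv ℝ w x = 0) ∧ 0 < τ ∧ τ < d ∧ 0 < d' ∧ d' ≤ d ∧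
      (∀ x ∈ Metric.thickening d' K, ‖fderiv ℝ w x‖ ≤ κ) ∧
      ∀ x ∈ K, c / 4 * τ ≤ |w (x + τ • e) - w x|) (k : ℕ) :
    ∃ f : Fin (k + 1) → E → ℝ, (∀ i, ∃ C : ℝ≥0, LipschitzWith C (f i)) ∧
      ∀ x ∈ K, ∀ a : Fin (k + 1) → ℝ, a ≠ 0 → 0 < lip (fun y => ∑ i, a i * f i y) x := by
  obtain ⟨w, κ, d, τ, hw1, hwκ, hκs, h3, hoff, hon, hτ, hτd, hτ0, hcw, hκ1, hκ2⟩ :=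
    packet_seq K e c hc hp
  have hlip := series_lip w κ d K hw1 hwκ hκs h3 hoff hon
  refine ⟨fun i x => ∑' r, (if Fin.ofNat (k + 1) r = i then (1 : ℝ) else 0) * w r x, fun i => ?_, ?_⟩
  · refine hlip _ 1 fun r => ?_
    split_ifs <;> simp
  intro x hx a ha
  obtain ⟨j, -, hj⟩ := Finset.exists_max_image Finset.univ (fun i => |a i|) ⟨0, Finset.mem_univ _⟩
  have haj : 0 < |a j| := by
    obtain ⟨i, hi⟩ := Function.ne_iff.1 ha
    exact (abs_pos.2 hi).trans_le (hj i (Finset.mem_univ _))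
  have hα : ∀ r, |a (Fin.ofNat (k + 1) r)| ≤ |a j| := fun r => hj _ (Finset.mem_univ _)
  have heq : (fun y => ∑ i, a i * ∑' r, (if Fin.ofNat (k + 1) r = i then (1 : ℝ) else 0) * w r y)
      = fun y => ∑' r, a (Fin.ofNat (k + 1) r) * w r y := by
    funext y
    simp_rw [← tsum_mul_left]
    rw [← Summable.tsum_finsetSum]
    · congr 1; funext r
      simp
    · intro i _
      apply Summable.mul_left
      exact series_summable w κ hwκ hκs _ 1 (fun r => by split_ifs <;> simp) y
  rw [heq]
  obtain ⟨C, hC⟩ := hlip _ _ hα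
  refine lt_of_lt_of_le (b := |a j| * (c / 8)) (by positivity) (le_lip hC ?_)
  -- sequence of indices
  let ρ : ℕ → ℕ := fun p => (k + 1) * p + j
  have hρ : ∀ p, Fin.ofNat (k + 1) (ρ p) = j := by
    intro p
    apply Fin.ext
    simp [ρ, Fin.ofNat, Nat.mod_eq_of_lt j.2]
  have hρt : Tendsto ρ atTop atTop := by
    apply tendsto_atTop_mono (f := fun p => p) _ tendsto_id
    intro p; simp only [ρ]; nlinarith [Nat.zero_le (j : ℕ), Nat.zero_le (k * p)]
  have hyx : ∀ r, ‖τ r • e‖ = τ r := fun r => by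
    rw [norm_smul, he, mul_one, Real.norm_of_nonneg (hτ r).le]
  have hte : Tendsto (fun p => x + τ (ρ p) • e) atTop (nhdsWithin x {x}ᶜ) := by
    apply tendsto_nhdsWithin_iff.2
    constructor
    · have : Tendsto (fun p => x + τ (ρ p) • e) atTop (𝓝 (x + (0 : ℝ) • e)) :=
        tendsto_const_nhds.add ((hτ0.comp hρt).smul_const e)
      simpa using this
    · refine Eventually.of_forall fun p h => ?_
      have : τ (ρ p) • e = 0 := by simpa using h
      have h2 := hyx (ρ p)
      rw [this, norm_zero] at h2
      exact (hτ (ρ p)).ne h2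
  refine hte.frequently (Eventually.frequently (Eventually.of_forall fun p => ?_))
  have := series_lower w κ d τ K hw1 hwκ hκs hon e he c hτ hτd hcw hκ1 hκ2 _ _ hα (ρ p)
    (by rw [hρ]) x hx
  rw [dist_eq_norm, add_sub_cancel_left, hyx, le_div_iff₀ (hτ _)]
  linarith
end Series

open MeasureTheory Filter Topology
open scoped ENNReal NNReal

section Extraction
lemma integrable_one {α : Type*} {_ : MeasurableSpace α} {μ : Measure α} [IsFiniteMeasure μ] :
    Integrable (1 : α → ℝ) μ := integrable_const 1

variable {E : Type*} [NormedAddCommGroup E] [InnerProductSpace ℝ E] [FiniteDimensional ℝ E]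
  [MeasurableSpace E] [BorelSpace E]

/-- admissible functions -/
def Adm (μ : Measure E) (e : E) (δ ε : ℝ) : Set (E → ℝ) :=
  {g | ContDiff ℝ 1 g ∧ HasCompactSupport g ∧ (∀ x, |g x| ≤ ε) ∧ (∀ x, ‖fderiv ℝ g x‖ ≤ 1) ∧
    δ ≤ ∫ x, fderiv ℝ g x e ∂μ}

lemma dual_parallelogram (a b : E →L[ℝ] ℝ) :
    ‖a - b‖ ^ 2 = 2 * ‖a‖ ^ 2 + 2 * ‖b‖ ^ 2 - 4 * ‖(1 / 2 : ℝ) • (a + b)‖ ^ 2 := by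
  have h := parallelogram_law_with_norm ℝ ((InnerProductSpace.toDual ℝ E).symm a)
    ((InnerProductSpace.toDual ℝ E).symm b)
  rw [← map_add, ← map_sub] at h
  simp only [LinearIsometryEquiv.norm_map] at h
  rw [norm_smul, mul_pow, Real.norm_of_nonneg (by norm_num)]
  linarith

lemma adm_mid (μ : Measure E) [IsFiniteMeasure μ] (e : E) (δ ε : ℝ) {f g : E → ℝ}
    (hf : f ∈ Adm μ e δ ε) (hg : g ∈ Adm μ e δ ε) :
    (fun x => (1 / 2 : ℝ) * (f x + g x)) ∈ Adm μ e δ ε ∧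
    ∀ x, fderiv ℝ (fun x => (1 / 2 : ℝ) * (f x + g x)) x
      = (1 / 2 : ℝ) • (fderiv ℝ f x + fderiv ℝ g x) := by
  obtain ⟨f1, f2, f3, f4, f5⟩ := hf
  obtain ⟨g1, g2, g3, g4, g5⟩ := hg
  have hd : ∀ x, fderiv ℝ (fun x => (1 / 2 : ℝ) * (f x + g x)) x
      = (1 / 2 : ℝ) • (fderiv ℝ f x + fderiv ℝ g x) := by
    intro x
    have df := (f1.differentiable one_ne_zero) x
    have dg := (g1.differentiable one_ne_zero) x
    rw [fderiv_const_mul (df.fun_add dg), fderiv_fun_add df dg]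
  have hi : ∀ {h : E → ℝ}, ContDiff ℝ 1 h → HasCompactSupport h →
      Integrable (fun x => fderiv ℝ h x e) μ := by
    intro h h1 h2
    apply Continuous.integrable_of_hasCompactSupport
    · exact (h1.continuous_fderiv one_ne_zero).clm_apply continuous_const
    · exact (h2.fderiv (𝕜 := ℝ)).comp_left (g := fun l : E →L[ℝ] ℝ => l e) rfl
  refine ⟨⟨contDiff_const.mul (f1.add g1), (f2.add g2).mul_left, fun x => ?_, fun x => ?_, ?_⟩, hd⟩
  · rw [abs_mul, abs_of_pos (by norm_num : (0 : ℝ) < 1 / 2)]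
    linarith [abs_add_le (f x) (g x), f3 x, g3 x]
  · rw [hd, norm_smul, Real.norm_of_nonneg (by norm_num)]
    linarith [norm_add_le (fderiv ℝ f x) (fderiv ℝ g x), f4 x, g4 x]
  · simp only [hd, smul_apply, add_apply, smul_eq_mul]
    rw [integral_const_mul, integral_add (hi f1 f2) (hi g1 g2)]
    linarith

lemma adm_seq (μ : Measure E) [IsFiniteMeasure μ] (e : E) (δ : ℝ)
    (hG : ∀ ε > 0, (Adm μ e δ ε).Nonempty) :
    ∃ (h : ℕ → E → ℝ) (b : ℕ → ℝ), Tendsto b atTop (𝓝 0) ∧ (∀ l, h l ∈ Adm μ e δ (b l)) ∧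
      ∀ l, ∫ x, ‖fderiv ℝ (h l) x - fderiv ℝ (h (l + 1)) x‖ ^ 2 ∂μ ≤ (1 / 8) ^ l := by
  set ε : ℕ → ℝ := fun N => 1 / ((N : ℝ) + 1) with hε
  have hε0 : ∀ N, 0 < ε N := fun N => by positivity
  have hεt : Tendsto ε atTop (𝓝 0) := tendsto_one_div_add_atTop_nhds_zero_nat
  have hεa : Antitone ε := by
    intro N M h
    simp only [hε]
    gcongr
  have hAm : ∀ {a b : ℝ}, a ≤ b → Adm μ e δ a ⊆ Adm μ e δ b := fun hab g hg =>
    ⟨hg.1, hg.2.1, fun x => (hg.2.2.1 x).trans hab, hg.2.2.2⟩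
  set J : (E → ℝ) → ℝ := fun g => ∫ x, ‖fderiv ℝ g x‖ ^ 2 ∂μ with hJ
  have hJi : ∀ {a : ℝ} {g : E → ℝ}, g ∈ Adm μ e δ a → Integrable (fun x => ‖fderiv ℝ g x‖ ^ 2) μ := by
    intro a g hg
    apply Integrable.of_bound ((hg.1.continuous_fderiv one_ne_zero).norm.pow 2).aestronglyMeasurable 1
    refine Eventually.of_forall fun x => ?_
    show ‖‖fderiv ℝ g x‖ ^ 2‖ ≤ 1
    rw [Real.norm_of_nonneg (by positivity)]
    exact pow_le_one₀ (norm_nonneg _) (hg.2.2.2.1 x)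
  have hJ0 : ∀ g, 0 ≤ J g := fun g => integral_nonneg fun x => by positivity
  have hJ1 : ∀ {a : ℝ} {g : E → ℝ}, g ∈ Adm μ e δ a → J g ≤ μ.real Set.univ := by
    intro a g hg
    calc J g ≤ ∫ x, (1 : ℝ) ∂μ := integral_mono (hJi hg) (integrable_const _) fun x =>
          pow_le_one₀ (norm_nonneg _) (hg.2.2.2.1 x)
      _ = _ := by simp
  set D : ℕ → ℝ := fun N => sInf (J '' Adm μ e δ (ε N)) with hD
  have hbb : ∀ N, BddBelow (J '' Adm μ e δ (ε N)) := fun N => ⟨0, by rintro _ ⟨g, _, rfl⟩; exact hJ0 g⟩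
  have hDle : ∀ N g, g ∈ Adm μ e δ (ε N) → D N ≤ J g := fun N g hg => csInf_le (hbb N) ⟨g, hg, rfl⟩
  have hDm : Monotone D := fun N M h => csInf_le_csInf (hbb N) ((hG _ (hε0 M)).image _)
    (Set.image_mono (hAm (hεa h)))
  have hDb : BddAbove (Set.range D) := by
    refine ⟨μ.real Set.univ, ?_⟩
    rintro _ ⟨N, rfl⟩
    obtain ⟨g, hg⟩ := hG _ (hε0 N)
    exact (hDle N g hg).trans (hJ1 hg)
  have hDt := tendsto_atTop_ciSup hDm hDb
  set S := ⨆ N, D N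
  have hch : ∀ N, ∃ g ∈ Adm μ e δ (ε N), J g ≤ S + ε N := by
    intro N
    have : sInf (J '' Adm μ e δ (ε N)) < D N + ε N := by
      have := hε0 N
      simp only [hD]; linarith
    obtain ⟨_, ⟨g, hg, rfl⟩, h⟩ := exists_lt_of_csInf_lt ((hG _ (hε0 N)).image _) this
    exact ⟨g, hg, h.le.trans (by linarith [le_ciSup hDb N])⟩
  choose g hg hgS using hch
  have hpar : ∀ N M, N ≤ M → ∫ x, ‖fderiv ℝ (g N) x - fderiv ℝ (g M) x‖ ^ 2 ∂μ ≤ 4 * (S + ε N - D N) := by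
    intro N M hNM
    obtain ⟨hm, hmd⟩ := adm_mid μ e δ (ε N) (hg N) (hAm (hεa hNM) (hg M))
    have h1 := hDle N _ hm
    have i3 := hJi hm
    simp only [hJ, hmd] at h1 i3
    simp_rw [dual_parallelogram]
    have i1 := (hJi (hg N)).const_mul 2
    have i2 := (hJi (hg M)).const_mul 2
    have i12 : Integrable (fun x => 2 * ‖fderiv ℝ (g N) x‖ ^ 2 + 2 * ‖fderiv ℝ (g M) x‖ ^ 2) μ := i1.add i2
    rw [integral_sub i12 (i3.const_mul 4), integral_add i1 i2, integral_const_mul,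
      integral_const_mul, integral_const_mul]
    have := hgS N
    have := hgS M
    have := hεa hNM
    simp only [hJ] at *
    linarith
  have ht : Tendsto (fun N => 4 * (S + ε N - D N)) atTop (𝓝 0) := by
    have := ((tendsto_const_nhds (x := S)).add hεt).sub hDt |>.const_mul 4
    simpa using this
  obtain ⟨φ, hφ, hφ'⟩ := extraction_forall_of_eventually (P := fun l N => 4 * (S + ε N - D N) ≤ (1 / 8) ^ l)
    (fun l => ht.eventually_le_const (by positivity))
  exact ⟨fun l => g (φ l), fun l => ε (φ l), hεt.comp hφ.tendsto_atTop, fun l => hg _,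
    fun l => (hpar _ _ (hφ.monotone l.le_succ)).trans (hφ' l)⟩

theorem lemmaA (μ : Measure E) [IsFiniteMeasure μ] (e : E) (he : ‖e‖ = 1) (δ : ℝ) (hδ : 0 < δ)
    (hG : ∀ ε > 0, (Adm μ e δ ε).Nonempty) :
    ∃ K : Set E, IsCompact K ∧ 0 < μ K ∧ ∀ k : ℕ,
    ∃ f : Fin (k + 1) → E → ℝ, (∀ i, ∃ C : ℝ≥0, LipschitzWith C (f i)) ∧
      ∀ x ∈ K, ∀ a : Fin (k + 1) → ℝ, a ≠ 0 → 0 < lip (fun y => ∑ i, a i * f i y) x := by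
  obtain ⟨h, b, hb, hh, hintg⟩ := adm_seq μ e δ hG
  have hc1 : ∀ l, Continuous (fderiv ℝ (h l)) := fun l => (hh l).1.continuous_fderiv one_ne_zero
  have hde : ∀ l x, fderiv ℝ (h l) x e ≤ 1 := fun l x => by
    have := (fderiv ℝ (h l) x).le_opNorm e
    rw [he, mul_one] at this
    exact (le_abs_self _).trans (this.trans ((hh l).2.2.2.1 x))
  have hie : ∀ l, Integrable (fun x => fderiv ℝ (h l) x e) μ := by
    intro l
    apply Integrable.of_bound ((hc1 l).clm_apply continuous_const).aestronglyMeasurable 1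
    refine Eventually.of_forall fun x => ?_
    have := (fderiv ℝ (h l) x).le_opNorm e
    rw [he, mul_one] at this
    exact (this.trans ((hh l).2.2.2.1 x))
  set m := μ.real Set.univ with hm
  have hm0 : 0 < m := by
    have := (hh 0).2.2.2.2.trans (integral_mono (hie 0) (integrable_const 1) (hde 0))
    simp at this
    exact hδ.trans_le this
  set c := δ / (2 * m) with hc
  have hc0 : 0 < c := by positivity
  set A : ℕ → Set E := fun L => {x | c < fderiv ℝ (h L) x e} with hA
  have hAm : ∀ L, MeasurableSet (A L) := fun L =>
    (isOpen_lt continuous_const ((hc1 L).clm_apply continuous_const)).measurableSet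
  have hAμ : ∀ L, δ / 2 ≤ μ.real (A L) := by
    intro L
    have h1 : ∫ x, fderiv ℝ (h L) x e ∂μ ≤ ∫ x, (c + (A L).indicator 1 x) ∂μ := by
      apply integral_mono (hie L) ((integrable_const _).add ((integrable_one).indicator (hAm L)))
      intro x
      by_cases hx : x ∈ A L
      · simp [hx]; linarith [hde L x]
      · simp [hx]; simpa [hA] using hx
    rw [integral_add (integrable_const _) ((integrable_one).indicator (hAm L)),
      integral_indicator_one (hAm L)] at h1
    simp only [integral_const, smul_eq_mul] at h1
    have h2 : m * c = δ / 2 := by rw [hc]; field_simp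
    have h3 := (hh L).2.2.2.2
    rw [← hm] at h1
    linarith
  set B : ℕ → Set E := fun l => {x | (1 / 2 : ℝ) ^ l < ‖fderiv ℝ (h l) x - fderiv ℝ (h (l + 1)) x‖}
  have hBm : ∀ l, MeasurableSet (B l) := fun l =>
    (isOpen_lt continuous_const ((hc1 l).sub (hc1 (l + 1))).norm).measurableSet
  have hBμ : ∀ l, μ.real (B l) ≤ (1 / 2) ^ l := by
    intro l
    have hi : Integrable (fun x => ‖fderiv ℝ (h l) x - fderiv ℝ (h (l + 1)) x‖ ^ 2) μ := by
      apply Integrable.of_bound (((hc1 l).sub (hc1 (l + 1))).norm.pow 2).aestronglyMeasurable 4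
      refine Eventually.of_forall fun x => ?_
      show ‖‖fderiv ℝ (h l) x - fderiv ℝ (h (l + 1)) x‖ ^ 2‖ ≤ 4
      rw [Real.norm_of_nonneg (by positivity)]
      have : ‖fderiv ℝ (h l) x - fderiv ℝ (h (l + 1)) x‖ ≤ 2 := (norm_sub_le _ _).trans (by
        linarith [(hh l).2.2.2.1 x, (hh (l + 1)).2.2.2.1 x])
      nlinarith [norm_nonneg (fderiv ℝ (h l) x - fderiv ℝ (h (l + 1)) x)]
    have h1 : ∫ x, (B l).indicator (fun _ => ((1 / 4 : ℝ) ^ l)) x ∂μ ≤ ∫ x, ‖fderiv ℝ (h l) x - fderiv ℝ (h (l + 1)) x‖ ^ 2 ∂μ := by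
      apply integral_mono ((integrable_const _).indicator (hBm l)) hi
      intro x
      by_cases hx : x ∈ B l
      · simp only [hx, Set.indicator_of_mem]
        have : (1 / 4 : ℝ) ^ l = ((1 / 2) ^ l) ^ 2 := by rw [← pow_mul, mul_comm, pow_mul]; norm_num
        rw [this]
        exact pow_le_pow_left₀ (by positivity) (le_of_lt hx) 2
      · simp only [hx, not_false_eq_true, Set.indicator_of_notMem]; positivity
    rw [integral_indicator_const _ (hBm l), smul_eq_mul] at h1
    have h2 := h1.trans (hintg l)
    have h3 : (1 / 8 : ℝ) ^ l = (1 / 2) ^ l * (1 / 4) ^ l := by rw [← mul_pow]; norm_num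
    rw [h3] at h2
    exact le_of_mul_le_mul_right h2 (by positivity)
  obtain ⟨L, hL1, hL2⟩ : ∃ L : ℕ, 2 * (1 / 2 : ℝ) ^ L ≤ δ / 4 ∧ 2 * (1 / 2 : ℝ) ^ L ≤ c / 2 := by
    have : Tendsto (fun L : ℕ => 2 * (1 / 2 : ℝ) ^ L) atTop (𝓝 (2 * 0)) :=
      (tendsto_pow_atTop_nhds_zero_of_lt_one (by norm_num) (by norm_num)).const_mul 2
    rw [mul_zero] at this
    exact ((this.eventually_le_const (by positivity)).and (this.eventually_le_const (by positivity))).exists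
  have hU : μ (⋃ l, B (l + L)) ≤ ENNReal.ofReal (δ / 4) := by
    refine (measure_iUnion_le _).trans ?_
    have hs : Summable fun l : ℕ => (1 / 2 : ℝ) ^ l * (1 / 2) ^ L := summable_geometric_two.mul_right _
    calc ∑' l, μ (B (l + L)) ≤ ∑' l : ℕ, ENNReal.ofReal ((1 / 2 : ℝ) ^ l * (1 / 2) ^ L) := by
          refine ENNReal.tsum_le_tsum fun l => ?_
          rw [← pow_add]
          rw [← ENNReal.ofReal_toReal (measure_ne_top μ (B (l + L)))]
          exact ENNReal.ofReal_le_ofReal (hBμ _)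
      _ = ENNReal.ofReal (∑' l : ℕ, (1 / 2 : ℝ) ^ l * (1 / 2) ^ L) :=
          (ENNReal.ofReal_tsum_of_nonneg (fun l => by positivity) hs).symm
      _ ≤ _ := by
          rw [tsum_mul_right, tsum_geometric_two]
          exact ENNReal.ofReal_le_ofReal hL1
  set T := A L \ ⋃ l, B (l + L) with hT
  have hTm : MeasurableSet T := (hAm L).diff (MeasurableSet.iUnion fun l => hBm _)
  have hTpos : 0 < μ T := by
    by_contra hcon
    have h0 : μ T = 0 := by simpa using hcon
    have : μ (A L) ≤ ENNReal.ofReal (δ / 4) := by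
      calc μ (A L) ≤ μ (T ∪ ⋃ l, B (l + L)) := measure_mono (by
            intro x hx
            by_cases hx2 : x ∈ ⋃ l, B (l + L)
            · exact Or.inr hx2
            · exact Or.inl ⟨hx, hx2⟩)
        _ ≤ μ T + μ (⋃ l, B (l + L)) := measure_union_le _ _
        _ ≤ _ := by rw [h0, zero_add]; exact hU
    have h2 := ENNReal.toReal_mono ENNReal.ofReal_ne_top this
    rw [ENNReal.toReal_ofReal (by positivity)] at h2
    have := hAμ L
    simp only [Measure.real] at this
    linarith
  obtain ⟨K, hKT, hKc, hKpos⟩ := hTm.exists_lt_isCompact hTpos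
  refine ⟨K, hKc, hKpos, ?_⟩
  have hstep : ∀ l, ∀ x ∈ K, ‖fderiv ℝ (h (l + L)) x - fderiv ℝ (h (l + 1 + L)) x‖ ≤ (1 / 2) ^ (l + L) := by
    intro l x hx
    have := (hKT hx).2
    simp only [Set.mem_iUnion, not_exists] at this
    have h2 := this l
    simp only [B, Set.mem_ofPred_eq, not_lt] at h2
    rwa [show l + 1 + L = l + L + 1 by ring]
  have hdist : ∀ l j, ∀ x ∈ K, ‖fderiv ℝ (h (l + L)) x - fderiv ℝ (h (l + j + L)) x‖
      ≤ 2 * (1 / 2) ^ (l + L) - 2 * (1 / 2) ^ (l + j + L) := by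
    intro l j x hx
    induction j with
    | zero => simp
    | succ j ih =>
      have h1 := hstep (l + j) x hx
      have h2 := norm_sub_le_norm_sub_add_norm_sub (fderiv ℝ (h (l + L)) x)
        (fderiv ℝ (h (l + j + L)) x) (fderiv ℝ (h (l + j + 1 + L)) x)
      rw [← add_assoc l j 1]
      have h3 : (1 / 2 : ℝ) ^ (l + j + 1 + L) = (1 / 2) ^ (l + j + L) / 2 := by
        rw [show l + j + 1 + L = l + j + L + 1 by ring, pow_succ]; ring
      rw [h3]
      linarith
  have hdist' : ∀ l l', l ≤ l' → ∀ x ∈ K, ‖fderiv ℝ (h (l + L)) x - fderiv ℝ (h (l' + L)) x‖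
      ≤ 2 * (1 / 2) ^ (l + L) := by
    intro l l' hl x hx
    obtain ⟨j, rfl⟩ := Nat.exists_eq_add_of_le hl
    have := hdist l j x hx
    have h2 : (0 : ℝ) ≤ 2 * (1 / 2) ^ (l + j + L) := by positivity
    linarith
  intro k
  refine packets_independent K e he (c / 2) (by positivity) ?_ k
  intro d κ hd hκ
  refine packet K hKc e he (c / 2) (by positivity) (fun l => h (l + L)) (fun l => (hh _).1)
    (fun l => (hh _).2.1) (fun l => b (l + L)) ((tendsto_add_atTop_iff_nat L).2 hb)
    (fun l => (hh _).2.2.1) (fun l => (hh _).2.2.2.1) (fun l => 2 * (1 / 2) ^ (l + L)) ?_ hdist' ?_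
    d κ hd hκ
  · have : Tendsto (fun L : ℕ => 2 * (1 / 2 : ℝ) ^ L) atTop (𝓝 (2 * 0)) :=
      (tendsto_pow_atTop_nhds_zero_of_lt_one (by norm_num) (by norm_num)).const_mul 2
    rw [mul_zero] at this
    exact (tendsto_add_atTop_iff_nat (f := fun L : ℕ => 2 * (1 / 2 : ℝ) ^ L) L).2 this
  · intro l x hx
    have h1 := hdist' 0 l (Nat.zero_le _) x hx
    rw [zero_add] at h1
    have h2 : c < fderiv ℝ (h L) x e := (hKT hx).1
    have h3 := (fderiv ℝ (h L) x - fderiv ℝ (h (l + L)) x).le_opNorm e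
    rw [he, mul_one, sub_apply, Real.norm_eq_abs] at h3
    linarith [(abs_le.1 (h3.trans h1)).2]

end Extraction

open MeasureTheory Filter Topology
open scoped ENNReal NNReal

section HBound
variable {E : Type*} [NormedAddCommGroup E] [InnerProductSpace ℝ E] [FiniteDimensional ℝ E]
  [MeasurableSpace E] [BorelSpace E]

lemma h_of_not_adm_aux (μ : Measure E) (e : E) (δ ε : ℝ) (hδ : 0 < δ) (hε : 0 < ε)
    (hem : Adm μ e δ ε = ∅) (g : E → ℝ) (hg : ContDiff ℝ 1 g) (hgc : HasCompactSupport g)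
    (A B : ℝ) (hA : ∀ x, ‖fderiv ℝ g x‖ ≤ A) (hB : ∀ x, |g x| ≤ B) :
    ∫ x, fderiv ℝ g x e ∂μ ≤ δ * A + δ / ε * B := by
  have hA0 : 0 ≤ A := (norm_nonneg _).trans (hA 0)
  have hB0 : 0 ≤ B := (abs_nonneg _).trans (hB 0)
  apply le_of_forall_pos_le_add
  intro t ht
  set s : ℝ := A + B / ε + t / δ with hs
  have hs0 : 0 < s := by positivity
  have hder : ∀ x, fderiv ℝ (fun x => s⁻¹ * g x) x = s⁻¹ • fderiv ℝ g x := fun x =>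
    fderiv_const_mul (hg.differentiable one_ne_zero x) _
  have hn : (fun x => s⁻¹ * g x) ∉ Adm μ e δ ε := by rw [hem]; exact Set.notMem_empty _
  have h4 : ¬ (δ ≤ ∫ x, fderiv ℝ (fun x => s⁻¹ * g x) x e ∂μ) := by
    intro h
    apply hn
    refine ⟨contDiff_const.mul hg, hgc.mul_left, fun x => ?_, fun x => ?_, h⟩
    · rw [abs_mul, abs_of_pos (inv_pos.2 hs0), inv_mul_le_iff₀ hs0]
      refine (hB x).trans ?_
      have : B = B / ε * ε := by field_simp
      rw [this]
      apply mul_le_mul_of_nonneg_right _ hε.le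
      rw [hs]
      have : 0 < t / δ := by positivity
      linarith
    · rw [hder, norm_smul, Real.norm_of_nonneg (inv_pos.2 hs0).le, inv_mul_le_iff₀ hs0]
      refine (hA x).trans ?_
      rw [hs]
      have : 0 < t / δ := by positivity
      have : 0 ≤ B / ε := by positivity
      linarith
  push Not at h4
  simp only [hder, smul_apply, smul_eq_mul] at h4
  rw [integral_const_mul, inv_mul_lt_iff₀ hs0] at h4
  have : s * δ = δ * A + δ / ε * B + t := by rw [hs]; field_simp
  linarith

lemma h_of_not_adm (μ : Measure E) (e : E) (δ ε : ℝ) (hδ : 0 < δ) (hε : 0 < ε)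
    (hem : Adm μ e δ ε = ∅) (g : E → ℝ) (hg : ContDiff ℝ 1 g) (hgc : HasCompactSupport g)
    (A B : ℝ) (hA : ∀ x, ‖fderiv ℝ g x‖ ≤ A) (hB : ∀ x, |g x| ≤ B) :
    |∫ x, fderiv ℝ g x e ∂μ| ≤ δ * A + δ / ε * B := by
  rw [abs_le']
  refine ⟨h_of_not_adm_aux μ e δ ε hδ hε hem g hg hgc A B hA hB, ?_⟩
  have h := h_of_not_adm_aux μ e δ ε hδ hε hem (fun x => - g x) hg.neg
    hgc.neg A B (fun x => by rw [fderiv_fun_neg, norm_neg]; exact hA x)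
    (fun x => by rw [abs_neg]; exact hB x)
  simp only [fderiv_fun_neg, neg_apply, integral_neg] at h
  exact h
end HBound

open MeasureTheory Filter Topology
open scoped ENNReal NNReal

section HB

theorem pointmass {W S T P Q : Type*} [AddCommGroup W] [Module ℝ W] [Fintype P] [Fintype Q]
    (D : W →ₗ[ℝ] (S → ℝ)) (G : W →ₗ[ℝ] (T → ℝ)) (ℓ : W →ₗ[ℝ] ℝ) (a C : ℝ) (ha : 0 ≤ a) (hC : 0 ≤ C)
    (hD : ∀ w, ∃ A, ∀ s, |D w s| ≤ A) (hG : ∀ w, ∃ A, ∀ s, |G w s| ≤ A)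
    (hl : ∀ w A B, 0 ≤ A → 0 ≤ B → (∀ s, |D w s| ≤ A) → (∀ t, |G w t| ≤ B) → ℓ w ≤ a * A + C * B)
    (p : S → P) (c : P → S) (q : T → Q) (d : Q → T) :
    ∃ (α : P → ℝ) (β : Q → ℝ), ∑ z, |α z| ≤ a ∧ ∑ z, |β z| ≤ C ∧
      ∀ w ω, 0 ≤ ω → (∀ s, |D w s - D w (c (p s))| ≤ ω) → (∀ t, |G w t - G w (d (q t))| ≤ ω) →
        |ℓ w - ∑ z, α z * D w (c z) - ∑ z, β z * G w (d z)| ≤ (a + C) * ω := by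
  classical
  let N1 : (W × (P → ℝ) × (Q → ℝ)) → ℝ := fun v => ⨆ s, |D v.1 s - v.2.1 (p s)|
  let N2 : (W × (P → ℝ) × (Q → ℝ)) → ℝ := fun v => ⨆ t, |G v.1 t - v.2.2 (q t)|
  have hbP : ∀ f : P → ℝ, ∃ A, ∀ z, |f z| ≤ A := fun f =>
    ⟨∑ z, |f z|, fun z => Finset.single_le_sum (f := fun z => |f z|) (fun _ _ => abs_nonneg _) (Finset.mem_univ z)⟩
  have hbQ : ∀ f : Q → ℝ, ∃ A, ∀ z, |f z| ≤ A := fun f =>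
    ⟨∑ z, |f z|, fun z => Finset.single_le_sum (f := fun z => |f z|) (fun _ _ => abs_nonneg _) (Finset.mem_univ z)⟩
  have b1 : ∀ v : (W × (P → ℝ) × (Q → ℝ)), BddAbove (Set.range fun s => |D v.1 s - v.2.1 (p s)|) := fun v => by
    obtain ⟨A, hA⟩ := hD v.1
    obtain ⟨B, hB⟩ := hbP v.2.1
    refine ⟨A + B, ?_⟩
    rintro _ ⟨s, rfl⟩
    exact (abs_sub _ _).trans (add_le_add (hA s) (hB _))
  have b2 : ∀ v : (W × (P → ℝ) × (Q → ℝ)), BddAbove (Set.range fun s => |G v.1 s - v.2.2 (q s)|) := fun v => by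
    obtain ⟨A, hA⟩ := hG v.1
    obtain ⟨B, hB⟩ := hbQ v.2.2
    refine ⟨A + B, ?_⟩
    rintro _ ⟨s, rfl⟩
    exact (abs_sub _ _).trans (add_le_add (hA s) (hB _))
  have l1 : ∀ (v : (W × (P → ℝ) × (Q → ℝ))) s, |D v.1 s - v.2.1 (p s)| ≤ N1 v := fun v s => le_ciSup (b1 v) s
  have l2 : ∀ (v : (W × (P → ℝ) × (Q → ℝ))) s, |G v.1 s - v.2.2 (q s)| ≤ N2 v := fun v s => le_ciSup (b2 v) s
  have n1 : ∀ v, 0 ≤ N1 v := fun v => Real.iSup_nonneg fun _ => abs_nonneg _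
  have n2 : ∀ v, 0 ≤ N2 v := fun v => Real.iSup_nonneg fun _ => abs_nonneg _
  have u1 : ∀ (v : (W × (P → ℝ) × (Q → ℝ))) (A : ℝ), 0 ≤ A → (∀ s, |D v.1 s - v.2.1 (p s)| ≤ A) → N1 v ≤ A :=
    fun v A hA h => Real.iSup_le h hA
  have u2 : ∀ (v : (W × (P → ℝ) × (Q → ℝ))) (A : ℝ), 0 ≤ A → (∀ s, |G v.1 s - v.2.2 (q s)| ≤ A) → N2 v ≤ A :=
    fun v A hA h => Real.iSup_le h hA
  let N : (W × (P → ℝ) × (Q → ℝ)) → ℝ := fun v => a * N1 v + C * N2 v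
  let sub : Submodule ℝ (W × (P → ℝ) × (Q → ℝ)) := LinearMap.range (LinearMap.inl ℝ W ((P → ℝ) × (Q → ℝ)))
  let f : (W × (P → ℝ) × (Q → ℝ)) →ₗ.[ℝ] ℝ := ⟨sub, (ℓ.comp (LinearMap.fst ℝ W ((P → ℝ) × (Q → ℝ)))).comp sub.subtype⟩
  have hs1 : ∀ (c : ℝ) (v : (W × (P → ℝ) × (Q → ℝ))), N1 (c • v) = |c| * N1 v := fun c v => by
    simp only [N1]
    rw [Real.mul_iSup_of_nonneg (abs_nonneg c)]
    congr 1; funext s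
    rw [← abs_mul]; congr 1
    simp; ring
  have hs2 : ∀ (c : ℝ) (v : (W × (P → ℝ) × (Q → ℝ))), N2 (c • v) = |c| * N2 v := fun c v => by
    simp only [N2]
    rw [Real.mul_iSup_of_nonneg (abs_nonneg c)]
    congr 1; funext s
    rw [← abs_mul]; congr 1
    simp; ring
  obtain ⟨g, hg1, hg2⟩ := exists_extension_of_le_sublinear f N
    (fun c hc v => by
      simp only [N, hs1, hs2, abs_of_pos hc]; ring)
    (fun v w => by
      have e1 : N1 (v + w) ≤ N1 v + N1 w := u1 _ _ (add_nonneg (n1 _) (n1 _)) fun s => by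
        refine le_trans (le_of_eq ?_) ((abs_add_le _ _).trans (add_le_add (l1 v s) (l1 w s)))
        congr 1; simp; ring
      have e2 : N2 (v + w) ≤ N2 v + N2 w := u2 _ _ (add_nonneg (n2 _) (n2 _)) fun s => by
        refine le_trans (le_of_eq ?_) ((abs_add_le _ _).trans (add_le_add (l2 v s) (l2 w s)))
        congr 1; simp; ring
      simp only [N]
      nlinarith)
    (by
      rintro ⟨_, w, rfl⟩
      simp only [N, f]
      refine hl w _ _ (n1 _) (n2 _) (fun s => ?_) (fun s => ?_)
      · have := l1 (w, 0, 0) s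
        simp only [Pi.zero_apply, sub_zero] at this
        exact this
      · have := l2 (w, 0, 0) s
        simp only [Pi.zero_apply, sub_zero] at this
        exact this)
  have hg1' : ∀ w, g (w, 0, 0) = ℓ w := fun w => hg1 ⟨(w, 0, 0), ⟨w, rfl⟩⟩
  let gP : (P → ℝ) →ₗ[ℝ] ℝ := g.comp ((LinearMap.inr ℝ W _).comp (LinearMap.inl ℝ _ _))
  let gQ : (Q → ℝ) →ₗ[ℝ] ℝ := g.comp ((LinearMap.inr ℝ W _).comp (LinearMap.inr ℝ _ _))
  have hgP : ∀ h : P → ℝ, gP h = ∑ z, h z * gP (Pi.single z 1) := fun h => by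
    conv_lhs => rw [LinearMap.pi_apply_eq_sum_univ gP h]
    refine Finset.sum_congr rfl fun z _ => ?_
    rw [smul_eq_mul]
    congr 2; funext j
    simp [Pi.single_apply, eq_comm]
  have hgQ : ∀ h : Q → ℝ, gQ h = ∑ z, h z * gQ (Pi.single z 1) := fun h => by
    conv_lhs => rw [LinearMap.pi_apply_eq_sum_univ gQ h]
    refine Finset.sum_congr rfl fun z _ => ?_
    rw [smul_eq_mul]
    congr 2; funext j
    simp [Pi.single_apply, eq_comm]
  have hsgn : ∀ x : ℝ, |(SignType.sign x : ℝ)| ≤ 1 := fun x => by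
    rcases lt_trichotomy x 0 with h | h | h <;> simp [h]
  refine ⟨fun z => - gP (Pi.single z 1), fun z => - gQ (Pi.single z 1), ?_, ?_, ?_⟩
  · have h1 : ∑ z, |(- gP (Pi.single z 1))| = gP (fun z => SignType.sign (gP (Pi.single z 1))) := by
      rw [hgP]; simp
    rw [h1]
    refine (hg2 _).trans ?_
    have e1 : N1 ((0 : W), (fun z : P => (SignType.sign (gP (Pi.single z 1)) : ℝ)), (0 : Q → ℝ)) ≤ 1 :=
      u1 _ _ zero_le_one fun s => by simpa using hsgn _
    have e2 : N2 ((0 : W), (fun z : P => (SignType.sign (gP (Pi.single z 1)) : ℝ)), (0 : Q → ℝ)) ≤ 0 :=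
      u2 _ _ le_rfl fun s => by simp
    change a * N1 ((0 : W), (fun z : P => (SignType.sign (gP (Pi.single z 1)) : ℝ)), (0 : Q → ℝ)) + C * N2 ((0 : W), (fun z : P => (SignType.sign (gP (Pi.single z 1)) : ℝ)), (0 : Q → ℝ)) ≤ a
    nlinarith [mul_le_mul_of_nonneg_left e1 ha, mul_le_mul_of_nonneg_left e2 hC]
  · have h1 : ∑ z, |(- gQ (Pi.single z 1))| = gQ (fun z => SignType.sign (gQ (Pi.single z 1))) := by
      rw [hgQ]; simp
    rw [h1]
    refine (hg2 _).trans ?_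
    have e1 : N1 ((0 : W), (0 : P → ℝ), (fun z : Q => (SignType.sign (gQ (Pi.single z 1)) : ℝ))) ≤ 0 :=
      u1 _ _ le_rfl fun s => by simp
    have e2 : N2 ((0 : W), (0 : P → ℝ), (fun z : Q => (SignType.sign (gQ (Pi.single z 1)) : ℝ))) ≤ 1 :=
      u2 _ _ zero_le_one fun s => by simpa using hsgn _
    change a * N1 ((0 : W), (0 : P → ℝ), (fun z : Q => (SignType.sign (gQ (Pi.single z 1)) : ℝ))) + C * N2 ((0 : W), (0 : P → ℝ), (fun z : Q => (SignType.sign (gQ (Pi.single z 1)) : ℝ))) ≤ C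
    nlinarith [mul_le_mul_of_nonneg_left e1 ha, mul_le_mul_of_nonneg_left e2 hC]
  · intro w ω hω h1 h2
    have key : ∀ w : W, (∀ s, |D w s - D w (c (p s))| ≤ ω) → (∀ t, |G w t - G w (d (q t))| ≤ ω) →
        ℓ w - ∑ z, (- gP (Pi.single z 1)) * D w (c z) - ∑ z, (- gQ (Pi.single z 1)) * G w (d z) ≤ (a + C) * ω := by
      intro w h1 h2
      have h3 := hg2 (w, (fun z => D w (c z)), (fun z => G w (d z)))
      have e1 : N1 (w, (fun z => D w (c z)), (fun z => G w (d z))) ≤ ω := u1 _ _ hω h1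
      have e2 : N2 (w, (fun z => D w (c z)), (fun z => G w (d z))) ≤ ω := u2 _ _ hω h2
      have h4 : g (w, (fun z => D w (c z)), (fun z => G w (d z))) =
          ℓ w + gP (fun z => D w (c z)) + gQ (fun z => G w (d z)) := by
        rw [← hg1' w]
        simp only [gP, gQ, LinearMap.comp_apply, ← map_add]
        congr 1
        simp
      rw [h4, hgP, hgQ] at h3
      have h5 : N (w, (fun z => D w (c z)), (fun z => G w (d z))) ≤ (a + C) * ω := by
        simp only [N]
        nlinarith [mul_le_mul_of_nonneg_left e1 ha, mul_le_mul_of_nonneg_left e2 hC]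
      refine le_trans (le_of_eq ?_) (h3.trans h5)
      simp only [neg_mul, Finset.sum_neg_distrib, sub_neg_eq_add]
      simp only [mul_comm]
    rw [abs_le']
    refine ⟨key w h1 h2, ?_⟩
    have := key (-w) (fun s => by
      simp only [map_neg, Pi.neg_apply]
      rw [← abs_neg]; convert h1 s using 2; ring) (fun s => by
      simp only [map_neg, Pi.neg_apply]
      rw [← abs_neg]; convert h2 s using 2; ring)
    refine le_trans (le_of_eq ?_) this
    simp only [map_neg, Pi.neg_apply, mul_neg, Finset.sum_neg_distrib, neg_mul]
    ring
end HB

open MeasureTheory Filter Topology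
open scoped ENNReal NNReal

section P4b

def Wsub (n : ℕ) (R : ℝ) : Submodule ℝ (EuclideanSpace ℝ (Fin n) → ℝ) where
  carrier := {f | ContDiff ℝ 1 f ∧ ∀ x, x ∉ Metric.closedBall (0 : EuclideanSpace ℝ (Fin n)) R → f x = 0}
  add_mem' := by
    rintro f g ⟨hf, hf0⟩ ⟨hg, hg0⟩
    exact ⟨hf.add hg, fun x hx => by simp [hf0 x hx, hg0 x hx]⟩
  zero_mem' := ⟨contDiff_const, fun x _ => rfl⟩
  smul_mem' := by
    rintro c f ⟨hf, hf0⟩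
    exact ⟨hf.const_smul c, fun x hx => by simp [hf0 x hx]⟩

theorem pm_concrete (n : ℕ) (μ : Measure (EuclideanSpace ℝ (Fin n))) [IsFiniteMeasure μ] (i : Fin n)
    (a C R τ : ℝ) (ha : 0 ≤ a) (hC : 0 ≤ C) (hτ : 0 < τ)
    (hμ : ∀ g : EuclideanSpace ℝ (Fin n) → ℝ, ContDiff ℝ 1 g → HasCompactSupport g → ∀ A B : ℝ, 0 ≤ A → 0 ≤ B →
      (∀ j x, |fderiv ℝ g x (EuclideanSpace.single j 1)| ≤ A) → (∀ x, |g x| ≤ B) →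
      |∫ x, fderiv ℝ g x (EuclideanSpace.single i 1) ∂μ| ≤ a * A + C * B) :
    ∃ (t : Finset (EuclideanSpace ℝ (Fin n))) (α : t × Fin n → ℝ) (β : t → ℝ),
      ∑ z, |α z| ≤ a ∧ ∑ z, |β z| ≤ C ∧ ∀ w : EuclideanSpace ℝ (Fin n) → ℝ, ContDiff ℝ 1 w →
        (∀ x, x ∉ Metric.closedBall (0 : EuclideanSpace ℝ (Fin n)) R → w x = 0) → ∀ ω : ℝ, 0 ≤ ω →
        (∀ j x y, dist x y ≤ τ → |fderiv ℝ w x (EuclideanSpace.single j 1) -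
          fderiv ℝ w y (EuclideanSpace.single j 1)| ≤ ω) →
        (∀ x y, dist x y ≤ τ → |w x - w y| ≤ ω) →
        |∫ x, fderiv ℝ w x (EuclideanSpace.single i 1) ∂μ -
          ∑ z : t × Fin n, α z * fderiv ℝ w z.1 (EuclideanSpace.single z.2 1) - ∑ z : t, β z * w z| ≤ (a + C) * ω := by
  classical
  have hcs : ∀ w : Wsub n R, HasCompactSupport (w : EuclideanSpace ℝ (Fin n) → ℝ) := fun w =>
    HasCompactSupport.intro (isCompact_closedBall _ R) (fun x hx => w.2.2 x hx)
  have hdf : ∀ w : Wsub n R, ∀ x, DifferentiableAt ℝ (w : EuclideanSpace ℝ (Fin n) → ℝ) x := fun w x =>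
    w.2.1.differentiable one_ne_zero x
  have hcd : ∀ (w : Wsub n R) (v : EuclideanSpace ℝ (Fin n)),
      Continuous fun x => fderiv ℝ (w : EuclideanSpace ℝ (Fin n) → ℝ) x v := fun w v =>
    (w.2.1.continuous_fderiv one_ne_zero).clm_apply continuous_const
  have hcdc : ∀ (w : Wsub n R) (v : EuclideanSpace ℝ (Fin n)),
      HasCompactSupport fun x => fderiv ℝ (w : EuclideanSpace ℝ (Fin n) → ℝ) x v := fun w v =>
    (hcs w).fderiv_apply ℝ v
  have hd0 : ∀ (w : Wsub n R) x, x ∉ Metric.closedBall (0 : EuclideanSpace ℝ (Fin n)) R →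
      fderiv ℝ (w : EuclideanSpace ℝ (Fin n) → ℝ) x = 0 := by
    intro w x hx
    have : (w : EuclideanSpace ℝ (Fin n) → ℝ) =ᶠ[𝓝 x] fun _ => 0 := by
      filter_upwards [Metric.isClosed_closedBall.isOpen_compl.mem_nhds hx] with y hy
      exact w.2.2 y hy
    rw [this.fderiv_eq]; simp
  have hintg : ∀ (w : Wsub n R) (v : EuclideanSpace ℝ (Fin n)),
      Integrable (fun x => fderiv ℝ (w : EuclideanSpace ℝ (Fin n) → ℝ) x v) μ := fun w v =>
    (hcd w v).integrable_of_hasCompactSupport (hcdc w v)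
  let D : Wsub n R →ₗ[ℝ] (Metric.closedBall (0 : EuclideanSpace ℝ (Fin n)) R × Fin n → ℝ) :=
    { toFun := fun w z => fderiv ℝ (w : EuclideanSpace ℝ (Fin n) → ℝ) z.1 (EuclideanSpace.single z.2 1)
      map_add' := fun f g => by
        ext z
        simp only [Submodule.coe_add, Pi.add_apply]
        rw [fderiv_add (hdf f _) (hdf g _)]; rfl
      map_smul' := fun c f => by
        ext z
        simp only [Submodule.coe_smul, Pi.smul_apply, RingHom.id_apply]
        rw [fderiv_const_smul (hdf f _)]; rfl }
  let G : Wsub n R →ₗ[ℝ] (Metric.closedBall (0 : EuclideanSpace ℝ (Fin n)) R → ℝ) :=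
    { toFun := fun w z => (w : EuclideanSpace ℝ (Fin n) → ℝ) z
      map_add' := fun f g => rfl
      map_smul' := fun c f => rfl }
  let ℓ : Wsub n R →ₗ[ℝ] ℝ :=
    { toFun := fun w => ∫ x, fderiv ℝ (w : EuclideanSpace ℝ (Fin n) → ℝ) x (EuclideanSpace.single i 1) ∂μ
      map_add' := fun f g => by
        rw [← integral_add (hintg f _) (hintg g _)]
        congr 1; ext x
        simp only [Submodule.coe_add]
        rw [fderiv_add (hdf f _) (hdf g _)]; rfl
      map_smul' := fun c f => by
        simp only [Submodule.coe_smul, smul_eq_mul, RingHom.id_apply]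
        rw [← integral_const_mul]
        congr 1; ext x
        rw [fderiv_const_smul (hdf f _)]; rfl }
  obtain ⟨t, htL, hcov⟩ := (isCompact_closedBall (0 : EuclideanSpace ℝ (Fin n)) R).elim_nhds_subcover
    (fun x => Metric.ball x τ) (fun x _ => Metric.ball_mem_nhds x hτ)
  have hcov' : ∀ x : Metric.closedBall (0 : EuclideanSpace ℝ (Fin n)) R, ∃ z : t, dist (x : EuclideanSpace ℝ (Fin n)) z ≤ τ := by
    intro x
    have := hcov x.2
    simp only [Set.mem_iUnion] at this
    obtain ⟨z, hz, h⟩ := this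
    exact ⟨⟨z, hz⟩, (Metric.mem_ball.1 h).le⟩
  choose q hq using hcov'
  obtain ⟨α, β, hα, hβ, hmain⟩ := pointmass (P := t × Fin n) (Q := t) D G ℓ a C ha hC
    (fun w => by
      have : ∀ j : Fin n, ∃ A : ℝ, ∀ x, |fderiv ℝ (w : EuclideanSpace ℝ (Fin n) → ℝ) x (EuclideanSpace.single j 1)| ≤ A := fun j =>
        (hcd w _).bounded_above_of_compact_support (hcdc w _)
      choose A hA using this
      refine ⟨∑ j, |A j|, fun z => ?_⟩
      exact ((hA z.2 z.1).trans (le_abs_self _)).trans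
        (Finset.single_le_sum (f := fun j => |A j|) (fun j _ => abs_nonneg _) (Finset.mem_univ z.2)))
    (fun w => by
      obtain ⟨A, hA⟩ := w.2.1.continuous.bounded_above_of_compact_support (hcs w)
      exact ⟨A, fun z => hA z⟩)
    (fun w A B hA hB h1 h2 => by
      refine (le_abs_self _).trans (hμ w w.2.1 (hcs w) A B hA hB ?_ ?_)
      · intro j x
        by_cases hx : x ∈ Metric.closedBall (0 : EuclideanSpace ℝ (Fin n)) R
        · exact h1 (⟨x, hx⟩, j)
        · rw [hd0 w x hx]; simpa using hA
      · intro x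
        by_cases hx : x ∈ Metric.closedBall (0 : EuclideanSpace ℝ (Fin n)) R
        · exact h2 ⟨x, hx⟩
        · rw [w.2.2 x hx]; simpa using hB)
    (fun z => (q z.1, z.2)) (fun z => (⟨z.1, htL z.1 z.1.2⟩, z.2)) q (fun z => ⟨z, htL z z.2⟩)
  refine ⟨t, α, β, hα, hβ, ?_⟩
  intro w hw hw0 ω hω h1 h2
  exact hmain ⟨w, hw, hw0⟩ ω hω (fun z => h1 z.2 _ _ (hq z.1)) (fun z => h2 _ _ (hq z))

end P4b

open MeasureTheory Filter Topology
open scoped ENNReal NNReal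

section CZ
variable {E : Type*} [NormedAddCommGroup E] [NormedSpace ℝ E] [FiniteDimensional ℝ E]
  [MeasurableSpace E] [BorelSpace E]

lemma cz_ball_cut [Nontrivial E] (vol : Measure E) [vol.IsAddHaarMeasure] (U : Set E)
    (hU : MeasurableSet U) (hUf : vol U ≠ ∞) (x : E) (a : ℝ) (ha : 0 ≤ a) :
    ∃ ρ : ℝ, 0 ≤ ρ ∧ vol.real (Metric.closedBall x ρ \ U) = a := by
  set F : ℝ → ℝ := fun ρ => vol.real (Metric.closedBall x ρ) with hF
  set f : ℝ → ℝ := fun ρ => vol.real (Metric.closedBall x ρ \ U) with hf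
  have hfin : ∀ ρ, vol (Metric.closedBall x ρ) ≠ ∞ := fun ρ => (isCompact_closedBall x ρ).measure_lt_top.ne
  have hfin' : ∀ ρ, vol (Metric.closedBall x ρ \ U) ≠ ∞ := fun ρ =>
    ((measure_mono Set.sdiff_subset).trans_lt (hfin ρ).lt_top).ne
  have hFv : ∀ ρ, 0 ≤ ρ → F ρ = ρ ^ (Module.finrank ℝ E) * vol.real (Metric.ball (0 : E) 1) := by
    intro ρ hρ
    simp only [hF, Measure.real, Measure.addHaar_closedBall vol x hρ, ENNReal.toReal_mul]
    rw [ENNReal.toReal_ofReal (by positivity)]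
  have hincr : ∀ ρ ρ', ρ ≤ ρ' → f ρ ≤ f ρ' ∧ f ρ' - f ρ ≤ F ρ' - F ρ := by
    intro ρ ρ' h
    have hsub : Metric.closedBall x ρ ⊆ Metric.closedBall x ρ' := Metric.closedBall_subset_closedBall h
    refine ⟨measureReal_mono (Set.sdiff_subset_sdiff_left hsub) (hfin' ρ'), ?_⟩
    have h1 : F ρ' = F ρ + vol.real (Metric.closedBall x ρ' \ Metric.closedBall x ρ) := by
      simp only [hF]
      rw [measureReal_sdiff hsub measurableSet_closedBall (hfin ρ')]; ring
    have h2 : f ρ' ≤ f ρ + vol.real (Metric.closedBall x ρ' \ Metric.closedBall x ρ) := by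
      refine le_trans (measureReal_mono ?_ ?_) (measureReal_union_le _ _)
      · intro y hy
        by_cases hy' : y ∈ Metric.closedBall x ρ
        · exact Or.inl ⟨hy', hy.2⟩
        · exact Or.inr ⟨hy.1, hy'⟩
      · exact measure_union_ne_top (hfin' ρ) ((measure_mono Set.sdiff_subset).trans_lt (hfin ρ').lt_top).ne
    linarith
  have hcont : ContinuousOn f (Set.Ici 0) := by
    have hFc : ContinuousOn F (Set.Ici 0) := by
      refine ContinuousOn.congr (f := fun ρ => ρ ^ (Module.finrank ℝ E) * vol.real (Metric.ball (0 : E) 1))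
        (by fun_prop) (fun ρ hρ => hFv ρ hρ)
    intro ρ hρ
    rw [Metric.continuousWithinAt_iff]
    intro ε hε
    obtain ⟨d, hd, H⟩ := Metric.continuousWithinAt_iff.1 (hFc ρ hρ) ε hε
    refine ⟨d, hd, fun ρ' hρ' hdist => lt_of_le_of_lt ?_ (H hρ' hdist)⟩
    rw [Real.dist_eq, Real.dist_eq]
    rcases le_total ρ ρ' with h | h
    · obtain ⟨h1, h2⟩ := hincr _ _ h
      rw [abs_of_nonneg (by linarith)]
      exact h2.trans (le_abs_self _)
    · obtain ⟨h1, h2⟩ := hincr _ _ h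
      rw [abs_of_nonpos (by linarith), abs_sub_comm]
      exact le_trans (by linarith) (le_abs_self _)
  have hf0 : f 0 = 0 := by
    have : f 0 ≤ F 0 := measureReal_mono Set.sdiff_subset (hfin 0)
    rw [hFv 0 le_rfl, zero_pow (Module.finrank_pos).ne', zero_mul] at this
    exact le_antisymm this measureReal_nonneg
  have hv : 0 < vol.real (Metric.ball (0 : E) 1) :=
    ENNReal.toReal_pos (Metric.measure_ball_pos vol 0 one_pos).ne' measure_ball_lt_top.ne
  obtain ⟨R, hR0, hR⟩ : ∃ R, 0 ≤ R ∧ a ≤ f R := by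
    set V := vol.real (Metric.ball (0 : E) 1)
    set R := 1 + (a + vol.real U) / V with hRdef
    have hR1 : 1 ≤ R := by
      have : 0 ≤ (a + vol.real U) / V := div_nonneg (add_nonneg ha measureReal_nonneg) hv.le
      linarith
    refine ⟨R, by linarith, ?_⟩
    have h1 : F R ≤ f R + vol.real U := by
      refine le_trans (measureReal_mono ?_ (measure_union_ne_top (hfin' R) hUf)) (measureReal_union_le _ _)
      intro y hy
      by_cases hy' : y ∈ U
      · exact Or.inr hy'
      · exact Or.inl ⟨hy, hy'⟩
    have h2 : a + vol.real U ≤ F R := by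
      rw [hFv R (by linarith)]
      have : R ≤ R ^ (Module.finrank ℝ E) := le_self_pow₀ hR1 (Module.finrank_pos).ne'
      calc a + vol.real U = ((a + vol.real U) / V) * V := by field_simp
        _ ≤ R * V := by gcongr; linarith
        _ ≤ _ := by gcongr
    linarith
  obtain ⟨ρ, hρ, hρ'⟩ := intermediate_value_Icc hR0 (hcont.mono Set.Icc_subset_Ici_self)
    (show a ∈ Set.Icc (f 0) (f R) from ⟨by rw [hf0]; exact ha, hR⟩)
  exact ⟨ρ, hρ.1, hρ'⟩

lemma cz_sets [Nontrivial E] (vol : Measure E) [vol.IsAddHaarMeasure] {ι : Type*} [DecidableEq ι]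
    (x : ι → E) (a : ι → ℝ) (ha : ∀ j, 0 ≤ a j) (S : Finset ι) :
    ∃ (ρ : ι → ℝ) (A : ι → Set E), (∀ j ∈ S, 0 ≤ ρ j) ∧ (∀ j ∈ S, MeasurableSet (A j)) ∧
      (∀ j ∈ S, vol (A j) ≠ ∞ ∧ vol.real (A j) = a j) ∧
      (∀ j ∈ S, A j ⊆ Metric.closedBall (x j) (ρ j)) ∧
      (∀ j ∈ S, Metric.closedBall (x j) (ρ j) ⊆ ⋃ i ∈ S, A i) ∧
      (∀ i ∈ S, ∀ j ∈ S, i ≠ j → Disjoint (A i) (A j)) := by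
  induction S using Finset.induction_on with
  | empty => exact ⟨0, fun _ => ∅, by simp⟩
  | insert j S hj ih =>
    obtain ⟨ρ, A, h1, h2, h3, h4, h5, h6⟩ := ih
    set U := ⋃ i ∈ S, A i with hU
    have hUm : MeasurableSet U := Finset.measurableSet_biUnion S h2
    have hUf : vol U ≠ ∞ := (measure_biUnion_lt_top S.finite_toSet (fun i hi => (h3 i hi).1.lt_top)).ne
    obtain ⟨r, hr, hra⟩ := cz_ball_cut vol U hUm hUf (x j) (a j) (ha j)
    have hne : ∀ i ∈ S, i ≠ j := fun i hi h => hj (h ▸ hi)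
    refine ⟨Function.update ρ j r, Function.update A j (Metric.closedBall (x j) r \ U), ?_, ?_, ?_, ?_, ?_, ?_⟩
    · intro i hi
      rcases Finset.mem_insert.1 hi with rfl | hi
      · simpa
      · rw [Function.update_of_ne (hne i hi)]; exact h1 i hi
    · intro i hi
      rcases Finset.mem_insert.1 hi with rfl | hi
      · simpa using measurableSet_closedBall.diff hUm
      · rw [Function.update_of_ne (hne i hi)]; exact h2 i hi
    · intro i hi
      rcases Finset.mem_insert.1 hi with rfl | hi
      · simp only [Function.update_self]
        exact ⟨((measure_mono Set.sdiff_subset).trans_lt (isCompact_closedBall _ r).measure_lt_top).ne, hra⟩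
      · rw [Function.update_of_ne (hne i hi)]; exact h3 i hi
    · intro i hi
      rcases Finset.mem_insert.1 hi with rfl | hi
      · simp only [Function.update_self]; exact Set.sdiff_subset
      · rw [Function.update_of_ne (hne i hi), Function.update_of_ne (hne i hi)]; exact h4 i hi
    · have hUU : (⋃ i ∈ insert j S, Function.update A j (Metric.closedBall (x j) r \ U) i)
          = (Metric.closedBall (x j) r \ U) ∪ U := by
        rw [Finset.set_biUnion_insert, Function.update_self, hU]
        congr 1
        refine Set.iUnion₂_congr fun i hi => ?_
        rw [Function.update_of_ne (hne i hi)]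
      rw [hUU]
      intro i hi
      rcases Finset.mem_insert.1 hi with rfl | hi
      · simp only [Function.update_self]
        intro y hy
        by_cases hy' : y ∈ U
        · exact Or.inr hy'
        · exact Or.inl ⟨hy, hy'⟩
      · rw [Function.update_of_ne (hne i hi)]; exact (h5 i hi).trans Set.subset_union_right
    · have key : ∀ i ∈ S, Disjoint (A i) (Metric.closedBall (x j) r \ U) := fun i hi =>
        (Set.disjoint_sdiff_right).mono_left (Set.subset_biUnion_of_mem (u := A) hi)
      intro i hi i' hi' hii
      rcases Finset.mem_insert.1 hi with h1i | h1i <;> rcases Finset.mem_insert.1 hi' with h2i | h2i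
      · exact absurd (h1i.trans h2i.symm) hii
      · rw [h1i, Function.update_self, Function.update_of_ne (hne i' h2i)]; exact (key i' h2i).symm
      · rw [h2i, Function.update_self, Function.update_of_ne (hne i h1i)]; exact (key i h1i)
      · rw [Function.update_of_ne (hne i h1i), Function.update_of_ne (hne i' h2i)]
        exact h6 i h1i i' h2i hii
end CZ

open MeasureTheory Filter Topology
open scoped ENNReal NNReal

section CZ2
variable {E : Type*} [NormedAddCommGroup E] [NormedSpace ℝ E] [FiniteDimensional ℝ E]
  [MeasurableSpace E] [BorelSpace E]

lemma cz_vitali (vol : Measure E) [vol.IsAddHaarMeasure] {ι : Type*} [Fintype ι]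
    (x : ι → E) (ρ : ι → ℝ) (hρ : ∀ j, 0 ≤ ρ j) (V : Set E) 
    (hV : ∀ j, Metric.closedBall (x j) (ρ j) ⊆ V) :
    vol (⋃ j, Metric.closedBall (x j) (2 * ρ j)) ≤ ENNReal.ofReal (10 ^ Module.finrank ℝ E) * vol V := by
  classical
  obtain ⟨u, -, hu1, hu2⟩ := Vitali.exists_disjoint_subfamily_covering_enlargement_closedBall
    (Set.univ : Set ι) x (fun j => 2 * ρ j) (∑ j, 2 * ρ j)
    (fun a _ => Finset.single_le_sum (f := fun j => 2 * ρ j) (fun j _ => by linarith [hρ j]) (Finset.mem_univ a))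
    5 (by norm_num)
  have hsub : (⋃ j, Metric.closedBall (x j) (2 * ρ j)) ⊆ ⋃ b ∈ u.toFinset, Metric.closedBall (x b) (10 * ρ b) := by
    refine Set.iUnion_subset fun j => ?_
    obtain ⟨b, hb, h⟩ := hu2 j trivial
    refine h.trans ?_
    rw [show 5 * (2 * ρ b) = 10 * ρ b by ring]
    exact Set.subset_biUnion_of_mem (u := fun b => Metric.closedBall (x b) (10 * ρ b)) (Set.mem_toFinset.2 hb)
  refine (measure_mono hsub).trans ((measure_biUnion_finset_le _ _).trans ?_)
  calc ∑ b ∈ u.toFinset, vol (Metric.closedBall (x b) (10 * ρ b))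
      = ∑ b ∈ u.toFinset, ENNReal.ofReal (10 ^ Module.finrank ℝ E) * vol (Metric.closedBall (x b) (ρ b)) := by
        apply Finset.sum_congr rfl
        intro b _
        rw [Measure.addHaar_closedBall vol _ (by linarith [hρ b]), Measure.addHaar_closedBall vol _ (hρ b),
          mul_pow, ENNReal.ofReal_mul (by positivity), mul_assoc]
    _ = ENNReal.ofReal (10 ^ Module.finrank ℝ E) * vol (⋃ b ∈ u.toFinset, Metric.closedBall (x b) (ρ b)) := by
        rw [← Finset.mul_sum, measure_biUnion_finset]
        · intro i hi j hj hij
          refine (hu1 (by simpa using hi) (by simpa using hj) hij).mono ?_ ?_ <;>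
          exact Metric.closedBall_subset_closedBall (by linarith [hρ i, hρ j])
        · intro b _; exact measurableSet_closedBall
    _ ≤ _ := by
        gcongr
        exact Set.iUnion₂_subset fun b _ => hV b

theorem cz_main [Nontrivial E] (vol : Measure E) [vol.IsAddHaarMeasure] (k : E → ℝ)
    (hk : Continuous k) (hkc : HasCompactSupport k) (C : ℝ) (hC : 0 ≤ C)
    (hL2 : ∀ σ : E → ℝ, Measurable σ → (∃ B, ∀ x, |σ x| ≤ B) → HasCompactSupport σ →
      ∫⁻ x, ‖∫ y, k (x - y) * σ y ∂vol‖ₑ ^ 2 ∂vol ≤ ENNReal.ofReal C * ∫⁻ x, ‖σ x‖ₑ ^ 2 ∂vol)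
    (hH : ∀ (r : ℝ) (w : E), 0 ≤ r → ‖w‖ ≤ r / 2 →
      ∫⁻ x in {x | r ≤ ‖x‖}, ‖k x - k (x - w)‖ₑ ∂vol ≤ ENNReal.ofReal C)
    {ι : Type*} [Fintype ι] (x : ι → E) (α : ι → ℝ) (lam : ℝ) (hlam : 0 < lam) :
    ∃ Ω : Set E, MeasurableSet Ω ∧
      vol Ω ≤ ENNReal.ofReal (10 ^ Module.finrank ℝ E * (∑ j, |α j|) / lam) ∧
      ∀ Q : Set E, MeasurableSet Q → ∫⁻ z in Q \ Ω, ‖∑ j, α j * k (z - x j)‖ₑ ∂vol ≤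
        ENNReal.ofReal lam * vol Q + ENNReal.ofReal (2 * C * ∑ j, |α j|) := by
  classical
  obtain ⟨ρ, A, h1, h2, h3, h4, h5, h6⟩ := cz_sets vol x (fun j => |α j| / lam)
    (fun j => by positivity) Finset.univ
  simp only [Finset.mem_univ, true_imp_iff, forall_const] at h1 h2 h3 h4 h5 h6
  have hAvol : ∀ j, vol (A j) = ENNReal.ofReal (|α j| / lam) := fun j => by
    rw [← (h3 j).2, Measure.real, ENNReal.ofReal_toReal (h3 j).1]
  set sg : ι → ℝ := fun j => SignType.sign (α j) with hsg
  have hsg1 : ∀ j, |sg j| ≤ 1 := fun j => by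
    simp only [hsg]
    rcases lt_trichotomy (α j) 0 with h | h | h <;> simp [h]
  have hα : ∀ j, sg j * lam * vol.real (A j) = α j := fun j => by
    rw [(h3 j).2, mul_assoc, mul_div_cancel₀ _ hlam.ne']
    exact sign_mul_abs _
  have hS : 0 ≤ ∑ j, |α j| := Finset.sum_nonneg fun j _ => abs_nonneg _
  set Ω := ⋃ j, Metric.closedBall (x j) (2 * ρ j) with hΩ
  have hΩm : MeasurableSet Ω := MeasurableSet.iUnion fun j => measurableSet_closedBall
  set σ : E → ℝ := fun y => ∑ j, (A j).indicator (fun _ => sg j * lam) y with hσ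
  have hσm : Measurable σ := Finset.measurable_fun_sum _ fun j _ => measurable_const.indicator (h2 j)
  have hkint : ∀ z : E, ∀ S : Set E, IntegrableOn (fun y => k (z - y)) S vol := fun z S => by
    have : Integrable k vol := hk.integrable_of_hasCompactSupport hkc
    exact (this.comp_sub_left z).integrableOn
  -- sup bound for σ
  have hσ0 : ∀ y, (∀ j, y ∉ A j) → σ y = 0 := fun y hy => by
    simp only [hσ]
    exact Finset.sum_eq_zero fun j _ => Set.indicator_of_notMem (hy j) _
  have hσj : ∀ j, ∀ y ∈ A j, σ y = sg j * lam := fun j y hy => by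
    simp only [hσ]
    rw [Finset.sum_eq_single j]
    · rw [Set.indicator_of_mem hy]
    · intro i _ hij
      exact Set.indicator_of_notMem (fun hi => Set.disjoint_left.1 (h6 i j hij) hi hy) _
    · simp
  have hσb : ∀ y, ‖σ y‖ₑ ^ 2 ≤ ∑ j, (A j).indicator (fun _ => ENNReal.ofReal (lam ^ 2)) y := by
    intro y
    by_cases hy : ∃ j, y ∈ A j
    · obtain ⟨j, hj⟩ := hy
      refine le_trans ?_ (Finset.single_le_sum (f := fun j => (A j).indicator (fun _ => ENNReal.ofReal (lam ^ 2)) y)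
        (fun _ _ => zero_le) (Finset.mem_univ j))
      simp only [Set.indicator_of_mem hj]
      rw [hσj j y hj, Real.enorm_eq_ofReal_abs, ← ENNReal.ofReal_pow (abs_nonneg _)]
      apply ENNReal.ofReal_le_ofReal
      rw [sq_abs, mul_pow]
      have : (sg j) ^ 2 ≤ 1 := by rw [← sq_abs]; exact pow_le_one₀ (abs_nonneg _) (hsg1 j)
      nlinarith [sq_nonneg lam]
    · push Not at hy
      rw [hσ0 y hy]; simp
  have hσ2 : ∫⁻ y, ‖σ y‖ₑ ^ 2 ∂vol ≤ ENNReal.ofReal (lam * ∑ j, |α j|) := by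
    refine (lintegral_mono hσb).trans ?_
    rw [lintegral_finsetSum _ (fun j _ => measurable_const.indicator (h2 j))]
    simp_rw [fun j => lintegral_indicator_const (μ := vol) (h2 j) (ENNReal.ofReal (lam ^ 2)), hAvol]
    rw [Finset.mul_sum, ENNReal.ofReal_sum_of_nonneg (fun j _ => by positivity)]
    apply Finset.sum_le_sum
    intro j _
    rw [← ENNReal.ofReal_mul (by positivity)]
    apply ENNReal.ofReal_le_ofReal
    rw [show lam ^ 2 * (|α j| / lam) = lam * |α j| by field_simp]
  have hσc : HasCompactSupport σ := by
    apply HasCompactSupport.intro (K := ⋃ j, Metric.closedBall (x j) (ρ j))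
      (isCompact_iUnion fun j => isCompact_closedBall _ _)
    intro y hy
    exact hσ0 y fun j hj => hy (Set.mem_iUnion.2 ⟨j, h4 j hj⟩)
  have hσB : ∃ B, ∀ y, |σ y| ≤ B := by
    refine ⟨∑ j, |sg j * lam|, fun y => (Finset.abs_sum_le_sum_abs _ _).trans (Finset.sum_le_sum fun j _ => ?_)⟩
    by_cases hy : y ∈ A j
    · simp [hy]
    · simp only [hy, not_false_eq_true, Set.indicator_of_notMem, abs_zero]; positivity
  set T : E → ℝ := fun z => ∫ y, k (z - y) * σ y ∂vol with hT
  have hTeq : ∀ z, T z = ∑ j, sg j * lam * ∫ y in A j, k (z - y) ∂vol := by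
    intro z
    simp only [hT, hσ, Finset.mul_sum]
    rw [integral_finsetSum]
    · apply Finset.sum_congr rfl
      intro j _
      rw [← integral_const_mul, ← integral_indicator (h2 j)]
      congr 1; funext y
      by_cases hy : y ∈ A j <;> simp [hy]; ring
    · intro j _
      have h0 : IntegrableOn (fun y => k (z - y) * (sg j * lam)) (A j) vol := (hkint z (A j)).mul_const _
      have := h0.integrable_indicator (h2 j)
      refine this.congr (Eventually.of_forall fun y => ?_)
      by_cases hy : y ∈ A j <;> simp [hy]
  set D : ι → E → ℝ := fun j z => ∫ y in A j, (k (z - x j) - k (z - y)) ∂vol with hD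
  have hdec : ∀ z, ∑ j, α j * k (z - x j) = T z + ∑ j, sg j * lam * D j z := by
    intro z
    rw [hTeq, ← Finset.sum_add_distrib]
    apply Finset.sum_congr rfl
    intro j _
    have hi : IntegrableOn (fun _ : E => k (z - x j)) (A j) vol := integrableOn_const (h3 j).1
    simp only [hD]
    rw [integral_sub hi (hkint z (A j)), setIntegral_const, smul_eq_mul]
    linear_combination (-(k (z - x j))) * hα j
  have hDbound : ∀ j, ∫⁻ z in Ωᶜ, ‖D j z‖ₑ ∂vol ≤ ENNReal.ofReal (C * (|α j| / lam)) := by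
    intro j
    have hsub : Ωᶜ ⊆ {z | 2 * ρ j ≤ ‖z - x j‖} := by
      intro z hz
      simp only [hΩ, Set.mem_compl_iff, Set.mem_iUnion, not_exists] at hz
      have := hz j
      rw [Metric.mem_closedBall, not_le, dist_eq_norm] at this
      exact this.le
    have hmeas : Measurable (Function.uncurry fun z y => ‖k (z - x j) - k (z - y)‖ₑ) := by
      apply Continuous.measurable
      apply Continuous.enorm
      exact (hk.comp (continuous_fst.sub continuous_const)).sub (hk.comp (continuous_fst.sub continuous_snd))
    calc ∫⁻ z in Ωᶜ, ‖D j z‖ₑ ∂vol ≤ ∫⁻ z in {z | 2 * ρ j ≤ ‖z - x j‖}, ‖D j z‖ₑ ∂vol :=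
          lintegral_mono_set hsub
      _ ≤ ∫⁻ z in {z | 2 * ρ j ≤ ‖z - x j‖}, ∫⁻ y in A j, ‖k (z - x j) - k (z - y)‖ₑ ∂vol ∂vol :=
          lintegral_mono fun z => enorm_integral_le_lintegral_enorm _
      _ = ∫⁻ y in A j, ∫⁻ z in {z | 2 * ρ j ≤ ‖z - x j‖}, ‖k (z - x j) - k (z - y)‖ₑ ∂vol ∂vol :=
          lintegral_lintegral_swap hmeas.aemeasurable
      _ ≤ ∫⁻ y in A j, ENNReal.ofReal C ∂vol := by
          apply setLIntegral_mono measurable_const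
          intro y hy
          have hw : ‖y - x j‖ ≤ 2 * ρ j / 2 := by
            have := h4 j hy
            rw [Metric.mem_closedBall, dist_eq_norm] at this
            linarith
          have := hH (2 * ρ j) (y - x j) (by linarith [h1 j]) hw
          refine le_of_eq_of_le ?_ this
          have hm1 : MeasurableSet {z : E | 2 * ρ j ≤ ‖z - x j‖} :=
            (isClosed_le continuous_const (by fun_prop)).measurableSet
          have hm2 : MeasurableSet {z : E | 2 * ρ j ≤ ‖z‖} :=
            (isClosed_le continuous_const (by fun_prop)).measurableSet
          rw [← lintegral_indicator hm1, ← lintegral_indicator hm2,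
            ← lintegral_sub_right_eq_self (Set.indicator {z : E | 2 * ρ j ≤ ‖z‖}
              fun z => ‖k z - k (z - (y - x j))‖ₑ) (x j)]
          congr 1; funext z
          simp only [Set.indicator, Set.mem_ofPred_eq]
          congr 2
          rw [show z - x j - (y - x j) = z - y by abel]
      _ = ENNReal.ofReal (C * (|α j| / lam)) := by
          rw [setLIntegral_const, hAvol, ENNReal.ofReal_mul hC]
  refine ⟨Ω, hΩm, ?_, fun Q hQ => ?_⟩
  · refine (cz_vitali vol x ρ h1 (⋃ j ∈ Finset.univ, A j) (fun j => by simpa using h5 j)).trans ?_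
    refine (mul_le_mul_right (measure_biUnion_finset_le _ _) _).trans ?_
    simp_rw [hAvol]
    rw [← ENNReal.ofReal_sum_of_nonneg (fun j _ => by positivity), ← ENNReal.ofReal_mul (by positivity),
      ← Finset.sum_div, mul_div_assoc]
  · have hpt : ∀ z, ‖∑ j, α j * k (z - x j)‖ₑ ≤ (ENNReal.ofReal lam + ENNReal.ofReal lam⁻¹ * ‖T z‖ₑ ^ 2)
        + ∑ j, ENNReal.ofReal lam * ‖D j z‖ₑ := by
      intro z
      rw [hdec]
      refine (enorm_add_le _ _).trans (add_le_add ?_ ?_)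
      · rw [Real.enorm_eq_ofReal_abs, ← ENNReal.ofReal_pow (abs_nonneg _), ← ENNReal.ofReal_mul (by positivity),
          ← ENNReal.ofReal_add (by positivity) (by positivity)]
        apply ENNReal.ofReal_le_ofReal
        rw [← sub_nonneg]
        have : lam + lam⁻¹ * |T z| ^ 2 - |T z| = lam⁻¹ * ((lam - |T z| / 2) ^ 2 + 3 / 4 * |T z| ^ 2) := by
          field_simp; ring
        rw [this]; positivity
      · refine (enorm_sum_le _ _).trans (Finset.sum_le_sum fun j _ => ?_)
        rw [enorm_mul]
        gcongr
        rw [Real.enorm_eq_ofReal_abs]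
        apply ENNReal.ofReal_le_ofReal
        rw [abs_mul, abs_of_pos hlam]
        nlinarith [hsg1 j]
    have hTm : Measurable fun z => ‖T z‖ₑ := by
      apply Measurable.enorm
      simp only [hT]
      apply StronglyMeasurable.measurable
      apply StronglyMeasurable.integral_prod_right' (f := fun p : E × E => k (p.1 - p.2) * σ p.2)
      apply Measurable.stronglyMeasurable
      exact (hk.comp (continuous_fst.sub continuous_snd)).measurable.mul (hσm.comp measurable_snd)
    have hDm : ∀ j, Measurable fun z => ‖D j z‖ₑ := by
      intro j
      apply Measurable.enorm
      simp only [hD]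
      apply StronglyMeasurable.measurable
      apply StronglyMeasurable.integral_prod_right' (f := fun p : E × E => k (p.1 - x j) - k (p.1 - p.2))
      apply Continuous.stronglyMeasurable
      exact (hk.comp (continuous_fst.sub continuous_const)).sub (hk.comp (continuous_fst.sub continuous_snd))
    calc ∫⁻ z in Q \ Ω, ‖∑ j, α j * k (z - x j)‖ₑ ∂vol
        ≤ ∫⁻ z in Q \ Ω, ((ENNReal.ofReal lam + ENNReal.ofReal lam⁻¹ * ‖T z‖ₑ ^ 2)
        + ∑ j, ENNReal.ofReal lam * ‖D j z‖ₑ) ∂vol := lintegral_mono hpt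
      _ = (∫⁻ z in Q \ Ω, ENNReal.ofReal lam ∂vol) + (∫⁻ z in Q \ Ω, ENNReal.ofReal lam⁻¹ * ‖T z‖ₑ ^ 2 ∂vol)
          + ∑ j, ENNReal.ofReal lam * ∫⁻ z in Q \ Ω, ‖D j z‖ₑ ∂vol := by
          rw [lintegral_add_left, lintegral_add_left measurable_const, lintegral_finsetSum]
          · simp_rw [fun j => lintegral_const_mul (μ := vol.restrict (Q \ Ω)) (ENNReal.ofReal lam) (hDm j)]
          · intro j _; exact (hDm j).const_mul _
          · exact measurable_const.add ((hTm.pow_const 2).const_mul _)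
      _ ≤ ENNReal.ofReal lam * vol Q + ENNReal.ofReal (C * ∑ j, |α j|)
          + ENNReal.ofReal (C * ∑ j, |α j|) := by
          gcongr
          · rw [setLIntegral_const]; gcongr; exact Set.sdiff_subset
          · rw [lintegral_const_mul _ (hTm.pow_const 2)]
            calc ENNReal.ofReal lam⁻¹ * ∫⁻ z in Q \ Ω, ‖T z‖ₑ ^ 2 ∂vol
                ≤ ENNReal.ofReal lam⁻¹ * (ENNReal.ofReal C * ENNReal.ofReal (lam * ∑ j, |α j|)) := by
                  gcongr
                  exact (setLIntegral_le_lintegral _ _).trans ((hL2 σ hσm hσB hσc).trans (by gcongr))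
              _ = _ := by
                  rw [← ENNReal.ofReal_mul hC, ← ENNReal.ofReal_mul (by positivity)]
                  congr 1; field_simp
          · rw [Finset.mul_sum, ENNReal.ofReal_sum_of_nonneg (fun j _ => by positivity)]
            apply Finset.sum_le_sum
            intro j _
            calc ENNReal.ofReal lam * ∫⁻ z in Q \ Ω, ‖D j z‖ₑ ∂vol
                ≤ ENNReal.ofReal lam * ENNReal.ofReal (C * (|α j| / lam)) := by
                  gcongr
                  exact (lintegral_mono_set (fun z hz => hz.2)).trans (hDbound j)
              _ = _ := by
                  rw [← ENNReal.ofReal_mul hlam.le]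
                  congr 1; field_simp
      _ = _ := by
          rw [add_assoc, ← ENNReal.ofReal_add (by positivity) (by positivity)]
          congr 2; ring
end CZ2

open MeasureTheory Filter Topology
open scoped ENNReal NNReal

section Kernel

lemma radial_q (n : ℕ) : ∃ q : ℝ → ℝ, (∀ ρ, 0 ≤ ρ → ContDiffAt ℝ 3 q ρ) ∧
    (∀ ρ, 1 ≤ ρ → q ρ = ρ ^ (-(n : ℝ) / 2)) ∧ 0 < q 0 ∧
    (∀ ρ, 0 ≤ ρ → 0 ≤ n * q ρ + 2 * ρ * deriv q ρ) ∧
    (∀ ρ, 1 ≤ ρ → n * q ρ + 2 * ρ * deriv q ρ = 0) := by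
  set h : ℝ → ℝ := fun ρ => ρ + expNegInvGlue (1 - ρ) with hh
  have hpos : ∀ ρ, 0 ≤ ρ → 0 < h ρ := by
    intro ρ hρ
    rcases hρ.eq_or_lt with h0 | h0
    · simp only [hh, ← h0]
      have := expNegInvGlue.pos_of_pos (x := 1 - 0) (by norm_num)
      linarith
    · have := expNegInvGlue.nonneg (1 - ρ)
      simp only [hh]; linarith
  have hE : ContDiff ℝ 3 expNegInvGlue := expNegInvGlue.contDiff (n := 3)
  have hsm : ContDiff ℝ 3 h := contDiff_id.add (hE.comp (contDiff_const.sub contDiff_id))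
  have hd : ∀ ρ, HasDerivAt h (1 - deriv expNegInvGlue (1 - ρ)) ρ := by
    intro ρ
    have h1 : HasDerivAt expNegInvGlue (deriv expNegInvGlue (1 - ρ)) (1 - ρ) :=
      (hE.differentiable (by norm_num) _).hasDerivAt
    have h2 := h1.comp ρ ((hasDerivAt_id ρ).const_sub 1)
    have h3 := (hasDerivAt_id ρ).add h2
    have e : 1 - deriv expNegInvGlue (1 - ρ) = 1 + deriv expNegInvGlue (1 - ρ) * -1 := by ring
    rw [e]
    exact h3
  have hqd : ∀ ρ, 0 ≤ ρ → HasDerivAt (fun ρ => h ρ ^ (-(n : ℝ) / 2))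
      ((1 - deriv expNegInvGlue (1 - ρ)) * (-(n : ℝ) / 2) * h ρ ^ (-(n : ℝ) / 2 - 1)) ρ := fun ρ hρ =>
    (hd ρ).rpow_const (Or.inl (hpos ρ hρ).ne')
  have key : ∀ ρ, 0 ≤ ρ → n * h ρ ^ (-(n : ℝ) / 2) + 2 * ρ * deriv (fun ρ => h ρ ^ (-(n : ℝ) / 2)) ρ
      = n * h ρ ^ (-(n : ℝ) / 2 - 1) * (expNegInvGlue (1 - ρ) + ρ * deriv expNegInvGlue (1 - ρ)) := by
    intro ρ hρ
    rw [(hqd ρ hρ).deriv]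
    have : h ρ ^ (-(n : ℝ) / 2) = h ρ ^ (-(n : ℝ) / 2 - 1) * h ρ := by
      rw [← Real.rpow_add_one (hpos ρ hρ).ne']; congr 1; ring
    rw [this]
    simp only [hh]
    ring
  refine ⟨fun ρ => h ρ ^ (-(n : ℝ) / 2), ?_, ?_, ?_, ?_, ?_⟩
  · intro ρ hρ
    exact (hsm.contDiffAt).rpow_const_of_ne (hpos ρ hρ).ne'
  · intro ρ hρ
    have : h ρ = ρ := by simp only [hh]; rw [expNegInvGlue.zero_of_nonpos (by linarith)]; ring
    simp only [this]
  · exact Real.rpow_pos_of_pos (hpos 0 le_rfl) _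
  · intro ρ hρ
    rw [key ρ hρ]
    have h1 := expNegInvGlue.nonneg (1 - ρ)
    have h2 : 0 ≤ deriv expNegInvGlue (1 - ρ) := expNegInvGlue.monotone.deriv_nonneg
    have h3 := Real.rpow_pos_of_pos (hpos ρ hρ) (-(n : ℝ) / 2 - 1)
    positivity
  · intro ρ hρ
    rw [key ρ (by linarith)]
    have h1 : expNegInvGlue (1 - ρ) = 0 := expNegInvGlue.zero_of_nonpos (by linarith)
    have h2 : deriv expNegInvGlue (1 - ρ) = 0 := by
      apply IsLocalMin.deriv_eq_zero
      refine Eventually.of_forall fun t => ?_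
      rw [h1]; exact expNegInvGlue.nonneg t
    rw [h1, h2]; ring

lemma psi_exists (n : ℕ) (hn : 0 < n) : ∃ (Ψ : Fin n → EuclideanSpace ℝ (Fin n) → ℝ)
    (φ : EuclideanSpace ℝ (Fin n) → ℝ),
    (∀ i, ContDiff ℝ 3 (Ψ i)) ∧ (∀ i x, 1 ≤ ‖x‖ → Ψ i x = 0) ∧
    (∀ i j x, fderiv ℝ (Ψ i) x (EuclideanSpace.single j 1) = fderiv ℝ (Ψ j) x (EuclideanSpace.single i 1)) ∧
    (∀ x, ∑ i, fderiv ℝ (Ψ i) x (EuclideanSpace.single i 1) = 2 ^ n * φ ((2 : ℝ) • x) - φ x) ∧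
    Continuous φ ∧ (∀ x, 0 ≤ φ x) ∧ (∀ x, 1 ≤ ‖x‖ → φ x = 0) ∧ 0 < φ 0 := by
  obtain ⟨q, hq1, hq2, hq3, hq4, hq5⟩ := radial_q n
  let X := EuclideanSpace ℝ (Fin n)
  have hn2 : ContDiff ℝ 3 (fun x : EuclideanSpace ℝ (Fin n) => ‖x‖ ^ 2) := contDiff_norm_sq ℝ
  let K : Fin n → EuclideanSpace ℝ (Fin n) → ℝ := fun i x => q (‖x‖ ^ 2) * x i
  have hcoord : ∀ i : Fin n, ContDiff ℝ 3 (fun x : EuclideanSpace ℝ (Fin n) => x i) := fun i =>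
    (EuclideanSpace.proj i : EuclideanSpace ℝ (Fin n) →L[ℝ] ℝ).contDiff
  have hqs : ContDiff ℝ 3 (fun x : EuclideanSpace ℝ (Fin n) => q (‖x‖ ^ 2)) :=
    contDiff_iff_contDiffAt.2 fun x => (hq1 _ (by positivity)).comp x hn2.contDiffAt
  have hK : ∀ i, ContDiff ℝ 3 (K i) := fun i => hqs.mul (hcoord i)
  have hdq : ∀ (x v : EuclideanSpace ℝ (Fin n)), fderiv ℝ (fun x : EuclideanSpace ℝ (Fin n) => q (‖x‖ ^ 2)) x v
      = deriv q (‖x‖ ^ 2) * (2 * inner ℝ x v) := by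
    intro x v
    have h1 : HasDerivAt q (deriv q (‖x‖ ^ 2)) (‖x‖ ^ 2) :=
      ((hq1 _ (by positivity)).differentiableAt (by norm_num)).hasDerivAt
    have h2 := (hasStrictFDerivAt_norm_sq x).hasFDerivAt
    have h3 : fderiv ℝ (fun x : EuclideanSpace ℝ (Fin n) => q (‖x‖ ^ 2)) x = _ := (h1.comp_hasFDerivAt x h2).fderiv
    rw [h3]
    simp
  have hKd : ∀ (i : Fin n) (x v : EuclideanSpace ℝ (Fin n)), fderiv ℝ (K i) x v
      = q (‖x‖ ^ 2) * v i + x i * (deriv q (‖x‖ ^ 2) * (2 * inner ℝ x v)) := by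
    intro i x v
    have h1 := (hqs.differentiable (by norm_num) x).hasFDerivAt
    have h2 := (EuclideanSpace.proj i : EuclideanSpace ℝ (Fin n) →L[ℝ] ℝ).hasFDerivAt (x := x)
    have h3 : fderiv ℝ (K i) x = _ := (h1.mul h2).fderiv
    rw [h3]
    simp [hdq]
  have hKij : ∀ (i j : Fin n) (x : EuclideanSpace ℝ (Fin n)), fderiv ℝ (K i) x (EuclideanSpace.single j 1)
      = q (‖x‖ ^ 2) * (if i = j then 1 else 0) + 2 * deriv q (‖x‖ ^ 2) * (x i * x j) := by
    intro i j x
    rw [hKd]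
    rw [EuclideanSpace.inner_single_right]
    simp [Pi.single_apply]
    ring
  let φ : EuclideanSpace ℝ (Fin n) → ℝ := fun x => n * q (‖x‖ ^ 2) + 2 * ‖x‖ ^ 2 * deriv q (‖x‖ ^ 2)
  have hdiv : ∀ x, ∑ i, fderiv ℝ (K i) x (EuclideanSpace.single i 1) = φ x := by
    intro x
    simp only [hKij, if_true, mul_one, Finset.sum_add_distrib, ← Finset.mul_sum]
    simp only [φ, Finset.sum_const, Finset.card_univ, Fintype.card_fin, nsmul_eq_mul]
    rw [EuclideanSpace.norm_sq_eq x]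
    simp only [Real.norm_eq_abs, sq_abs, ← sq]
    ring
  have hφc : Continuous φ := by
    have : φ = fun x => ∑ i, fderiv ℝ (K i) x (EuclideanSpace.single i 1) := by
      funext x; exact (hdiv x).symm
    rw [this]
    exact continuous_finset_sum _ fun i _ => ((hK i).continuous_fderiv (by norm_num)).clm_apply continuous_const
  have hsm : ∀ i, ContDiff ℝ 3 (fun x : EuclideanSpace ℝ (Fin n) => K i ((2 : ℝ) • x)) := fun i =>
    (hK i).comp (contDiff_const_smul _)
  have hd2 : ∀ i (x v : EuclideanSpace ℝ (Fin n)), fderiv ℝ (fun x => 2 ^ (n - 1) * K i ((2 : ℝ) • x) - K i x) x v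
      = 2 ^ n * fderiv ℝ (K i) ((2 : ℝ) • x) v - fderiv ℝ (K i) x v := by
    intro i x v
    have h1 := ((hK i).differentiable (by norm_num) x).hasFDerivAt
    have h2 := ((hK i).differentiable (by norm_num) ((2 : ℝ) • x)).hasFDerivAt
    have h3 := h2.comp x ((hasFDerivAt_id x).const_smul (2 : ℝ))
    have h4 := (h3.const_mul (2 ^ (n - 1))).sub h1
    have h5 : fderiv ℝ (fun x => 2 ^ (n - 1) * K i ((2 : ℝ) • x) - K i x) x = _ := h4.fderiv
    rw [h5]
    simp
    rw [← mul_assoc, ← pow_succ, Nat.sub_add_cancel hn]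
  refine ⟨fun i x => 2 ^ (n - 1) * K i ((2 : ℝ) • x) - K i x, φ, fun i => ?_, ?_, ?_, ?_, hφc, ?_, ?_, ?_⟩
  · exact (contDiff_const.mul (hsm i)).sub (hK i)
  · intro i x hx
    have h1 : 1 ≤ ‖x‖ ^ 2 := one_le_pow₀ hx
    have h2 : ‖(2 : ℝ) • x‖ ^ 2 = 4 * ‖x‖ ^ 2 := by rw [norm_smul]; norm_num; ring
    simp only [K]
    rw [h2, hq2 _ h1, hq2 _ (by linarith), Real.mul_rpow (by norm_num) (by positivity)]
    have h3 : (4 : ℝ) ^ (-(n : ℝ) / 2) = (2 ^ n)⁻¹ := by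
      rw [show (4 : ℝ) = 2 ^ (2 : ℝ) by norm_num, ← Real.rpow_mul (by norm_num),
        show (2 : ℝ) * (-(n : ℝ) / 2) = -(n : ℝ) by ring, Real.rpow_neg (by norm_num), Real.rpow_natCast]
    have h4 : (2 : ℝ) ^ n = 2 ^ (n - 1) * 2 := by rw [← pow_succ, Nat.sub_add_cancel hn]
    rw [h3, h4]
    simp
    field_simp
    ring
  · intro i j x
    simp only [hd2, hKij]
    simp only [eq_comm (a := i) (b := j), mul_comm (x i) (x j), mul_comm (((2 : ℝ) • x) i) _]
  · intro x
    simp only [hd2, Finset.sum_sub_distrib, ← Finset.mul_sum, hdiv]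
  · intro x
    have := hq4 (‖x‖ ^ 2) (by positivity)
    exact this
  · intro x hx
    exact hq5 _ (one_le_pow₀ hx)
  · simp only [φ]
    simp
    positivity
end Kernel

open MeasureTheory Filter Topology
open scoped ENNReal NNReal Convolution

section L2
variable {E : Type*} [NormedAddCommGroup E] [NormedSpace ℝ E] [FiniteDimensional ℝ E]
  [MeasurableSpace E] [BorelSpace E]

lemma young_two (vol : Measure E) [vol.IsAddHaarMeasure] (f σ : E → ℝ) (hf : Measurable f)
    (hσ : Measurable σ) :
    ∫⁻ x, ‖∫ y, f (x - y) * σ y ∂vol‖ₑ ^ 2 ∂vol ≤ (∫⁻ x, ‖f x‖ₑ ∂vol) ^ 2 * ∫⁻ x, ‖σ x‖ₑ ^ 2 ∂vol := by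
  have hm : Measurable fun p : E × E => ‖f (p.1 - p.2)‖ₑ * ‖σ p.2‖ₑ ^ 2 :=
    ((hf.comp (measurable_fst.sub measurable_snd)).enorm).mul ((hσ.comp measurable_snd).enorm.pow_const 2)
  have h1 : ∀ x, ‖∫ y, f (x - y) * σ y ∂vol‖ₑ ^ 2 ≤
      (∫⁻ x, ‖f x‖ₑ ∂vol) * ∫⁻ y, ‖f (x - y)‖ₑ * ‖σ y‖ₑ ^ 2 ∂vol := by
    intro x
    have hfx : Measurable fun y => ‖f (x - y)‖ₑ := (hf.comp (measurable_const.sub measurable_id)).enorm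
    have hg : Measurable fun y => ‖f (x - y)‖ₑ * ‖σ y‖ₑ ^ 2 := hfx.mul (hσ.enorm.pow_const 2)
    have h2 : ‖∫ y, f (x - y) * σ y ∂vol‖ₑ ≤ (∫⁻ x, ‖f x‖ₑ ∂vol) ^ (1 / 2 : ℝ) *
        (∫⁻ y, ‖f (x - y)‖ₑ * ‖σ y‖ₑ ^ 2 ∂vol) ^ (1 / 2 : ℝ) := by
      refine (enorm_integral_le_lintegral_enorm _).trans ?_
      have h3 := ENNReal.lintegral_mul_norm_pow_le (μ := vol) hfx.aemeasurable hg.aemeasurable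
        (p := 1 / 2) (q := 1 / 2) (by norm_num) (by norm_num) (by norm_num)
      rw [lintegral_sub_left_eq_self (fun y => ‖f y‖ₑ) x] at h3
      refine le_trans (le_of_eq ?_) h3
      congr 1; funext y
      rw [enorm_mul, ENNReal.mul_rpow_of_nonneg _ _ (by norm_num : (0 : ℝ) ≤ 1 / 2), ← mul_assoc,
        ← ENNReal.rpow_add_of_nonneg _ _ (by norm_num) (by norm_num), ← ENNReal.rpow_natCast,
        ← ENNReal.rpow_mul]
      norm_num
    calc ‖∫ y, f (x - y) * σ y ∂vol‖ₑ ^ 2 ≤ _ := pow_le_pow_left' h2 2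
      _ = _ := by
        rw [mul_pow, ← ENNReal.rpow_natCast, ← ENNReal.rpow_natCast, ← ENNReal.rpow_mul, ← ENNReal.rpow_mul]
        norm_num
  calc ∫⁻ x, ‖∫ y, f (x - y) * σ y ∂vol‖ₑ ^ 2 ∂vol
      ≤ ∫⁻ x, (∫⁻ x, ‖f x‖ₑ ∂vol) * ∫⁻ y, ‖f (x - y)‖ₑ * ‖σ y‖ₑ ^ 2 ∂vol ∂vol := lintegral_mono h1
    _ = (∫⁻ x, ‖f x‖ₑ ∂vol) * ∫⁻ x, ∫⁻ y, ‖f (x - y)‖ₑ * ‖σ y‖ₑ ^ 2 ∂vol ∂vol := by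
        rw [lintegral_const_mul _ hm.lintegral_prod_right']
    _ = (∫⁻ x, ‖f x‖ₑ ∂vol) * ∫⁻ y, ∫⁻ x, ‖f (x - y)‖ₑ * ‖σ y‖ₑ ^ 2 ∂vol ∂vol := by
        rw [lintegral_lintegral_swap hm.aemeasurable]
    _ = (∫⁻ x, ‖f x‖ₑ ∂vol) * ∫⁻ y, (∫⁻ x, ‖f x‖ₑ ∂vol) * ‖σ y‖ₑ ^ 2 ∂vol := by
        congr 2; funext y
        have hfy : Measurable fun x => ‖f (x - y)‖ₑ := (hf.comp (measurable_id.sub measurable_const)).enorm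
        rw [lintegral_mul_const _ hfy,
          lintegral_sub_right_eq_self (fun x => ‖f x‖ₑ) y]
    _ = _ := by
        rw [lintegral_const_mul _ (hσ.enorm.pow_const 2), sq, mul_assoc]

lemma ibp_two (vol : Measure E) [vol.IsAddHaarMeasure] (F G : E → ℝ) (hF : ContDiff ℝ 2 F) (hG : ContDiff ℝ 2 G)
    (hFc : HasCompactSupport F) (hGc : HasCompactSupport G) (a b : E) :
    ∫ x, fderiv ℝ F x a * fderiv ℝ G x b ∂vol = ∫ x, fderiv ℝ F x b * fderiv ℝ G x a ∂vol := by
  have hF1 : ∀ v, ContDiff ℝ 1 (fun x => fderiv ℝ F x v) := fun v =>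
    (hF.fderiv_right (m := 1) (by norm_num)).clm_apply contDiff_const
  have hF1c : ∀ v, HasCompactSupport (fun x => fderiv ℝ F x v) := fun v => hFc.fderiv_apply ℝ v
  have hG1c : ∀ v, HasCompactSupport (fun x => fderiv ℝ G x v) := fun v => hGc.fderiv_apply ℝ v
  have hG1 : ∀ v, Continuous (fun x => fderiv ℝ G x v) := fun v =>
    (hG.continuous_fderiv (by norm_num)).clm_apply continuous_const
  have h : ∀ v w, ∫ x, fderiv ℝ F x v * fderiv ℝ G x w ∂vol =
      - ∫ x, fderiv ℝ (fun x => fderiv ℝ F x v) x w * G x ∂vol := by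
    intro v w
    apply integral_mul_fderiv_eq_neg_fderiv_mul_of_integrable
    · exact (((hF1 v).continuous_fderiv one_ne_zero).clm_apply continuous_const |>.mul hG.continuous).integrable_of_hasCompactSupport
        (hGc.mul_left)
    · exact ((hF1 v).continuous.mul (hG1 w)).integrable_of_hasCompactSupport (hG1c w).mul_left
    · exact ((hF1 v).continuous.mul hG.continuous).integrable_of_hasCompactSupport hGc.mul_left
    · exact fun x _ => (hF1 v).differentiable one_ne_zero x
    · exact fun x _ => hG.differentiable (by norm_num) x
  rw [h, h]
  congr 2; funext x
  congr 1
  have hd : DifferentiableAt ℝ (fderiv ℝ F) x := (hF.fderiv_right (m := 1) (by norm_num)).differentiable one_ne_zero x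
  have e : ∀ v w, fderiv ℝ (fun x => fderiv ℝ F x v) x w = fderiv ℝ (fderiv ℝ F) x w v := by
    intro v w
    rw [fderiv_clm_apply hd (differentiableAt_const v)]
    simp
  rw [e, e]
  exact (hF.contDiffAt (x := x)).isSymmSndFDerivAt (by simp) _ _

lemma cz_l2 (vol : Measure E) [vol.IsAddHaarMeasure] {ι : Type*} [Fintype ι] (e : ι → E) (K : ι → E → ℝ)
    (hK : ∀ i, ContDiff ℝ 2 (K i)) (hKc : ∀ i, HasCompactSupport (K i))
    (hsym : ∀ i j x, fderiv ℝ (K i) x (e j) = fderiv ℝ (K j) x (e i))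
    (σ : E → ℝ) (hσ : Measurable σ) (hσB : ∃ B, ∀ x, |σ x| ≤ B) (hσc : HasCompactSupport σ) (i j : ι) :
    ∫⁻ x, ‖∫ y, fderiv ℝ (K i) (x - y) (e j) * σ y ∂vol‖ₑ ^ 2 ∂vol ≤
      (∫⁻ x, ‖∑ i, fderiv ℝ (K i) x (e i)‖ₑ ∂vol) ^ 2 * ∫⁻ x, ‖σ x‖ₑ ^ 2 ∂vol := by
  obtain ⟨B, hB⟩ := hσB
  have hσL : LocallyIntegrable σ vol := by
    intro x
    refine ⟨Metric.closedBall x 1, Metric.closedBall_mem_nhds x one_pos, ?_⟩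
    refine Measure.integrableOn_of_bounded (M := B) measure_closedBall_lt_top.ne hσ.aestronglyMeasurable ?_
    exact Eventually.of_forall hB
  let G : ι → E → ℝ := fun i => K i ⋆[ContinuousLinearMap.lsmul ℝ ℝ, vol] σ
  have hG : ∀ i, ContDiff ℝ 2 (G i) := fun i =>
    (hKc i).contDiff_convolution_left (n := 2) _ (hK i) hσL
  have hGc : ∀ i, HasCompactSupport (G i) := fun i => (hKc i).convolution _ hσc
  have hintK : ∀ i x, Integrable (fun y => (ContinuousLinearMap.lsmul ℝ ℝ).precompL E (fderiv ℝ (K i) (x - y)) (σ y)) vol := by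
    intro i x
    have := ((hKc i).fderiv ℝ).convolutionExists_left ((ContinuousLinearMap.lsmul ℝ ℝ).precompL E)
      ((hK i).continuous_fderiv (by norm_num)) hσL x
    exact this.integrable_swap
  have hGd : ∀ i x v, fderiv ℝ (G i) x v = ∫ y, fderiv ℝ (K i) (x - y) v * σ y ∂vol := by
    intro i x v
    rw [((hKc i).hasFDerivAt_convolution_left _ ((hK i).of_le (by norm_num)) hσL x).fderiv, convolution_eq_swap,
      ContinuousLinearMap.integral_apply (hintK i x)]
    rfl
  have hcont : ∀ i v, Continuous fun x => fderiv ℝ (G i) x v := fun i v =>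
    ((hG i).continuous_fderiv (by norm_num)).clm_apply continuous_const
  have hcs : ∀ i v, HasCompactSupport fun x => fderiv ℝ (G i) x v := fun i v => (hGc i).fderiv_apply ℝ v
  have hintg : ∀ i j v w, Integrable (fun x => fderiv ℝ (G i) x v * fderiv ℝ (G j) x w) vol := fun i j v w =>
    ((hcont i v).mul (hcont j w)).integrable_of_hasCompactSupport (hcs j w).mul_left
  have hGs : ∀ i j x, fderiv ℝ (G i) x (e j) = fderiv ℝ (G j) x (e i) := fun i j x => by
    simp only [hGd, hsym i j]
  have hdiv : ∀ x, ∑ i, fderiv ℝ (G i) x (e i) = ∫ y, (∑ i, fderiv ℝ (K i) (x - y) (e i)) * σ y ∂vol := by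
    intro x
    simp only [hGd, Finset.sum_mul]
    rw [integral_finsetSum]
    intro i _
    exact (ContinuousLinearMap.apply ℝ ℝ (e i)).integrable_comp (hintK i x)
  have hreal : ∫ x, (fderiv ℝ (G i) x (e j)) ^ 2 ∂vol ≤ ∫ x, (∑ i, fderiv ℝ (G i) x (e i)) ^ 2 ∂vol := by
    have h1 : ∫ x, (∑ i, fderiv ℝ (G i) x (e i)) ^ 2 ∂vol = ∑ i, ∑ j, ∫ x, (fderiv ℝ (G i) x (e j)) ^ 2 ∂vol := by
      simp only [sq, Finset.sum_mul_sum]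
      rw [integral_finsetSum _ fun i _ => integrable_finsetSum _ fun j _ => hintg i j _ _]
      apply Finset.sum_congr rfl; intro i _
      rw [integral_finsetSum _ fun j _ => hintg i j _ _]
      apply Finset.sum_congr rfl; intro j _
      rw [ibp_two vol (G i) (G j) (hG i) (hG j) (hGc i) (hGc j)]
      simp only [hGs j i]
    rw [h1]
    have nn : ∀ i j, 0 ≤ ∫ x, (fderiv ℝ (G i) x (e j)) ^ 2 ∂vol := fun i j => integral_nonneg fun x => sq_nonneg _
    exact (Finset.single_le_sum (f := fun j => ∫ x, (fderiv ℝ (G i) x (e j)) ^ 2 ∂vol) (fun j _ => nn i j) (Finset.mem_univ j)).trans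
      (Finset.single_le_sum (f := fun i => ∑ j, ∫ x, (fderiv ℝ (G i) x (e j)) ^ 2 ∂vol)
        (fun i _ => Finset.sum_nonneg fun j _ => nn i j) (Finset.mem_univ i))
  have conv : ∀ F : E → ℝ, Integrable (fun x => F x ^ 2) vol →
      ∫⁻ x, ‖F x‖ₑ ^ 2 ∂vol = ENNReal.ofReal (∫ x, F x ^ 2 ∂vol) := by
    intro F hF
    rw [ofReal_integral_eq_lintegral_ofReal hF (Eventually.of_forall fun x => sq_nonneg _)]
    congr 1; funext x
    rw [Real.enorm_eq_ofReal_abs, ← ENNReal.ofReal_pow (abs_nonneg _), sq_abs]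
  have hdc : Continuous fun x => ∑ i, fderiv ℝ (K i) x (e i) :=
    continuous_finset_sum _ fun i _ => ((hK i).continuous_fderiv (by norm_num)).clm_apply continuous_const
  calc ∫⁻ x, ‖∫ y, fderiv ℝ (K i) (x - y) (e j) * σ y ∂vol‖ₑ ^ 2 ∂vol
      = ∫⁻ x, ‖fderiv ℝ (G i) x (e j)‖ₑ ^ 2 ∂vol := by simp only [hGd]
    _ ≤ ∫⁻ x, ‖∑ i, fderiv ℝ (G i) x (e i)‖ₑ ^ 2 ∂vol := by
        rw [conv _ (by simp only [sq]; exact hintg _ _ _ _), conv _ (by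
          simp only [sq, Finset.sum_mul_sum]
          exact integrable_finsetSum _ fun i _ => integrable_finsetSum _ fun j _ => hintg i j _ _)]
        exact ENNReal.ofReal_le_ofReal hreal
    _ = ∫⁻ x, ‖∫ y, (∑ i, fderiv ℝ (K i) (x - y) (e i)) * σ y ∂vol‖ₑ ^ 2 ∂vol := by simp only [hdiv]
    _ ≤ _ := young_two vol (fun x => ∑ i, fderiv ℝ (K i) x (e i)) σ hdc.measurable hσ
end L2

open MeasureTheory Filter Topology
open scoped ENNReal NNReal

section Scales

lemma geom_trunc (c : ℝ) (hc : 0 ≤ c) (M : ℕ) :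
    ∑ m ∈ Finset.range M, (if 2 ^ m * c < 1 then 2 ^ m * c else 0) ≤ 2 := by
  have : ∑ m ∈ Finset.range M, (if 2 ^ m * c < 1 then 2 ^ m * c else 0) ≤ 2 ∧
      ∑ m ∈ Finset.range M, (if 2 ^ m * c < 1 then 2 ^ m * c else 0) ≤ 2 ^ M * c := by
    induction M with
    | zero => simp [hc]
    | succ M ih =>
      rw [Finset.sum_range_succ]
      have h0 : 0 ≤ 2 ^ M * c := by positivity
      have h1 : 2 ^ (M + 1) * c = 2 * (2 ^ M * c) := by ring
      rw [h1]
      split_ifs with h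
      · constructor <;> linarith [ih.1, ih.2]
      · constructor <;> linarith [ih.1, ih.2]
  exact this.1

lemma geom_inv (M : ℕ) : ∑ m ∈ Finset.range M, ((2 : ℝ) ^ m)⁻¹ ≤ 2 := by
  have : ∑ m ∈ Finset.range M, ((2 : ℝ) ^ m)⁻¹ = 2 - 2 * ((2 : ℝ) ^ M)⁻¹ := by
    induction M with
    | zero => simp
    | succ M ih => rw [Finset.sum_range_succ, ih, pow_succ]; field_simp; ring
  rw [this]
  have : 0 < ((2 : ℝ) ^ M)⁻¹ := by positivity
  linarith

variable {E : Type*} [NormedAddCommGroup E] [NormedSpace ℝ E] [FiniteDimensional ℝ E]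
  [MeasurableSpace E] [BorelSpace E]

lemma scale_l1 (vol : Measure E) [vol.IsAddHaarMeasure] (θ : E → ℝ) (S : ℝ) (hS : ∀ x, |θ x| ≤ S)
    (h0 : ∀ x, 1 ≤ ‖x‖ → θ x = 0) (a b : ℝ) (ha : 0 < a) (hb : 0 ≤ b) :
    ∫⁻ x, ‖b * θ (a • x)‖ₑ ∂vol ≤
      ENNReal.ofReal (b * S * (a⁻¹ ^ Module.finrank ℝ E * vol.real (Metric.ball 0 1))) := by
  have hS0 : 0 ≤ S := (abs_nonneg _).trans (hS 0)
  have hpt : ∀ x, ‖b * θ (a • x)‖ₑ ≤ (Metric.closedBall (0 : E) a⁻¹).indicator (fun _ => ENNReal.ofReal (b * S)) x := by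
    intro x
    by_cases hx : x ∈ Metric.closedBall (0 : E) a⁻¹
    · rw [Set.indicator_of_mem hx, Real.enorm_eq_ofReal_abs, abs_mul, abs_of_nonneg hb]
      exact ENNReal.ofReal_le_ofReal (mul_le_mul_of_nonneg_left (hS _) hb)
    · rw [h0]
      · simp
      · rw [mem_closedBall_zero_iff, not_le] at hx
        rw [norm_smul, Real.norm_of_nonneg ha.le]
        have := mul_lt_mul_of_pos_left hx ha
        rw [mul_inv_cancel₀ ha.ne'] at this
        exact this.le
  refine (lintegral_mono hpt).trans ?_
  rw [lintegral_indicator_const measurableSet_closedBall, Measure.addHaar_closedBall vol _ (by positivity),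
    ENNReal.ofReal_mul (p := b * S) (by positivity), ENNReal.ofReal_mul (p := a⁻¹ ^ _) (by positivity), Measure.real,
    ENNReal.ofReal_toReal measure_ball_lt_top.ne]

lemma scale_hor (vol : Measure E) [vol.IsAddHaarMeasure] (θ : E → ℝ) (L : ℝ) (hL0 : 0 ≤ L)
    (hL : ∀ x y, |θ x - θ y| ≤ L * ‖x - y‖)
    (h0 : ∀ x, 1 ≤ ‖x‖ → θ x = 0) (a : ℝ) (ha : 0 < a) (r : ℝ) (w : E) (hr : 0 ≤ r) (hw : ‖w‖ ≤ r / 2) :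
    ∫⁻ x in {x | r ≤ ‖x‖}, ‖a ^ Module.finrank ℝ E * θ (a • x) - a ^ Module.finrank ℝ E * θ (a • (x - w))‖ₑ ∂vol ≤
      ENNReal.ofReal (L * 2 ^ Module.finrank ℝ E * vol.real (Metric.ball 0 1) *
        (if a * (r / 2) < 1 then a * (r / 2) else 0)) := by
  split_ifs with h
  · have hpt : ∀ x, ‖a ^ Module.finrank ℝ E * θ (a • x) - a ^ Module.finrank ℝ E * θ (a • (x - w))‖ₑ ≤
        (Metric.closedBall (0 : E) (2 / a)).indicator
          (fun _ => ENNReal.ofReal (a ^ Module.finrank ℝ E * (L * (a * (r / 2))))) x := by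
      intro x
      by_cases hx : x ∈ Metric.closedBall (0 : E) (2 / a)
      · rw [Set.indicator_of_mem hx, Real.enorm_eq_ofReal_abs, ← mul_sub, abs_mul, abs_of_pos (by positivity)]
        apply ENNReal.ofReal_le_ofReal
        gcongr
        refine (hL _ _).trans ?_
        gcongr
        rw [← smul_sub, sub_sub_cancel, norm_smul, Real.norm_of_nonneg ha.le]
        gcongr
      · rw [mem_closedBall_zero_iff, not_le, div_lt_iff₀ ha] at hx
        rw [h0 (a • x), h0 (a • (x - w))]
        · simp
        · rw [norm_smul, Real.norm_of_nonneg ha.le]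
          have h1 := norm_sub_norm_le x w
          have h2 := mul_le_mul_of_nonneg_left h1 ha.le
          have h3 := mul_le_mul_of_nonneg_left hw ha.le
          nlinarith
        · rw [norm_smul, Real.norm_of_nonneg ha.le]; nlinarith
    refine (setLIntegral_le_lintegral _ _).trans ((lintegral_mono hpt).trans ?_)
    rw [lintegral_indicator_const measurableSet_closedBall, Measure.addHaar_closedBall vol _ (by positivity),
      show L * 2 ^ Module.finrank ℝ E * vol.real (Metric.ball 0 1) * (a * (r / 2)) =
        (a ^ Module.finrank ℝ E * (L * (a * (r / 2)))) * ((2 / a) ^ Module.finrank ℝ E *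
          vol.real (Metric.ball 0 1)) by rw [div_pow]; field_simp,
      ENNReal.ofReal_mul (p := a ^ Module.finrank ℝ E * (L * (a * (r / 2)))) (by positivity),
      ENNReal.ofReal_mul (p := (2 / a) ^ _) (by positivity), Measure.real,
      ENNReal.ofReal_toReal measure_ball_lt_top.ne]
  · rw [not_lt] at h
    rw [mul_zero, ENNReal.ofReal_zero, nonpos_iff_eq_zero]
    apply setLIntegral_eq_zero
    · exact (isClosed_le continuous_const continuous_norm).measurableSet
    · intro x hx
      rw [Set.mem_ofPred_eq] at hx
      simp only [Pi.zero_apply]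
      rw [h0 (a • x), h0 (a • (x - w))]
      · simp
      · rw [norm_smul, Real.norm_of_nonneg ha.le]
        have h1 := norm_sub_norm_le x w
        have h2 : r / 2 ≤ ‖x - w‖ := by linarith
        exact h.trans (mul_le_mul_of_nonneg_left h2 ha.le)
      · rw [norm_smul, Real.norm_of_nonneg ha.le]
        exact h.trans (mul_le_mul_of_nonneg_left (by linarith) ha.le)

theorem kernel_exists (n : ℕ) (hn : 0 < n) : ∃ (φ : EuclideanSpace ℝ (Fin n) → ℝ),
    Continuous φ ∧ (∀ x, 0 ≤ φ x) ∧ (∀ x, 1 ≤ ‖x‖ → φ x = 0) ∧ 0 < φ 0 ∧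
    ∃ C : ℝ, 0 ≤ C ∧ ∀ s : ℝ, 0 < s → ∀ M : ℕ, ∃ K : Fin n → EuclideanSpace ℝ (Fin n) → ℝ,
      (∀ i, ContDiff ℝ 2 (K i)) ∧ (∀ i x, s ≤ ‖x‖ → K i x = 0) ∧
      (∀ i, ∫⁻ x, ‖K i x‖ₑ ≤ ENNReal.ofReal (C * s)) ∧
      (∀ x, ∑ i, fderiv ℝ (K i) x (EuclideanSpace.single i 1) =
        (2 ^ M / s) ^ n * φ ((2 ^ M / s) • x) - (1 / s) ^ n * φ ((1 / s) • x)) ∧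
      ∀ i j, (∀ σ : EuclideanSpace ℝ (Fin n) → ℝ, Measurable σ → (∃ B, ∀ x, |σ x| ≤ B) → HasCompactSupport σ →
        ∫⁻ x, ‖∫ y, fderiv ℝ (K i) (x - y) (EuclideanSpace.single j 1) * σ y‖ₑ ^ 2 ≤
          ENNReal.ofReal C * ∫⁻ x, ‖σ x‖ₑ ^ 2) ∧
        (∀ (r : ℝ) (w : EuclideanSpace ℝ (Fin n)), 0 ≤ r → ‖w‖ ≤ r / 2 →
          ∫⁻ x in {x | r ≤ ‖x‖}, ‖fderiv ℝ (K i) x (EuclideanSpace.single j 1) -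
            fderiv ℝ (K i) (x - w) (EuclideanSpace.single j 1)‖ₑ ≤ ENNReal.ofReal C) := by
  obtain ⟨Ψ, φ, hΨ, hΨ0, hsym, hdiv, hφc, hφn, hφ0, hφp⟩ := psi_exists n hn
  refine ⟨φ, hφc, hφn, hφ0, hφp, ?_⟩
  have hcs : ∀ f : EuclideanSpace ℝ (Fin n) → ℝ, (∀ x, 1 ≤ ‖x‖ → f x = 0) → HasCompactSupport f := by
    intro f hf
    apply HasCompactSupport.intro (isCompact_closedBall (0 : EuclideanSpace ℝ (Fin n)) 1)
    intro x hx
    rw [mem_closedBall_zero_iff, not_le] at hx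
    exact hf x hx.le
  have hbd : ∀ f : EuclideanSpace ℝ (Fin n) → ℝ, Continuous f → (∀ x, 1 ≤ ‖x‖ → f x = 0) →
      ∃ S, 0 ≤ S ∧ ∀ x, |f x| ≤ S := by
    intro f hf h0
    obtain ⟨S, hS⟩ := hf.bounded_above_of_compact_support (hcs f h0)
    exact ⟨S, (norm_nonneg _).trans (hS 0), hS⟩
  have hfin : Module.finrank ℝ (EuclideanSpace ℝ (Fin n)) = n := finrank_euclideanSpace_fin
  set V : ℝ := (volume : Measure (EuclideanSpace ℝ (Fin n))).real (Metric.ball 0 1) with hV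
  have hV0 : 0 ≤ V := measureReal_nonneg
  choose S1 hS10 hS1 using fun i => hbd (Ψ i) (hΨ i).continuous (hΨ0 i)
  obtain ⟨S2, hS20, hS2⟩ := hbd φ hφc hφ0
  have hθ0 : ∀ i j x, 1 ≤ ‖x‖ → fderiv ℝ (Ψ i) x (EuclideanSpace.single j 1) = 0 := by
    intro i j
    have hc : Continuous fun x => fderiv ℝ (Ψ i) x (EuclideanSpace.single j 1) :=
      ((hΨ i).continuous_fderiv (by norm_num)).clm_apply continuous_const
    have h1 : ∀ x, 1 < ‖x‖ → fderiv ℝ (Ψ i) x = 0 := by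
      intro x hx
      have : Ψ i =ᶠ[𝓝 x] fun _ => 0 := by
        filter_upwards [(isOpen_lt continuous_const continuous_norm).mem_nhds hx] with y hy
        exact hΨ0 i y (le_of_lt hy)
      rw [this.fderiv_eq]; simp
    intro x hx
    rcases hx.eq_or_lt with h | h
    · have ht : Tendsto (fun t : ℝ => fderiv ℝ (Ψ i) (t • x) (EuclideanSpace.single j 1)) (𝓝[>] 1)
          (𝓝 (fderiv ℝ (Ψ i) ((1 : ℝ) • x) (EuclideanSpace.single j 1))) :=
        ((hc.comp (continuous_id.smul continuous_const)).tendsto 1).mono_left nhdsWithin_le_nhds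
      rw [one_smul] at ht
      refine tendsto_nhds_unique ht (tendsto_const_nhds.congr' ?_)
      filter_upwards [self_mem_nhdsWithin] with t ht
      rw [h1]
      · rfl
      · rw [norm_smul, ← h, mul_one, Real.norm_of_nonneg (by linarith [Set.mem_Ioi.1 ht])]
        exact ht
    · rw [h1 x h]; rfl
  have hlip : ∀ i j, ∃ L : ℝ, 0 ≤ L ∧ ∀ x y, |fderiv ℝ (Ψ i) x (EuclideanSpace.single j 1) -
      fderiv ℝ (Ψ i) y (EuclideanSpace.single j 1)| ≤ L * ‖x - y‖ := by
    intro i j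
    have hc : ContDiff ℝ 2 fun x => fderiv ℝ (Ψ i) x (EuclideanSpace.single j 1) :=
      ((hΨ i).fderiv_right (m := 2) (by norm_num)).clm_apply contDiff_const
    obtain ⟨L, hL⟩ := hc.lipschitzWith_of_hasCompactSupport (hcs _ (hθ0 i j)) (by norm_num)
    exact ⟨L, L.2, fun x y => by simpa [dist_eq_norm] using hL.dist_le_mul x y⟩
  choose L hL0 hL using hlip
  set C : ℝ := 2 * (∑ i, S1 i) * V + (2 * S2 * V) ^ 2 + ∑ i, ∑ j, L i j * 2 ^ n * V * 2 with hC
  have hc1 : 0 ≤ 2 * (∑ i, S1 i) * V :=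
    mul_nonneg (mul_nonneg (by norm_num) (Finset.sum_nonneg fun i _ => hS10 i)) hV0
  have hc3 : ∀ i j, 0 ≤ L i j * 2 ^ n * V * 2 := fun i j => by have := hL0 i j; positivity
  have hc3' : 0 ≤ ∑ i, ∑ j, L i j * 2 ^ n * V * 2 :=
    Finset.sum_nonneg fun i _ => Finset.sum_nonneg fun j _ => hc3 i j
  refine ⟨C, by positivity, ?_⟩
  intro s hs M
  set a : ℕ → ℝ := fun m => 2 ^ m / s with ha
  have ha0 : ∀ m, 0 < a m := fun m => by simp only [ha]; positivity
  set K : Fin n → EuclideanSpace ℝ (Fin n) → ℝ := fun i x =>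
    ∑ m ∈ Finset.range M, a m ^ (n - 1) * Ψ i (a m • x) with hK
  have hterm : ∀ i m, ContDiff ℝ 2 (fun x : EuclideanSpace ℝ (Fin n) => a m ^ (n - 1) * Ψ i (a m • x)) := fun i m =>
    contDiff_const.mul (((hΨ i).of_le (by norm_num)).comp (contDiff_const_smul _))
  have hKs : ∀ i, ContDiff ℝ 2 (K i) := fun i => ContDiff.sum fun m _ => hterm i m
  have hK0 : ∀ i x, s ≤ ‖x‖ → K i x = 0 := by
    intro i x hx
    apply Finset.sum_eq_zero
    intro m _
    rw [hΨ0, mul_zero]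
    rw [norm_smul, Real.norm_of_nonneg (ha0 m).le]
    simp only [ha]
    rw [div_mul_eq_mul_div, le_div_iff₀ hs]
    have : (1 : ℝ) ≤ 2 ^ m := one_le_pow₀ (by norm_num)
    nlinarith
  have hKc : ∀ i, HasCompactSupport (K i) := by
    intro i
    apply HasCompactSupport.intro (isCompact_closedBall (0 : EuclideanSpace ℝ (Fin n)) s)
    intro x hx
    rw [mem_closedBall_zero_iff, not_le] at hx
    exact hK0 i x hx.le
  have hKd : ∀ i x v, fderiv ℝ (K i) x v = ∑ m ∈ Finset.range M, a m ^ n * fderiv ℝ (Ψ i) (a m • x) v := by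
    intro i x v
    have h1 : ∀ m, HasFDerivAt (fun x : EuclideanSpace ℝ (Fin n) => a m ^ (n - 1) * Ψ i (a m • x))
        (a m ^ (n - 1) • (fderiv ℝ (Ψ i) (a m • x)).comp (a m • ContinuousLinearMap.id ℝ _)) x := by
      intro m
      have h2 := ((hΨ i).differentiable (by norm_num) (a m • x)).hasFDerivAt
      have h3 := h2.comp x ((hasFDerivAt_id x).const_smul (a m))
      exact h3.const_mul _
    have h4 : HasFDerivAt (K i) _ x := HasFDerivAt.fun_sum fun m (_ : m ∈ Finset.range M) => h1 m
    rw [h4.fderiv, ContinuousLinearMap.sum_apply]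
    apply Finset.sum_congr rfl
    intro m _
    simp
    rw [← mul_assoc, ← pow_succ, Nat.sub_add_cancel hn]
  have hdivK : ∀ x, ∑ i, fderiv ℝ (K i) x (EuclideanSpace.single i 1) =
        (2 ^ M / s) ^ n * φ ((2 ^ M / s) • x) - (1 / s) ^ n * φ ((1 / s) • x) := by
    intro x
    simp only [hKd]
    rw [Finset.sum_comm]
    simp only [← Finset.mul_sum, hdiv]
    have : ∀ m, a m ^ n * (2 ^ n * φ ((2 : ℝ) • a m • x) - φ (a m • x)) =
        a (m + 1) ^ n * φ (a (m + 1) • x) - a m ^ n * φ (a m • x) := by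
      intro m
      have h1 : a (m + 1) = 2 * a m := by simp only [ha]; ring
      rw [h1, smul_smul, mul_pow]; ring
    simp only [this]
    rw [Finset.sum_range_sub (fun m => a m ^ n * φ (a m • x))]
    simp [ha]
  have hsymK : ∀ i j x, fderiv ℝ (K i) x (EuclideanSpace.single j 1) = fderiv ℝ (K j) x (EuclideanSpace.single i 1) := by
    intro i j x
    simp only [hKd, hsym i j]
  refine ⟨K, hKs, hK0, ?_, hdivK, fun i j => ⟨?_, ?_⟩⟩
  · intro i
    calc ∫⁻ x, ‖K i x‖ₑ ≤ ∫⁻ x, ∑ m ∈ Finset.range M, ‖a m ^ (n - 1) * Ψ i (a m • x)‖ₑ :=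
          lintegral_mono fun x => enorm_sum_le _ _
      _ = ∑ m ∈ Finset.range M, ∫⁻ x, ‖a m ^ (n - 1) * Ψ i (a m • x)‖ₑ :=
          lintegral_finsetSum _ fun m _ => (hterm i m).continuous.measurable.enorm
      _ ≤ ∑ m ∈ Finset.range M, ENNReal.ofReal (s * S1 i * V * (2 ^ m)⁻¹) := by
          apply Finset.sum_le_sum
          intro m _
          refine (scale_l1 volume (Ψ i) (S1 i) (hS1 i) (hΨ0 i) (a m) (a m ^ (n - 1)) (ha0 m) (pow_nonneg (ha0 m).le _)).trans ?_
          apply ENNReal.ofReal_le_ofReal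
          rw [hfin]
          apply le_of_eq
          have : (a m)⁻¹ ^ n = (a m)⁻¹ ^ (n - 1) * (s * (2 ^ m)⁻¹) := by
            conv_lhs => rw [← Nat.sub_add_cancel hn, pow_succ]
            simp [ha, div_eq_mul_inv]
          rw [this, inv_pow]
          have h2 := pow_pos (ha0 m) (n - 1)
          field_simp; rfl
      _ = ENNReal.ofReal (∑ m ∈ Finset.range M, s * S1 i * V * (2 ^ m)⁻¹) :=
          (ENNReal.ofReal_sum_of_nonneg fun m _ => by have := hS10 i; positivity).symm
      _ ≤ ENNReal.ofReal (C * s) := by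
          apply ENNReal.ofReal_le_ofReal
          rw [← Finset.mul_sum]
          have h1 : S1 i ≤ ∑ i, S1 i := Finset.single_le_sum (fun i _ => hS10 i) (Finset.mem_univ i)
          have h2 : 2 * S1 i * V ≤ C := by
            have : 2 * S1 i * V ≤ 2 * (∑ i, S1 i) * V := by gcongr
            have : 0 ≤ (2 * S2 * V) ^ 2 := sq_nonneg _
            linarith
          have := hS10 i
          calc s * S1 i * V * ∑ m ∈ Finset.range M, ((2 : ℝ) ^ m)⁻¹ ≤ s * S1 i * V * 2 := by
                gcongr; exact geom_inv M
            _ = 2 * S1 i * V * s := by ring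
            _ ≤ C * s := by gcongr
  · intro σ h1 h2 h3
    refine (cz_l2 volume (fun i => EuclideanSpace.single i (1 : ℝ)) K hKs hKc hsymK σ h1 h2 h3 i j).trans ?_
    gcongr
    have hsc : ∀ t : ℝ, 0 < t → ∫⁻ x : EuclideanSpace ℝ (Fin n), ‖t ^ n * φ (t • x)‖ₑ ≤ ENNReal.ofReal (S2 * V) := by
      intro t ht
      refine (scale_l1 volume φ S2 hS2 hφ0 t (t ^ n) ht (by positivity)).trans ?_
      apply ENNReal.ofReal_le_ofReal
      rw [hfin, inv_pow]
      apply le_of_eq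
      field_simp; rfl
    have hmm : ∀ t : ℝ, Measurable fun x : EuclideanSpace ℝ (Fin n) => ‖t ^ n * φ (t • x)‖ₑ := fun t =>
      (continuous_const.mul (hφc.comp (continuous_const_smul t))).measurable.enorm
    have h4 : ∫⁻ x, ‖∑ i, fderiv ℝ (K i) x (EuclideanSpace.single i 1)‖ₑ ≤ ENNReal.ofReal (2 * S2 * V) := by
      calc ∫⁻ x, ‖∑ i, fderiv ℝ (K i) x (EuclideanSpace.single i 1)‖ₑ
          ≤ ∫⁻ x, (‖(2 ^ M / s) ^ n * φ ((2 ^ M / s) • x)‖ₑ + ‖(1 / s) ^ n * φ ((1 / s) • x)‖ₑ) := by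
            apply lintegral_mono
            intro x
            simp only [hdivK]
            exact enorm_sub_le
        _ = (∫⁻ x, ‖(2 ^ M / s) ^ n * φ ((2 ^ M / s) • x)‖ₑ) + ∫⁻ x, ‖(1 / s) ^ n * φ ((1 / s) • x)‖ₑ :=
            lintegral_add_left (hmm _) _
        _ ≤ ENNReal.ofReal (S2 * V) + ENNReal.ofReal (S2 * V) :=
            add_le_add (hsc _ (by positivity)) (hsc _ (by positivity))
        _ = _ := by rw [← ENNReal.ofReal_add (by positivity) (by positivity)]; congr 1; ring
    calc (∫⁻ x, ‖∑ i, fderiv ℝ (K i) x (EuclideanSpace.single i 1)‖ₑ) ^ 2 ≤ ENNReal.ofReal (2 * S2 * V) ^ 2 :=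
          pow_le_pow_left' h4 2
      _ = ENNReal.ofReal ((2 * S2 * V) ^ 2) := (ENNReal.ofReal_pow (by positivity) 2).symm
      _ ≤ ENNReal.ofReal C := ENNReal.ofReal_le_ofReal (by linarith)
  · intro r w hr hw
    have hcθ : Continuous fun x => fderiv ℝ (Ψ i) x (EuclideanSpace.single j 1) :=
      ((hΨ i).continuous_fderiv (by norm_num)).clm_apply continuous_const
    simp only [hKd, ← Finset.sum_sub_distrib]
    calc _ ≤ ∫⁻ x in {x | r ≤ ‖x‖}, ∑ m ∈ Finset.range M, ‖a m ^ n * fderiv ℝ (Ψ i) (a m • x) (EuclideanSpace.single j 1)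
            - a m ^ n * fderiv ℝ (Ψ i) (a m • (x - w)) (EuclideanSpace.single j 1)‖ₑ :=
          lintegral_mono fun x => enorm_sum_le _ _
      _ = ∑ m ∈ Finset.range M, ∫⁻ x in {x | r ≤ ‖x‖}, ‖a m ^ n * fderiv ℝ (Ψ i) (a m • x) (EuclideanSpace.single j 1)
            - a m ^ n * fderiv ℝ (Ψ i) (a m • (x - w)) (EuclideanSpace.single j 1)‖ₑ := by
          apply lintegral_finsetSum
          intro m _
          apply Measurable.enorm
          apply Continuous.measurable
          exact (continuous_const.mul (hcθ.comp (continuous_const_smul _))).sub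
            (continuous_const.mul (hcθ.comp (by fun_prop : Continuous fun x => a m • (x - w))))
      _ ≤ ∑ m ∈ Finset.range M, ENNReal.ofReal (L i j * 2 ^ n * V * (if 2 ^ m * (r / 2 / s) < 1 then 2 ^ m * (r / 2 / s) else 0)) := by
          apply Finset.sum_le_sum
          intro m _
          have := scale_hor volume (fun x => fderiv ℝ (Ψ i) x (EuclideanSpace.single j 1)) (L i j) (hL0 i j)
            (hL i j) (hθ0 i j) (a m) (ha0 m) r w hr hw
          rw [hfin] at this
          have e : a m * (r / 2) = 2 ^ m * (r / 2 / s) := by simp only [ha]; ring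
          rw [e] at this
          exact this
      _ = ENNReal.ofReal (L i j * 2 ^ n * V * ∑ m ∈ Finset.range M, (if 2 ^ m * (r / 2 / s) < 1 then 2 ^ m * (r / 2 / s) else 0)) := by
          rw [Finset.mul_sum]
          refine (ENNReal.ofReal_sum_of_nonneg fun m _ => ?_).symm
          have := hL0 i j
          split_ifs <;> positivity
      _ ≤ ENNReal.ofReal C := by
          apply ENNReal.ofReal_le_ofReal
          have h0 := hL0 i j
          have h1 : L i j * 2 ^ n * V * 2 ≤ ∑ i, ∑ j, L i j * 2 ^ n * V * 2 :=
            (Finset.single_le_sum (f := fun j => L i j * 2 ^ n * V * 2) (fun j _ => hc3 i j) (Finset.mem_univ j)).trans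
              (Finset.single_le_sum (f := fun i => ∑ j, L i j * 2 ^ n * V * 2)
                (fun i _ => Finset.sum_nonneg fun j _ => hc3 i j) (Finset.mem_univ i))
          have h2 := mul_le_mul_of_nonneg_left (geom_trunc (r / 2 / s) (by positivity) M)
            (by positivity : 0 ≤ L i j * 2 ^ n * V)
          have : 0 ≤ (2 * S2 * V) ^ 2 := sq_nonneg _
          linarith
end Scales

open MeasureTheory Filter Topology
open scoped ENNReal NNReal

section P7a
variable {E : Type*} [NormedAddCommGroup E] [InnerProductSpace ℝ E] [FiniteDimensional ℝ E]
  [MeasurableSpace E] [BorelSpace E]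

theorem avg_ball (vol : Measure E) [vol.IsAddHaarMeasure] (ν : Measure E) [SFinite ν] (F : E → ℝ≥0∞)
    (hF : Measurable F) (r : ℝ) :
    ∫⁻ c, ∫⁻ x in Metric.closedBall c r, F x ∂ν ∂vol = vol (Metric.closedBall 0 r) * ∫⁻ x, F x ∂ν := by
  have hS : MeasurableSet {p : E × E | dist p.2 p.1 ≤ r} :=
    (isClosed_le (continuous_snd.dist continuous_fst) continuous_const).measurableSet
  have hm : Measurable (Function.uncurry fun c x : E =>
      ({p : E × E | dist p.2 p.1 ≤ r}).indicator (fun p => F p.2) (c, x)) :=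
    (hF.comp measurable_snd).indicator hS
  calc ∫⁻ c, ∫⁻ x in Metric.closedBall c r, F x ∂ν ∂vol
      = ∫⁻ c, ∫⁻ x, ({p : E × E | dist p.2 p.1 ≤ r}).indicator (fun p => F p.2) (c, x) ∂ν ∂vol := by
        congr 1; ext c
        rw [← lintegral_indicator Metric.isClosed_closedBall.measurableSet]
        rfl
    _ = ∫⁻ x, ∫⁻ c, ({p : E × E | dist p.2 p.1 ≤ r}).indicator (fun p => F p.2) (c, x) ∂vol ∂ν :=
        lintegral_lintegral_swap hm.aemeasurable
    _ = ∫⁻ x, vol (Metric.closedBall 0 r) * F x ∂ν := by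
        congr 1; ext x
        have : ∀ c, ({p : E × E | dist p.2 p.1 ≤ r}).indicator (fun p => F p.2) (c, x) =
            (Metric.closedBall x r).indicator (fun _ => F x) c := by
          intro c
          by_cases h : dist x c ≤ r
          · rw [Set.indicator_of_mem (by exact h), Set.indicator_of_mem (by rw [Metric.mem_closedBall']; exact h)]
          · rw [Set.indicator_of_notMem (by exact h), Set.indicator_of_notMem (by rw [Metric.mem_closedBall']; exact h)]
        simp only [this]
        rw [lintegral_indicator_const Metric.isClosed_closedBall.measurableSet,
          Measure.addHaar_closedBall_center, mul_comm]
    _ = _ := lintegral_const_mul _ hF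

theorem cz_local [Nontrivial E] (vol : Measure E) [vol.IsAddHaarMeasure] (k : E → ℝ)
    (hk : Continuous k) (C : ℝ) (hC : 0 ≤ C) (s : ℝ) (hs : 0 < s)
    (hk0 : ∀ x, s ≤ ‖x‖ → k x = 0)
    (hL2 : ∀ σ : E → ℝ, Measurable σ → (∃ B, ∀ x, |σ x| ≤ B) → HasCompactSupport σ →
      ∫⁻ x, ‖∫ y, k (x - y) * σ y ∂vol‖ₑ ^ 2 ∂vol ≤ ENNReal.ofReal C * ∫⁻ x, ‖σ x‖ₑ ^ 2 ∂vol)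
    (hH : ∀ (r : ℝ) (w : E), 0 ≤ r → ‖w‖ ≤ r / 2 →
      ∫⁻ x in {x | r ≤ ‖x‖}, ‖k x - k (x - w)‖ₑ ∂vol ≤ ENNReal.ofReal C)
    {ι : Type*} [Fintype ι] (p : ι → E) (α : ι → ℝ) (κ : ℝ) (hκ : 0 < κ)
    (μ : Measure E) [IsFiniteMeasure μ] (v : E → ℝ≥0∞) (hv : Measurable v) (b : ℝ) (hb : 0 ≤ b)
    (hvb : ∀ x, v x ≤ ENNReal.ofReal (b / s ^ Module.finrank ℝ E) * μ (Metric.closedBall x s)) :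
    ∫⁻ x, min (v x) ‖∑ j, α j * k (x - p j)‖ₑ ∂vol ≤ ENNReal.ofReal (2 ^ Module.finrank ℝ E *
      ((b * vol.real (Metric.ball 0 1) * 10 ^ Module.finrank ℝ E / κ + 2 * C) * (∑ j, |α j|) + κ * μ.real Set.univ)) := by
  classical
  set d := Module.finrank ℝ E with hd
  set V := vol.real (Metric.ball (0 : E) 1) with hV
  have hV0 : 0 < V := by
    rw [hV, Measure.real]
    exact ENNReal.toReal_pos (Metric.measure_ball_pos vol 0 one_pos).ne' measure_ball_lt_top.ne
  have hvol : ∀ (c : E) (r : ℝ), 0 ≤ r → vol (Metric.closedBall c r) = ENNReal.ofReal (r ^ d * V) := by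
    intro c r hr
    rw [Measure.addHaar_closedBall vol _ hr, ENNReal.ofReal_mul (by positivity), hV, Measure.real,
      ENNReal.ofReal_toReal measure_ball_lt_top.ne]
  have hkc : HasCompactSupport k := by
    apply HasCompactSupport.intro (isCompact_closedBall (0 : E) s)
    intro x hx
    rw [mem_closedBall_zero_iff, not_le] at hx
    exact hk0 x hx.le
  set F : E → ℝ≥0∞ := fun x => min (v x) ‖∑ j, α j * k (x - p j)‖ₑ with hFdef
  have hTc : Continuous fun x => ∑ j, α j * k (x - p j) :=
    continuous_finsetSum _ fun j _ => continuous_const.mul (hk.comp (continuous_id.sub continuous_const))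
  have hF : Measurable F := hv.min hTc.measurable.enorm
  set D : ℝ := b * V * 10 ^ d / κ + 2 * C with hD
  have hD0 : 0 ≤ D := by positivity
  have hloc : ∀ c, ∫⁻ x in Metric.closedBall c s, F x ∂vol ≤
      ENNReal.ofReal D * (∑ j, ENNReal.ofReal |α j| * (Metric.closedBall (p j) (2 * s)).indicator 1 c) +
        ENNReal.ofReal κ * μ (Metric.closedBall c (2 * s)) := by
    intro c
    set mc := μ (Metric.closedBall c (2 * s)) with hmc
    have hmct : mc ≠ ⊤ := measure_ne_top _ _
    set α' : ι → ℝ := fun j => if c ∈ Metric.closedBall (p j) (2 * s) then α j else 0 with hα'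
    have hac : (∑ j, ENNReal.ofReal |α j| * (Metric.closedBall (p j) (2 * s)).indicator 1 c) =
        ENNReal.ofReal (∑ j, |α' j|) := by
      rw [ENNReal.ofReal_sum_of_nonneg fun j _ => abs_nonneg _]
      apply Finset.sum_congr rfl
      intro j _
      by_cases h : c ∈ Metric.closedBall (p j) (2 * s)
      · simp only [hα', if_pos h, Set.indicator_of_mem h]; simp
      · simp only [hα', if_neg h, Set.indicator_of_notMem h]; simp
    rw [hac]
    have hvm : ∀ x ∈ Metric.closedBall c s, v x ≤ ENNReal.ofReal (b / s ^ d) * mc := by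
      intro x hx
      refine (hvb x).trans ?_
      gcongr
      apply measure_mono
      apply Metric.closedBall_subset_closedBall'
      rw [Metric.mem_closedBall] at hx; linarith
    have hT : ∀ x ∈ Metric.closedBall c s, ∑ j, α j * k (x - p j) = ∑ j, α' j * k (x - p j) := by
      intro x hx
      apply Finset.sum_congr rfl
      intro j _
      by_cases h : c ∈ Metric.closedBall (p j) (2 * s)
      · simp only [hα', if_pos h]
      · rw [hk0 (x - p j)]
        · simp
        · by_contra h2
          rw [not_le, ← dist_eq_norm] at h2
          apply h
          rw [Metric.mem_closedBall] at hx ⊢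
          have := dist_triangle c x (p j)
          rw [dist_comm c x] at this
          linarith
    by_cases h0 : mc = 0
    · have : ∫⁻ x in Metric.closedBall c s, F x ∂vol = 0 := by
        apply setLIntegral_eq_zero Metric.isClosed_closedBall.measurableSet
        intro x hx
        have := hvm x hx
        rw [h0, mul_zero, nonpos_iff_eq_zero] at this
        simp [hFdef, this]
      rw [this]; exact zero_le
    have hmp : 0 < mc.toReal := ENNReal.toReal_pos h0 hmct
    have hlam : 0 < κ * mc.toReal / (s ^ d * V) := by positivity
    obtain ⟨Ω, hΩm, hΩ, hQ⟩ := cz_main vol k hk hkc C hC hL2 hH p α' (κ * mc.toReal / (s ^ d * V)) hlam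
    have hA0 : 0 ≤ ∑ j, |α' j| := Finset.sum_nonneg fun j _ => abs_nonneg _
    set A := ∑ j, |α' j| with hA
    have hmc' : mc = ENNReal.ofReal mc.toReal := (ENNReal.ofReal_toReal hmct).symm
    calc ∫⁻ x in Metric.closedBall c s, F x ∂vol
        ≤ (∫⁻ x in Metric.closedBall c s ∩ Ω, F x ∂vol) + ∫⁻ x in Metric.closedBall c s \ Ω, F x ∂vol := by
          rw [lintegral_inter_add_sdiff _ _ hΩm]
      _ ≤ ENNReal.ofReal (b / s ^ d) * mc * vol Ω +
          ∫⁻ x in Metric.closedBall c s \ Ω, ‖∑ j, α' j * k (x - p j)‖ₑ ∂vol := by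
          apply add_le_add
          · calc _ ≤ ∫⁻ x in Metric.closedBall c s ∩ Ω, ENNReal.ofReal (b / s ^ d) * mc ∂vol := by
                  apply setLIntegral_mono measurable_const
                  intro x hx
                  exact (min_le_left _ _).trans (hvm x hx.1)
              _ ≤ _ := by
                  rw [setLIntegral_const]
                  gcongr
                  exact Set.inter_subset_right
          · apply setLIntegral_mono' (Metric.isClosed_closedBall.measurableSet.diff hΩm)
            intro x hx
            rw [← hT x hx.1]
            exact min_le_right _ _
      _ ≤ ENNReal.ofReal (b / s ^ d) * mc * ENNReal.ofReal (10 ^ d * A / (κ * mc.toReal / (s ^ d * V))) +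
          (ENNReal.ofReal (κ * mc.toReal / (s ^ d * V)) * vol (Metric.closedBall c s) + ENNReal.ofReal (2 * C * A)) := by
          gcongr
          exact hQ _ Metric.isClosed_closedBall.measurableSet
      _ = ENNReal.ofReal D * ENNReal.ofReal A + ENNReal.ofReal κ * mc := by
          rw [hvol c s hs.le]
          nth_rw 1 [hmc']
          nth_rw 4 [hmc']
          rw [← ENNReal.ofReal_mul (by positivity), ← ENNReal.ofReal_mul (by positivity),
            ← ENNReal.ofReal_mul (by positivity), ← ENNReal.ofReal_mul (by positivity),
            ← ENNReal.ofReal_mul (by positivity), ← ENNReal.ofReal_add (by positivity) (by positivity),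
            ← ENNReal.ofReal_add (by positivity) (by positivity), ← ENNReal.ofReal_add (by positivity) (by positivity)]
          congr 1
          rw [hD]
          field_simp
          ring
  have hI := avg_ball vol vol F hF s
  have hJ := avg_ball vol μ (fun _ => 1) measurable_const (2 * s)
  simp only [lintegral_const, one_mul, Measure.restrict_apply MeasurableSet.univ, Set.univ_inter] at hJ
  have hw0 : 0 < s ^ d * V := by positivity
  have hind : ∀ j, Measurable fun c => ENNReal.ofReal |α j| * (Metric.closedBall (p j) (2 * s)).indicator (1 : E → ℝ≥0∞) c := fun j =>
    measurable_const.mul (measurable_one.indicator Metric.isClosed_closedBall.measurableSet)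
  have hfin : ENNReal.ofReal (s ^ d * V) * ∫⁻ x, F x ∂vol ≤ ENNReal.ofReal (s ^ d * V) *
      ENNReal.ofReal (2 ^ d * (D * (∑ j, |α j|) + κ * μ.real Set.univ)) := by
    rw [← hvol 0 s hs.le, ← hI]
    calc _ ≤ ∫⁻ c, (ENNReal.ofReal D * (∑ j, ENNReal.ofReal |α j| * (Metric.closedBall (p j) (2 * s)).indicator 1 c) +
        ENNReal.ofReal κ * μ (Metric.closedBall c (2 * s))) ∂vol := lintegral_mono hloc
      _ = ENNReal.ofReal D * (∑ j, ENNReal.ofReal |α j| * ENNReal.ofReal ((2 * s) ^ d * V)) +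
          ENNReal.ofReal κ * (ENNReal.ofReal ((2 * s) ^ d * V) * μ Set.univ) := by
        have hm1 : Measurable fun c => ENNReal.ofReal D * (∑ j, ENNReal.ofReal |α j| *
            (Metric.closedBall (p j) (2 * s)).indicator (1 : E → ℝ≥0∞) c) :=
          (Finset.measurable_fun_sum _ fun j _ => hind j).const_mul _
        rw [lintegral_add_left hm1,
          lintegral_const_mul' _ _ ENNReal.ofReal_ne_top, lintegral_const_mul' _ _ ENNReal.ofReal_ne_top, hJ,
          lintegral_finsetSum _ fun j _ => hind j, hvol 0 _ (by positivity)]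
        congr 3
        ext j
        rw [lintegral_const_mul' _ _ ENNReal.ofReal_ne_top, lintegral_indicator_one Metric.isClosed_closedBall.measurableSet,
          hvol _ _ (by positivity)]
      _ = _ := by
        have hA0 : 0 ≤ ∑ j, |α j| := Finset.sum_nonneg fun j _ => abs_nonneg _
        rw [← Finset.sum_mul, ← ENNReal.ofReal_sum_of_nonneg fun j _ => abs_nonneg _, hvol _ _ hs.le,
          ← ENNReal.ofReal_toReal (measure_ne_top μ Set.univ), ← Measure.real]
        have hμ0 : 0 ≤ μ.real Set.univ := measureReal_nonneg
        rw [← ENNReal.ofReal_mul (by positivity), ← ENNReal.ofReal_mul (by positivity),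
            ← ENNReal.ofReal_mul (by positivity), ← ENNReal.ofReal_mul (by positivity),
            ← ENNReal.ofReal_mul (by positivity), ← ENNReal.ofReal_add (by positivity) (by positivity)]
        congr 1
        rw [mul_pow]; ring
  exact (ENNReal.mul_le_mul_iff_right (ENNReal.ofReal_pos.2 hw0).ne' ENNReal.ofReal_ne_top).1 hfin

end P7a

open MeasureTheory Filter Topology
open scoped ENNReal NNReal

section P7b

noncomputable def mollif (n : ℕ) (φ : EuclideanSpace ℝ (Fin n) → ℝ) (μ : Measure (EuclideanSpace ℝ (Fin n)))
    (t : ℝ) (x : EuclideanSpace ℝ (Fin n)) : ℝ≥0∞ :=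
  ∫⁻ y, ENNReal.ofReal (t ^ n * φ (t • (x - y))) ∂μ

variable {n : ℕ} {φ : EuclideanSpace ℝ (Fin n) → ℝ}

lemma mollif_meas_aux (hc : Continuous φ)
    (t : ℝ) : Measurable (Function.uncurry fun x y : EuclideanSpace ℝ (Fin n) =>
    ENNReal.ofReal (t ^ n * φ (t • (x - y)))) := by
  apply Measurable.ennreal_ofReal
  apply Continuous.measurable
  fun_prop

lemma mollif_meas (hc : Continuous φ) (μ : Measure (EuclideanSpace ℝ (Fin n))) [IsFiniteMeasure μ]
    (t : ℝ) : Measurable (mollif n φ μ t) :=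
  (mollif_meas_aux hc t).lintegral_prod_right'

lemma mollif_int (hc : Continuous φ) (h0 : ∀ x, 1 ≤ ‖x‖ → φ x = 0) (μ : Measure (EuclideanSpace ℝ (Fin n))) [IsFiniteMeasure μ]
    (t : ℝ) (x : EuclideanSpace ℝ (Fin n)) : Integrable (fun y => t ^ n * φ (t • (x - y))) μ := by
  have hcs : HasCompactSupport φ := by
    apply HasCompactSupport.intro (isCompact_closedBall (0 : EuclideanSpace ℝ (Fin n)) 1)
    intro x hx
    rw [mem_closedBall_zero_iff, not_le] at hx
    exact h0 x hx.le
  obtain ⟨S, hS⟩ := hc.bounded_above_of_compact_support hcs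
  apply Integrable.const_mul
  refine Integrable.of_bound (C := S) ?_ (Eventually.of_forall fun y => hS _)
  apply Continuous.aestronglyMeasurable
  fun_prop

lemma mollif_real (hc : Continuous φ) (hn : ∀ x, 0 ≤ φ x) (h0 : ∀ x, 1 ≤ ‖x‖ → φ x = 0) (μ : Measure (EuclideanSpace ℝ (Fin n))) [IsFiniteMeasure μ]
    (t : ℝ) (ht : 0 ≤ t) (x : EuclideanSpace ℝ (Fin n)) :
    mollif n φ μ t x = ENNReal.ofReal (∫ y, t ^ n * φ (t • (x - y)) ∂μ) := by
  rw [ofReal_integral_eq_lintegral_ofReal (mollif_int hc h0 μ t x)]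
  · rfl
  · exact Eventually.of_forall fun y => mul_nonneg (by positivity) (hn _)

lemma mollif_lintegral (hc : Continuous φ) (μ : Measure (EuclideanSpace ℝ (Fin n))) [IsFiniteMeasure μ]
    (t : ℝ) (ht : 0 < t) :
    ∫⁻ x, mollif n φ μ t x = (∫⁻ x, ENNReal.ofReal (φ x)) * μ Set.univ := by
  unfold mollif
  rw [lintegral_lintegral_swap (mollif_meas_aux hc t).aemeasurable]
  have : ∀ y : EuclideanSpace ℝ (Fin n), ∫⁻ x, ENNReal.ofReal (t ^ n * φ (t • (x - y))) =
      ∫⁻ x, ENNReal.ofReal (φ x) := by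
    intro y
    rw [lintegral_sub_right_eq_self (fun x => ENNReal.ofReal (t ^ n * φ (t • x))) y]
    have h1 : ∫⁻ x, ENNReal.ofReal (φ (t • x)) = ENNReal.ofReal ((t ^ n)⁻¹) * ∫⁻ x, ENNReal.ofReal (φ x) := by
      have h2 := Measure.map_addHaar_smul (volume : Measure (EuclideanSpace ℝ (Fin n))) ht.ne'
      rw [finrank_euclideanSpace_fin, abs_of_pos (by positivity)] at h2
      rw [← smul_eq_mul, ← lintegral_smul_measure, ← h2, lintegral_map hc.measurable.ennreal_ofReal (by fun_prop)]
    have h3 : 0 < t ^ n := by positivity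
    simp only [ENNReal.ofReal_mul h3.le]
    rw [lintegral_const_mul' _ _ ENNReal.ofReal_ne_top, h1, ← mul_assoc, ← ENNReal.ofReal_mul h3.le,
      mul_inv_cancel₀ h3.ne', ENNReal.ofReal_one, one_mul]
  simp only [this]
  rw [lintegral_const]

lemma mollif_zero (h0 : ∀ x, 1 ≤ ‖x‖ → φ x = 0) (μ : Measure (EuclideanSpace ℝ (Fin n))) [IsFiniteMeasure μ]
    (t : ℝ) (ht : 0 < t) (x : EuclideanSpace ℝ (Fin n)) (A : Set (EuclideanSpace ℝ (Fin n)))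
    (hA : μ Aᶜ = 0) (hx : ∀ y ∈ A, t⁻¹ ≤ dist x y) : mollif n φ μ t x = 0 := by
  unfold mollif
  rw [lintegral_eq_zero_of_ae_eq_zero]
  have : A ∈ ae μ := hA
  filter_upwards [this] with y hy
  rw [h0]
  · simp
  · rw [norm_smul, Real.norm_of_nonneg ht.le, ← dist_eq_norm]
    have := mul_le_mul_of_nonneg_left (hx y hy) ht.le
    rwa [mul_inv_cancel₀ ht.ne'] at this

lemma mollif_le (h0 : ∀ x, 1 ≤ ‖x‖ → φ x = 0) (μ : Measure (EuclideanSpace ℝ (Fin n))) [IsFiniteMeasure μ]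
    (t : ℝ) (ht : 0 < t) (S : ℝ) (hS : ∀ x, φ x ≤ S) (x : EuclideanSpace ℝ (Fin n)) :
    mollif n φ μ t x ≤ ENNReal.ofReal (S * t ^ n) * μ (Metric.closedBall x t⁻¹) := by
  rw [← lintegral_indicator_const Metric.isClosed_closedBall.measurableSet]
  apply lintegral_mono
  intro y
  by_cases hy : y ∈ Metric.closedBall x t⁻¹
  · rw [Set.indicator_of_mem hy]
    apply ENNReal.ofReal_le_ofReal
    rw [mul_comm]
    have := hS (t • (x - y))
    gcongr
  · rw [Metric.mem_closedBall', not_le, dist_eq_norm] at hy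
    simp only
    rw [h0]
    · simp
    · rw [norm_smul, Real.norm_of_nonneg ht.le]
      have := mul_le_mul_of_nonneg_left hy.le ht.le
      rwa [mul_inv_cancel₀ ht.ne'] at this

/-- If for all scales `M` the defect is at most `Bd`, then the mass is at most `Bd`. -/
theorem mass_le (μ : Measure (EuclideanSpace ℝ (Fin n))) [IsFiniteMeasure μ] (hc : Continuous φ) (hn : ∀ x, 0 ≤ φ x)
    (h0 : ∀ x, 1 ≤ ‖x‖ → φ x = 0) (S : ℝ) (hS : ∀ x, φ x ≤ S) (K0 : Set (EuclideanSpace ℝ (Fin n))) (hK : IsCompact K0)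
    (hK0 : volume K0 = 0) (hμ : μ K0ᶜ = 0) (s : ℝ) (hs : 0 < s) (Bd : ℝ≥0∞)
    (hfin : ∫⁻ x, ENNReal.ofReal (φ x) ≠ ⊤)
    (hB : ∀ M : ℕ, ∫⁻ x, (mollif n φ μ (1 / s) x - mollif n φ μ (2 ^ M / s) x) ≤ Bd) :
    (∫⁻ x, ENNReal.ofReal (φ x)) * μ Set.univ ≤ Bd := by
  apply ENNReal.le_of_forall_pos_le_add
  intro η hη _
  set c : ℝ≥0∞ := ENNReal.ofReal (S * (1 / s) ^ n) * μ Set.univ with hcdef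
  have hct : c ≠ ⊤ := ENNReal.mul_ne_top ENNReal.ofReal_ne_top (measure_ne_top _ _)
  obtain ⟨η', hη', hη'c⟩ : ∃ η' : ℝ≥0∞, 0 < η' ∧ c * η' ≤ η := by
    refine ⟨η / (c + 1), ENNReal.div_pos (by simpa using hη.ne') (by simp [hct]), ?_⟩
    rw [← mul_div_assoc]
    apply ENNReal.div_le_of_le_mul
    rw [mul_comm]
    gcongr
    exact le_self_add
  obtain ⟨G, hKG, hGo, hG⟩ := K0.exists_isOpen_lt_of_lt (μ := volume) η' (by rw [hK0]; exact hη')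
  obtain ⟨r, hr, hrG⟩ := hK.exists_thickening_subset_open hGo hKG
  obtain ⟨M, hM⟩ := pow_unbounded_of_one_lt (s / r) (one_lt_two)
  have hM' : (2 ^ M / s)⁻¹ < r := by
    rw [inv_div, div_lt_iff₀ (by positivity), mul_comm]
    rwa [div_lt_iff₀ hr] at hM
  have hts : (0 : ℝ) < 2 ^ M / s := by positivity
  have hts1 : (0 : ℝ) < 1 / s := by positivity
  set U := mollif n φ μ (2 ^ M / s) with hU
  set V := mollif n φ μ (1 / s) with hV
  have hUm : Measurable U := mollif_meas hc μ _
  have hVm : Measurable V := mollif_meas hc μ _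
  have hUI : ∫⁻ x, U x = (∫⁻ x, ENNReal.ofReal (φ x)) * μ Set.univ := mollif_lintegral hc μ _ hts
  have hVI : ∫⁻ x, V x = (∫⁻ x, ENNReal.ofReal (φ x)) * μ Set.univ := mollif_lintegral hc μ _ hts1
  have hsym : ∫⁻ x, (U x - V x) = ∫⁻ x, (V x - U x) := by
    have h1 : ∫⁻ x, (U x + (V x - U x)) = ∫⁻ x, (V x + (U x - V x)) := by
      congr 1; ext x
      rw [add_tsub_eq_max, add_tsub_eq_max, max_comm]
    rw [lintegral_add_left hUm, lintegral_add_left hVm, hUI, hVI] at h1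
    exact ((ENNReal.add_right_inj (ENNReal.mul_ne_top hfin (measure_ne_top _ _))).1 h1).symm
  have hUG : ∫⁻ x, U x = ∫⁻ x in G, U x := by
    rw [← lintegral_indicator hGo.measurableSet]
    congr 1; ext x
    by_cases hx : x ∈ G
    · rw [Set.indicator_of_mem hx]
    · rw [Set.indicator_of_notMem hx]
      apply mollif_zero h0 μ _ hts x K0 hμ
      intro y hy
      by_contra h
      rw [not_le] at h
      exact hx (hrG (Metric.mem_thickening_iff.2 ⟨y, hy, h.trans hM'⟩))
  rw [← hUI, hUG]
  calc ∫⁻ x in G, U x ≤ ∫⁻ x in G, ((U x - V x) + V x) := lintegral_mono fun x => le_tsub_add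
    _ = (∫⁻ x in G, (U x - V x)) + ∫⁻ x in G, V x := lintegral_add_right _ hVm
    _ ≤ (∫⁻ x, (U x - V x)) + ∫⁻ x in G, c := by
        gcongr with x
        · exact Measure.restrict_le_self
        · refine (mollif_le h0 μ _ hts1 S hS x).trans ?_
          rw [hcdef]
          gcongr
          exact Set.subset_univ _
    _ ≤ Bd + η := by
        rw [hsym, setLIntegral_const]
        gcongr
        · exact hB M
        · exact (mul_le_mul_right hG.le c).trans hη'c

end P7b

open MeasureTheory Filter Topology
open scoped ENNReal NNReal

section P7c

lemma min_sum_le' {ι : Type*} (t : Finset ι) (v : ℝ≥0∞) (f : ι → ℝ≥0∞) :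
    min v (∑ i ∈ t, f i) ≤ ∑ i ∈ t, min v (f i) := by
  classical
  induction t using Finset.induction_on with
  | empty => simp
  | insert a t ha ih =>
    rw [Finset.sum_insert ha, Finset.sum_insert ha]
    refine le_trans ?_ (add_le_add le_rfl ih)
    rcases le_total v (f a) with h | h
    · rw [min_eq_left h]; exact (min_le_left _ _).trans le_self_add
    rcases le_total v (∑ i ∈ t, f i) with h2 | h2
    · rw [min_eq_left h2]; exact (min_le_left _ _).trans le_add_self
    · rw [min_eq_right h, min_eq_right h2]; exact min_le_right _ _

lemma fderiv_ext_zero {n : ℕ} (f : EuclideanSpace ℝ (Fin n) → ℝ) (hf : ContDiff ℝ 2 f) (s : ℝ) (hs : 0 < s)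
    (h0 : ∀ x, s ≤ ‖x‖ → f x = 0) (v : EuclideanSpace ℝ (Fin n)) (x : EuclideanSpace ℝ (Fin n)) (hx : s ≤ ‖x‖) :
    fderiv ℝ f x v = 0 := by
  have hc : Continuous fun x => fderiv ℝ f x v :=
    (hf.continuous_fderiv (by norm_num)).clm_apply continuous_const
  have h1 : ∀ x, s < ‖x‖ → fderiv ℝ f x = 0 := by
    intro x hx
    have : f =ᶠ[𝓝 x] fun _ => 0 := by
      filter_upwards [(isOpen_lt continuous_const continuous_norm).mem_nhds hx] with y hy
      exact h0 y (le_of_lt hy)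
    rw [this.fderiv_eq]; simp
  have ht : Tendsto (fun t : ℝ => fderiv ℝ f (t • x) v) (𝓝[>] 1) (𝓝 (fderiv ℝ f ((1 : ℝ) • x) v)) :=
    ((hc.comp (continuous_id.smul continuous_const)).tendsto 1).mono_left nhdsWithin_le_nhds
  rw [one_smul] at ht
  refine tendsto_nhds_unique ht (tendsto_const_nhds.congr' ?_)
  filter_upwards [self_mem_nhdsWithin] with t ht
  rw [h1]
  · rfl
  · have ht' := Set.mem_Ioi.1 ht
    rw [norm_smul, Real.norm_of_nonneg (by linarith)]
    nlinarith

theorem defect (n : ℕ) (hn : 0 < n) (φ : EuclideanSpace ℝ (Fin n) → ℝ) (hφc : Continuous φ)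
    (hφn : ∀ x, 0 ≤ φ x) (hφ0 : ∀ x, 1 ≤ ‖x‖ → φ x = 0) (S : ℝ) (hS : ∀ x, φ x ≤ S)
    (C : ℝ) (hC : 0 ≤ C) (s : ℝ) (hs : 0 < s) (M : ℕ)
    (K : Fin n → EuclideanSpace ℝ (Fin n) → ℝ)
    (hK : ∀ i, ContDiff ℝ 2 (K i)) (hK0 : ∀ i x, s ≤ ‖x‖ → K i x = 0)
    (hK1 : ∀ i, ∫⁻ x, ‖K i x‖ₑ ≤ ENNReal.ofReal (C * s))
    (hdiv : ∀ x, ∑ i, fderiv ℝ (K i) x (EuclideanSpace.single i 1) =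
        (2 ^ M / s) ^ n * φ ((2 ^ M / s) • x) - (1 / s) ^ n * φ ((1 / s) • x))
    (hcz : ∀ i j, (∀ σ : EuclideanSpace ℝ (Fin n) → ℝ, Measurable σ → (∃ B, ∀ x, |σ x| ≤ B) → HasCompactSupport σ →
        ∫⁻ x, ‖∫ y, fderiv ℝ (K i) (x - y) (EuclideanSpace.single j 1) * σ y‖ₑ ^ 2 ≤
          ENNReal.ofReal C * ∫⁻ x, ‖σ x‖ₑ ^ 2) ∧
        (∀ (r : ℝ) (w : EuclideanSpace ℝ (Fin n)), 0 ≤ r → ‖w‖ ≤ r / 2 →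
          ∫⁻ x in {x | r ≤ ‖x‖}, ‖fderiv ℝ (K i) x (EuclideanSpace.single j 1) -
            fderiv ℝ (K i) (x - w) (EuclideanSpace.single j 1)‖ₑ ≤ ENNReal.ofReal C))
    (μ : Measure (EuclideanSpace ℝ (Fin n))) [IsFiniteMeasure μ] (R : ℝ) (hR : 0 ≤ R)
    (hμR : μ (Metric.closedBall 0 R)ᶜ = 0) (a c : ℝ) (ha : 0 ≤ a) (hc : 0 ≤ c)
    (hμ : ∀ i, ∀ g : EuclideanSpace ℝ (Fin n) → ℝ, ContDiff ℝ 1 g → HasCompactSupport g → ∀ A B : ℝ, 0 ≤ A → 0 ≤ B →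
      (∀ j x, |fderiv ℝ g x (EuclideanSpace.single j 1)| ≤ A) → (∀ x, |g x| ≤ B) →
      |∫ x, fderiv ℝ g x (EuclideanSpace.single i 1) ∂μ| ≤ a * A + c * B)
    (κ : ℝ) (hκ : 0 < κ) :
    ∫⁻ x, (mollif n φ μ (1 / s) x - mollif n φ μ (2 ^ M / s) x) ≤
      ENNReal.ofReal (n * (n * (2 ^ n * ((S * (volume : Measure (EuclideanSpace ℝ (Fin n))).real (Metric.ball 0 1) * 10 ^ n / κ
        + 2 * C) * a + κ * μ.real Set.univ)) + c * (C * s)) + κ) := by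
  classical
  haveI : Nontrivial (EuclideanSpace ℝ (Fin n)) := by
    apply Module.nontrivial_of_finrank_pos (R := ℝ)
    rw [finrank_euclideanSpace_fin]; exact hn
  have hfr : Module.finrank ℝ (EuclideanSpace ℝ (Fin n)) = n := finrank_euclideanSpace_fin
  have hS0 : 0 ≤ S := (hφn 0).trans (hS 0)
  have hKcs : ∀ i, HasCompactSupport (K i) := by
    intro i
    apply HasCompactSupport.intro (isCompact_closedBall (0 : EuclideanSpace ℝ (Fin n)) s)
    intro x hx
    rw [mem_closedBall_zero_iff, not_le] at hx
    exact hK0 i x hx.le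
  have hKdc : ∀ i j, Continuous fun x => fderiv ℝ (K i) x (EuclideanSpace.single j 1) := fun i j =>
    ((hK i).continuous_fderiv (by norm_num)).clm_apply continuous_const
  -- the big ball
  set B : Set (EuclideanSpace ℝ (Fin n)) := Metric.closedBall 0 (R + s) with hB
  have hBt : volume B ≠ ⊤ := measure_closedBall_lt_top.ne
  obtain ⟨ω, hω, hωκ⟩ : ∃ ω : ℝ, 0 < ω ∧ ENNReal.ofReal (n * ((a + c) * ω)) * volume B ≤ ENNReal.ofReal κ := by
    set b := (volume B).toReal with hb
    have hb0 : 0 ≤ b := ENNReal.toReal_nonneg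
    refine ⟨κ / (n * (a + c) * b + 1), by positivity, ?_⟩
    rw [← ENNReal.ofReal_toReal hBt, ← hb, ← ENNReal.ofReal_mul (by positivity)]
    apply ENNReal.ofReal_le_ofReal
    rw [show n * ((a + c) * (κ / (n * (a + c) * b + 1))) * b = κ * ((n * (a + c) * b) / (n * (a + c) * b + 1)) by ring]
    apply mul_le_of_le_one_right hκ.le
    rw [div_le_one (by positivity)]
    linarith
  obtain ⟨τ, hτ, hτ1, hτ2⟩ : ∃ τ : ℝ, 0 < τ ∧ (∀ i j x y, dist x y ≤ τ → |fderiv ℝ (K i) x (EuclideanSpace.single j 1) -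
      fderiv ℝ (K i) y (EuclideanSpace.single j 1)| ≤ ω) ∧ ∀ i x y, dist x y ≤ τ → |K i x - K i y| ≤ ω := by
    have huc : ∀ f : EuclideanSpace ℝ (Fin n) → ℝ, Continuous f → HasCompactSupport f →
        ∀ᶠ τ in 𝓝[>] (0 : ℝ), ∀ x y, dist x y ≤ τ → |f x - f y| ≤ ω := by
      intro f hf hfc
      obtain ⟨t, ht, h⟩ := Metric.uniformContinuous_iff.1 (hfc.uniformContinuous_of_continuous hf) ω hω
      filter_upwards [Ioo_mem_nhdsGT ht] with τ hτ x y hxy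
      exact (h (hxy.trans_lt hτ.2)).le
    have h1 : ∀ᶠ τ in 𝓝[>] (0 : ℝ), ∀ i j x y, dist x y ≤ τ → |fderiv ℝ (K i) x (EuclideanSpace.single j 1) -
      fderiv ℝ (K i) y (EuclideanSpace.single j 1)| ≤ ω :=
      eventually_all.2 fun i => eventually_all.2 fun j => huc _ (hKdc i j) ((hKcs i).fderiv_apply ℝ _)
    have h2 : ∀ᶠ τ in 𝓝[>] (0 : ℝ), ∀ i x y, dist x y ≤ τ → |K i x - K i y| ≤ ω :=
      eventually_all.2 fun i => huc _ (hK i).continuous (hKcs i)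
    obtain ⟨τ, hτ, h1, h2⟩ := ((self_mem_nhdsWithin : Set.Ioi (0 : ℝ) ∈ 𝓝[>] 0) |> fun h => Eventually.and h (h1.and h2)).exists
    exact ⟨τ, hτ, h1, h2⟩
  choose t α β hα hβ hpm using fun i => pm_concrete n μ i a c (R + s + s) τ ha hc hτ (hμ i)
  set V := mollif n φ μ (1 / s) with hV
  set U := mollif n φ μ (2 ^ M / s) with hU
  have hVm : Measurable V := mollif_meas hφc μ _
  set T : Fin n → Fin n → EuclideanSpace ℝ (Fin n) → ℝ := fun i j x =>
    ∑ z : t i, α i (z, j) * fderiv ℝ (K i) (x - z) (EuclideanSpace.single j 1) with hT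
  set Z : Fin n → EuclideanSpace ℝ (Fin n) → ℝ := fun i x => ∑ z : t i, β i z * K i (x - z) with hZ
  have hreal : ∀ x ∈ B, (∫ y, (1 / s) ^ n * φ ((1 / s) • (x - y)) ∂μ) - (∫ y, (2 ^ M / s) ^ n * φ ((2 ^ M / s) • (x - y)) ∂μ) ≤
      ∑ i, (∑ j, |T i j x| + |Z i x| + (a + c) * ω) := by
    intro x hx
    have hwd : ∀ i y v, fderiv ℝ (fun y => K i (x - y)) y v = - fderiv ℝ (K i) (x - y) v := by
      intro i y v
      have h1 := ((hK i).differentiable (by norm_num) (x - y)).hasFDerivAt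
      have h2 := h1.comp y ((hasFDerivAt_id y).const_sub x)
      have h3 : HasFDerivAt (fun y => K i (x - y)) _ y := h2
      rw [h3.fderiv]; simp
    have hintg : ∀ i, Integrable (fun y => fderiv ℝ (K i) (x - y) (EuclideanSpace.single i 1)) μ := by
      intro i
      obtain ⟨S', hS'⟩ := (hKdc i i).bounded_above_of_compact_support ((hKcs i).fderiv_apply ℝ _)
      refine Integrable.of_bound (C := S') ?_ (Eventually.of_forall fun y => hS' _)
      exact ((hKdc i i).comp (continuous_const.sub continuous_id)).aestronglyMeasurable
    have e1 : (∫ y, (1 / s) ^ n * φ ((1 / s) • (x - y)) ∂μ) - (∫ y, (2 ^ M / s) ^ n * φ ((2 ^ M / s) • (x - y)) ∂μ) =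
        ∑ i, ∫ y, fderiv ℝ (fun y => K i (x - y)) y (EuclideanSpace.single i 1) ∂μ := by
      simp only [hwd, integral_neg]
      rw [Finset.sum_neg_distrib, ← integral_finsetSum _ fun i _ => hintg i]
      simp only [hdiv]
      rw [integral_sub (mollif_int hφc hφ0 μ _ x) (mollif_int hφc hφ0 μ _ x), neg_sub]
    rw [e1]
    apply Finset.sum_le_sum
    intro i _
    have h := hpm i (fun y => K i (x - y)) (((hK i).of_le (by norm_num)).comp (contDiff_const.sub contDiff_id))
      (by
        intro y hy
        apply hK0
        rw [mem_closedBall_zero_iff, not_le] at hy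
        rw [hB, mem_closedBall_zero_iff] at hx
        have := norm_sub_norm_le y x
        rw [norm_sub_rev] at this
        linarith) ω hω.le
      (by
        intro j y y' hyy
        rw [hwd, hwd, neg_sub_neg, abs_sub_comm]
        apply hτ1
        rwa [dist_sub_left])
      (by
        intro y y' hyy
        apply hτ2
        rwa [dist_sub_left])
    simp only [hwd] at h
    have e2 : ∑ z : t i × Fin n, α i z * -fderiv ℝ (K i) (x - z.1) (EuclideanSpace.single z.2 1) = - ∑ j, T i j x := by
      rw [Fintype.sum_prod_type_right, ← Finset.sum_neg_distrib]
      apply Finset.sum_congr rfl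
      intro j _
      simp only [hT, mul_neg, Finset.sum_neg_distrib]
    rw [e2] at h
    have h3 := (abs_le.1 h).2
    have h4 : - ∑ j, T i j x ≤ ∑ j, |T i j x| := by
      rw [← Finset.sum_neg_distrib]
      exact Finset.sum_le_sum fun j _ => neg_le_abs _
    have h5 := le_abs_self (Z i x)
    simp only [hZ] at h5 ⊢
    simp only [hwd]
    linarith
  have hpt : ∀ x, V x - U x ≤ (∑ i, (∑ j, min (V x) ‖T i j x‖ₑ + ‖Z i x‖ₑ)) +
      B.indicator (fun _ => ENNReal.ofReal (n * ((a + c) * ω))) x := by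
    intro x
    by_cases hx : x ∈ B
    · have h1 : V x - U x ≤ (∑ i, ∑ j, ‖T i j x‖ₑ) + (∑ i, ‖Z i x‖ₑ + ENNReal.ofReal (n * ((a + c) * ω))) := by
        rw [hV, hU, mollif_real hφc hφn hφ0 μ _ (by positivity) x, mollif_real hφc hφn hφ0 μ _ (by positivity) x,
          ← ENNReal.ofReal_sub _ (integral_nonneg fun y => mul_nonneg (by positivity) (hφn _))]
        refine (ENNReal.ofReal_le_ofReal (hreal x hx)).trans ?_
        have hac : 0 ≤ (a + c) * ω := by positivity
        rw [ENNReal.ofReal_sum_of_nonneg (fun i _ => by positivity), ← add_assoc, ← Finset.sum_add_distrib]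
        rw [show ENNReal.ofReal (n * ((a + c) * ω)) = ∑ i : Fin n, ENNReal.ofReal ((a + c) * ω) by
          rw [Finset.sum_const, Finset.card_univ, Fintype.card_fin, nsmul_eq_mul, ENNReal.ofReal_mul (by positivity),
            ENNReal.ofReal_natCast], ← Finset.sum_add_distrib]
        apply Finset.sum_le_sum
        intro i _
        rw [ENNReal.ofReal_add (by positivity) hac, ENNReal.ofReal_add (by positivity) (abs_nonneg _),
          ENNReal.ofReal_sum_of_nonneg (fun i _ => by positivity)]
        simp only [Real.enorm_eq_ofReal_abs]
        exact le_rfl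
      have h2 : V x - U x ≤ V x := tsub_le_self
      rw [Set.indicator_of_mem hx, Finset.sum_add_distrib, add_assoc]
      calc V x - U x ≤ min (V x) ((∑ i, ∑ j, ‖T i j x‖ₑ) + (∑ i, ‖Z i x‖ₑ + ENNReal.ofReal (n * ((a + c) * ω)))) := le_min h2 h1
        _ ≤ min (V x) (∑ i, ∑ j, ‖T i j x‖ₑ) + (∑ i, ‖Z i x‖ₑ + ENNReal.ofReal (n * ((a + c) * ω))) := by
          rcases le_total (V x) (∑ i, ∑ j, ‖T i j x‖ₑ) with h | h
          · rw [min_eq_left h]; exact (min_le_left _ _).trans le_self_add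
          · rw [min_eq_right h]; exact min_le_right _ _
        _ ≤ _ := by
          gcongr
          exact (min_sum_le' _ _ _).trans (Finset.sum_le_sum fun i _ => min_sum_le' _ _ _)
    · have : V x = 0 := by
        apply mollif_zero hφ0 μ _ (by positivity) x _ hμR
        intro y hy
        rw [one_div, inv_inv]
        rw [hB, mem_closedBall_zero_iff, not_le] at hx
        rw [mem_closedBall_zero_iff] at hy
        rw [dist_eq_norm]
        linarith [norm_sub_norm_le x y]
      rw [this, zero_tsub]; exact zero_le
  have hTc : ∀ i j, Continuous (T i j) := fun i j =>
    continuous_finsetSum _ fun z _ => continuous_const.mul ((hKdc i j).comp (continuous_id.sub continuous_const))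
  have hZc : ∀ i, Continuous (Z i) := fun i =>
    continuous_finsetSum _ fun z _ => continuous_const.mul ((hK i).continuous.comp (continuous_id.sub continuous_const))
  have hTI : ∀ i j, ∫⁻ x, min (V x) ‖T i j x‖ₑ ≤ ENNReal.ofReal (2 ^ n * ((S * (volume : Measure (EuclideanSpace ℝ (Fin n))).real (Metric.ball 0 1) * 10 ^ n / κ
        + 2 * C) * a + κ * μ.real Set.univ)) := by
    intro i j
    have hk0 : ∀ x, s ≤ ‖x‖ → fderiv ℝ (K i) x (EuclideanSpace.single j 1) = 0 :=
      fderiv_ext_zero (K i) (hK i) s hs (hK0 i) _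
    have h := cz_local volume (fun x => fderiv ℝ (K i) x (EuclideanSpace.single j 1)) (hKdc i j) C hC s hs hk0
      (hcz i j).1 (hcz i j).2 (fun z : t i => (z : EuclideanSpace ℝ (Fin n))) (fun z => α i (z, j)) κ hκ μ V hVm S hS0
      (by
        intro x
        rw [hfr]
        have := mollif_le hφ0 μ (1 / s) (by positivity) S hS x
        rwa [one_div, inv_inv, inv_pow, ← div_eq_mul_inv, ← one_div] at this)
    rw [hfr] at h
    refine h.trans (ENNReal.ofReal_le_ofReal ?_)
    have hle : ∑ z : t i, |α i (z, j)| ≤ a := by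
      refine le_trans ?_ (hα i)
      rw [Fintype.sum_prod_type_right]
      exact Finset.single_le_sum (f := fun j => ∑ z : t i, |α i (z, j)|)
        (fun j _ => Finset.sum_nonneg fun z _ => abs_nonneg _) (Finset.mem_univ j)
    gcongr
  have hZI : ∀ i, ∫⁻ x, ‖Z i x‖ₑ ≤ ENNReal.ofReal (c * (C * s)) := by
    intro i
    calc ∫⁻ x, ‖Z i x‖ₑ ≤ ∫⁻ x, ∑ z : t i, ENNReal.ofReal |β i z| * ‖K i (x - z)‖ₑ := by
          apply lintegral_mono
          intro x
          refine (enorm_sum_le _ _).trans (le_of_eq ?_)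
          apply Finset.sum_congr rfl
          intro z _
          rw [enorm_mul, Real.enorm_eq_ofReal_abs]
      _ = ∑ z : t i, ENNReal.ofReal |β i z| * ∫⁻ x, ‖K i x‖ₑ := by
          rw [lintegral_finsetSum]
          · apply Finset.sum_congr rfl
            intro z _
            rw [lintegral_const_mul' _ _ ENNReal.ofReal_ne_top,
              lintegral_sub_right_eq_self (fun x => ‖K i x‖ₑ)]
          · intro z _
            exact (((hK i).continuous.comp (continuous_id.sub continuous_const)).measurable.enorm).const_mul _
      _ = ENNReal.ofReal (∑ z : t i, |β i z|) * ∫⁻ x, ‖K i x‖ₑ := by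
          rw [← Finset.sum_mul, ENNReal.ofReal_sum_of_nonneg fun j _ => abs_nonneg _]
      _ ≤ ENNReal.ofReal c * ENNReal.ofReal (C * s) := by
          gcongr
          · exact hβ i
          · exact hK1 i
      _ = _ := (ENNReal.ofReal_mul hc).symm
  have hm1 : ∀ i j, Measurable fun x => min (V x) ‖T i j x‖ₑ := fun i j => hVm.min (hTc i j).measurable.enorm
  have hm2 : ∀ i, Measurable fun x => ‖Z i x‖ₑ := fun i => (hZc i).measurable.enorm
  have hμ0 : 0 ≤ μ.real Set.univ := measureReal_nonneg
  obtain ⟨Q, hQ⟩ : ∃ Q : ℝ, Q = 2 ^ n * ((S * (volume : Measure (EuclideanSpace ℝ (Fin n))).real (Metric.ball 0 1) * 10 ^ n / κ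
        + 2 * C) * a + κ * μ.real Set.univ) := ⟨_, rfl⟩
  have hQ0 : 0 ≤ Q := by rw [hQ]; positivity
  rw [← hQ]
  rw [← hQ] at hTI
  calc ∫⁻ x, (V x - U x) ≤ ∫⁻ x, ((∑ i, (∑ j, min (V x) ‖T i j x‖ₑ + ‖Z i x‖ₑ)) +
      B.indicator (fun _ => ENNReal.ofReal (n * ((a + c) * ω))) x) := lintegral_mono hpt
    _ = (∑ i, (∑ j, (∫⁻ x, min (V x) ‖T i j x‖ₑ) + ∫⁻ x, ‖Z i x‖ₑ)) + ENNReal.ofReal (n * ((a + c) * ω)) * volume B := by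
      rw [lintegral_add_right _ (measurable_const.indicator Metric.isClosed_closedBall.measurableSet),
        lintegral_indicator_const Metric.isClosed_closedBall.measurableSet, lintegral_finsetSum]
      · congr 1
        apply Finset.sum_congr rfl
        intro i _
        rw [lintegral_add_right _ (hm2 i), lintegral_finsetSum _ fun j _ => hm1 i j]
      · intro i _
        exact (Finset.measurable_fun_sum _ fun j _ => hm1 i j).add (hm2 i)
    _ ≤ (∑ i : Fin n, (∑ j : Fin n, ENNReal.ofReal Q + ENNReal.ofReal (c * (C * s)))) + ENNReal.ofReal κ := by
      gcongr with i _ j _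
      · exact hTI i j
      · exact hZI i
    _ = _ := by
      simp only [Finset.sum_const, Finset.card_univ, Fintype.card_fin, nsmul_eq_mul]
      rw [ENNReal.ofReal_add (by positivity) hκ.le, ENNReal.ofReal_mul (p := (n : ℝ)) (q := n * Q + c * (C * s)) (by positivity),
        ENNReal.ofReal_add (by positivity) (by positivity), ENNReal.ofReal_mul (p := (n : ℝ)) (q := Q) (by positivity),
        ENNReal.ofReal_natCast]

end P7c

open MeasureTheory Filter Topology
open scoped ENNReal NNReal

section P8

theorem lemmaB (n : ℕ) (hn : 0 < n) (μ : Measure (EuclideanSpace ℝ (Fin n))) [IsFiniteMeasure μ]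
    (K0 : Set (EuclideanSpace ℝ (Fin n))) (hK : IsCompact K0)
    (hK0 : volume K0 = 0) (hμK : μ K0ᶜ = 0)
    (hμ : ∀ a : ℝ, 0 < a → ∃ c : ℝ, 0 ≤ c ∧ ∀ i, ∀ g : EuclideanSpace ℝ (Fin n) → ℝ, ContDiff ℝ 1 g → HasCompactSupport g →
      ∀ A B : ℝ, 0 ≤ A → 0 ≤ B →
      (∀ j x, |fderiv ℝ g x (EuclideanSpace.single j 1)| ≤ A) → (∀ x, |g x| ≤ B) →
      |∫ x, fderiv ℝ g x (EuclideanSpace.single i 1) ∂μ| ≤ a * A + c * B) : μ Set.univ = 0 := by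
  obtain ⟨φ, hφc, hφn, hφ0, hφp, C, hC, hker⟩ := kernel_exists n hn
  have hcs : HasCompactSupport φ := by
    apply HasCompactSupport.intro (isCompact_closedBall (0 : EuclideanSpace ℝ (Fin n)) 1)
    intro x hx
    rw [mem_closedBall_zero_iff, not_le] at hx
    exact hφ0 x hx.le
  obtain ⟨S, hS'⟩ := hφc.bounded_above_of_compact_support hcs
  have hS : ∀ x, φ x ≤ S := fun x => (le_abs_self _).trans (hS' x)
  have hintg : Integrable φ := hφc.integrable_of_hasCompactSupport hcs
  have hfin : ∫⁻ x, ENNReal.ofReal (φ x) ≠ ⊤ := by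
    rw [← ofReal_integral_eq_lintegral_ofReal hintg (Eventually.of_forall hφn)]
    exact ENNReal.ofReal_ne_top
  have hpos : ∫⁻ x, ENNReal.ofReal (φ x) ≠ 0 := by
    rw [← ofReal_integral_eq_lintegral_ofReal hintg (Eventually.of_forall hφn)]
    rw [Ne, ENNReal.ofReal_eq_zero, not_le]
    exact hφc.integral_pos_of_hasCompactSupport_nonneg_nonzero hcs hφn hφp.ne'
  obtain ⟨R, hR⟩ := hK.isBounded.subset_closedBall 0
  have hμR : μ (Metric.closedBall 0 (max R 0))ᶜ = 0 := by
    refine measure_mono_null ?_ hμK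
    apply Set.compl_subset_compl.2
    exact hR.trans (Metric.closedBall_subset_closedBall (le_max_left _ _))
  set v := (volume : Measure (EuclideanSpace ℝ (Fin n))).real (Metric.ball 0 1) with hv
  have key : ∀ κ : ℝ, 0 < κ → (∫⁻ x, ENNReal.ofReal (φ x)) * μ Set.univ ≤
      ENNReal.ofReal (n * (n * (2 ^ n * (S * v * 10 ^ n * κ + 2 * C * κ ^ 2 + κ * μ.real Set.univ)) + κ) + κ) := by
    intro κ hκ
    obtain ⟨c, hc, hc'⟩ := hμ (κ ^ 2) (by positivity)
    obtain ⟨s, hs, hsκ⟩ : ∃ s : ℝ, 0 < s ∧ c * (C * s) ≤ κ := by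
      refine ⟨κ / (c * C + 1), by positivity, ?_⟩
      rw [show c * (C * (κ / (c * C + 1))) = κ * ((c * C) / (c * C + 1)) by ring]
      apply mul_le_of_le_one_right hκ.le
      rw [div_le_one (by positivity)]
      linarith
    apply mass_le μ hφc hφn hφ0 S hS K0 hK hK0 hμK s hs _ hfin
    intro M
    obtain ⟨K, h1, h2, h3, h4, h5⟩ := hker s hs M
    refine (defect n hn φ hφc hφn hφ0 S hS C hC s hs M K h1 h2 h3 h4 h5 μ (max R 0) (le_max_right _ _) hμR
      (κ ^ 2) c (by positivity) hc hc' κ hκ).trans ?_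
    apply ENNReal.ofReal_le_ofReal
    rw [← hv]
    have e : (S * v * 10 ^ n / κ + 2 * C) * κ ^ 2 = S * v * 10 ^ n * κ + 2 * C * κ ^ 2 := by
      field_simp
    rw [e]
    gcongr
  have hlim : Tendsto (fun κ : ℝ => ENNReal.ofReal (n * (n * (2 ^ n * (S * v * 10 ^ n * κ + 2 * C * κ ^ 2 + κ * μ.real Set.univ)) + κ) + κ))
      (𝓝[>] 0) (𝓝 0) := by
    have : Continuous fun κ : ℝ => ENNReal.ofReal (n * (n * (2 ^ n * (S * v * 10 ^ n * κ + 2 * C * κ ^ 2 + κ * μ.real Set.univ)) + κ) + κ) :=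
      ENNReal.continuous_ofReal.comp (by fun_prop)
    have h := this.tendsto 0
    simp only [mul_zero, zero_mul, add_zero, ne_eq, OfNat.ofNat_ne_zero, not_false_eq_true, zero_pow, ENNReal.ofReal_zero] at h
    exact h.mono_left nhdsWithin_le_nhds
  have hle : (∫⁻ x, ENNReal.ofReal (φ x)) * μ Set.univ ≤ 0 :=
    ge_of_tendsto hlim (by filter_upwards [self_mem_nhdsWithin] with κ hκ using key κ hκ)
  rcases mul_eq_zero.1 (nonpos_iff_eq_zero.1 hle) with h | h
  · exact absurd h hpos
  · exact h

lemma fderiv_norm_le_partials {n : ℕ} (L : EuclideanSpace ℝ (Fin n) →L[ℝ] ℝ) (A : ℝ) (hA : 0 ≤ A)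
    (h : ∀ j, |L (EuclideanSpace.single j 1)| ≤ A) : ‖L‖ ≤ n * A := by
  apply ContinuousLinearMap.opNorm_le_bound _ (by positivity)
  intro x
  have hx : x = ∑ j, x j • EuclideanSpace.single j (1 : ℝ) := by
    ext k
    simp [Finset.sum_apply, Pi.single_apply]
  calc ‖L x‖ = ‖∑ j, x j * L (EuclideanSpace.single j 1)‖ := by
        conv_lhs => rw [hx]
        rw [map_sum]; simp
    _ ≤ ∑ j, ‖x j * L (EuclideanSpace.single j 1)‖ := norm_sum_le _ _
    _ ≤ ∑ j : Fin n, ‖x‖ * A := by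
        apply Finset.sum_le_sum
        intro j _
        rw [norm_mul]
        gcongr
        · exact PiLp.norm_apply_le x j
        · exact h j
    _ = n * A * ‖x‖ := by simp; ring

theorem final (n : ℕ) (m : Measure (EuclideanSpace ℝ (Fin n)))
    [IsFiniteMeasureOnCompacts m] [m.Regular]
    (hdiff : IsDiffSpace m) :
    m ≪ (volume : Measure (EuclideanSpace ℝ (Fin n))) := by
  rcases Nat.eq_zero_or_pos n with rfl | hn
  · intro A hA
    rcases Set.eq_empty_or_nonempty A with h | ⟨x, hx⟩
    · rw [h]; simp
    · exfalso
      have hu : A = Set.univ := Set.eq_univ_of_forall fun y => by rwa [Subsingleton.elim y x]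
      rw [hu] at hA
      exact (isOpen_univ.measure_pos volume ⟨x, trivial⟩).ne' hA
  haveI : Nontrivial (EuclideanSpace ℝ (Fin n)) := by
    apply Module.nontrivial_of_finrank_pos (R := ℝ)
    rw [finrank_euclideanSpace_fin]; exact hn
  apply Measure.AbsolutelyContinuous.mk
  intro A hAm hA
  by_contra hmA
  -- a compact null set of positive measure
  obtain ⟨K0, hKA, hK, hKpos⟩ : ∃ K0 ⊆ A, IsCompact K0 ∧ 0 < m K0 := by
    by_contra hcon
    push Not at hcon
    apply hmA
    rw [MeasurableSet.measure_eq_iSup_isCompact hAm]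
    simp only [ENNReal.iSup_eq_zero]
    intro K hKA hKc
    exact nonpos_iff_eq_zero.1 (hcon K hKA hKc)
  have hK0 : volume K0 = 0 := measure_mono_null hKA hA
  set μ := m.restrict K0 with hμdef
  haveI : IsFiniteMeasure μ := ⟨by rw [hμdef, Measure.restrict_apply MeasurableSet.univ, Set.univ_inter]; exact hK.measure_lt_top⟩
  have hμK : μ K0ᶜ = 0 := by
    rw [hμdef, Measure.restrict_apply hK.measurableSet.compl]; simp
  have hno : ∀ i (δ : ℝ), 0 < δ → ∃ ε > 0, Adm μ (EuclideanSpace.single i (1 : ℝ)) δ ε = ∅ := by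
    intro i δ hδ
    by_contra hcon
    push Not at hcon
    obtain ⟨K, hKc, hKp, hf⟩ := lemmaA μ (EuclideanSpace.single i (1 : ℝ)) (by simp) δ hδ
      (fun ε hε => Set.nonempty_iff_ne_empty.2 (Set.nonempty_iff_ne_empty.1 (hcon ε hε)))
    obtain ⟨N, hN⟩ := hdiff
    obtain ⟨f, hfl, hfp⟩ := hf N
    have hmK : 0 < m K := hKp.trans_le (Measure.restrict_le_self K)
    have := hN (N + 1) f K hKc.measurableSet hmK hfl (by
      unfold IndependentOn
      filter_upwards [ae_restrict_mem hKc.measurableSet] with x hx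
      exact isNormOn_lip hfl x (hfp x hx))
    omega
  have hz := lemmaB n hn μ K0 hK hK0 hμK (by
    intro a ha
    have hn' : (0 : ℝ) < n := by exact_mod_cast hn
    choose ε hε hem using fun i => hno i (a / n) (by positivity)
    refine ⟨∑ i, (a / n) / ε i, Finset.sum_nonneg fun i _ => by have := hε i; positivity, ?_⟩
    intro i g hg hgc A B hA hB h1 h2
    refine (h_of_not_adm μ _ (a / n) (ε i) (by positivity) (hε i) (hem i) g hg hgc (n * A) B
      (fun x => fderiv_norm_le_partials _ A hA fun j => h1 j x) h2).trans ?_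
    have h3 : a / n / ε i ≤ ∑ i, (a / n) / ε i :=
      Finset.single_le_sum (f := fun i => (a / n) / ε i) (fun i _ => by have := hε i; positivity) (Finset.mem_univ i)
    have h4 : a / n * (n * A) = a * A := by field_simp
    rw [h4]
    gcongr)
  rw [hμdef, Measure.restrict_apply MeasurableSet.univ, Set.univ_inter] at hz
  exact hKpos.ne' hz

end P8

/-- Rigidity Theorem I: if `(ℝⁿ, d_Euclid, m)` is a Lipschitz differentiability space for a
Radon measure `m`, then `m` is absolutely continuous w.r.t. the Lebesgue measure. -/
theorem stmt12 (n : ℕ) (m : Measure (EuclideanSpace ℝ (Fin n)))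
    [IsFiniteMeasureOnCompacts m] [m.Regular]
    (hdiff : IsDiffSpace m) :
    m ≪ (volume : Measure (EuclideanSpace ℝ (Fin n))) := by
  exact final n m hdiff
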